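/- arXiv:2301.01331 — 5 statements merged into one kernel-verified Lean document; each statement's English description precedes it below -/
import Mathlib

section
/- FC(4, 9) ≥ 14; that is, there exists a family of 13 distinct 4-element subsets of {1,…,9} whose universe equals {1,…,9} that is Non-FC. -/
/-- The universe of a family of finite sets: the union of all its members. -/
def famUniverse (A : Finset (Finset ℕ)) : Finset ℕ := A.sup id

/-- A family is union-closed if it is nonempty and closed under pairwise unions. -/
def UnionClosed (F : Finset (Finset ℕ)) : Prop :=
  F.Nonempty ∧ ∀ A ∈ F, ∀ B ∈ F, A ∪ B ∈ F

/-- A family `A` is FC (Frankl-Complete) if for every union-closed family `F`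
containing `A`, some element of the universe of `A` belongs to at least half
of the members of `F`. -/
def IsFC (A : Finset (Finset ℕ)) : Prop :=
  ∀ F : Finset (Finset ℕ), UnionClosed F → A ⊆ F →
    ∃ x ∈ famUniverse A, F.card ≤ 2 * (F.filter (fun S => x ∈ S)).card

/-- `IsKFamily k n A` means `A` is a family of (distinct) `k`-element subsets of
`[n] = {1, …, n}` whose universe equals `[n]`. -/
def IsKFamily (k n : ℕ) (A : Finset (Finset ℕ)) : Prop :=
  (∀ S ∈ A, S.card = k ∧ S ⊆ Finset.Icc 1 n) ∧ famUniverse A = Finset.Icc 1 n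

/-- The set of positive integers `m` such that every family of `m` distinct
`k`-element subsets of `[n]` with universe `[n]` is FC.  `FC(k, n)` is the least
element of this set, when it exists. -/
def FCwitnesses (k n : ℕ) : Set ℕ :=
  {m : ℕ | 0 < m ∧ ∀ A : Finset (Finset ℕ), A.card = m → IsKFamily k n A → IsFC A}

/-! The construction is Poonen's. Call the number of members of a family avoiding `x` minus the
number containing `x` its bias at `x`. If a union-closed family containing `A` has positive bias at
every `x` in the universe `U` of `A`, then `A` is Non-FC. Such a family can be assembled from
smaller ones: let `B i` be families of subsets of `U` that are stable under unions and under joining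
members of `A`, and stack `w i` copies of each `B i`. The copies are tagged by the complements of
distinct points in a fresh set `T`, so that a union across copies acquires the full tag `T`, where
all subsets of `U` are admitted; these contribute no bias. The members of `A` sit in one further
layer with empty tag, which a large multiple of the weights outvotes. So it is enough that
`∑ i, w i * bias (B i) x > 0` for all `x ∈ U`.

For each `y ∈ U`, let `B y` consist of the `S ⊆ U` such that, if `y ∈ S`, then some member of `A`
contains `y` and lies in `S`. Since the bias of the power set of `U` is zero, the sum above compares
the total weight of the points of `S` not covered by members of `A` inside `S`, taken over the `S`
containing `x`, with the same total over the `S` avoiding `x`. For a suitable `A` with thirteen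
members and suitable weights, the former is the larger for every `x`. -/

namespace FranklComplete

open Finset

section Bias

variable {α : Type*} [DecidableEq α]

/-- The bias of a family at a point: the number of members avoiding `x` minus the number of members
containing `x`, so that Frankl's condition at `x` says that the bias is nonpositive. -/
def bias (F : Finset (Finset α)) (x : α) : ℤ := ∑ S ∈ F, if x ∈ S then -1 else 1

theorem bias_eq_card_sub (F : Finset (Finset α)) (x : α) :
    bias F x = #F - 2 * #{S ∈ F | x ∈ S} := by
  have sign_eq (S : Finset α) :
      (if x ∈ S then -1 else 1 : ℤ) = 1 - 2 * if x ∈ S then 1 else 0 := by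
    split_ifs <;> rfl
  simp only [bias, sign_eq, sum_sub_distrib, ← mul_sum, sum_boole, sum_const, nsmul_one]

theorem card_le_two_mul_card_filter_iff (F : Finset (Finset α)) (x : α) :
    #F ≤ 2 * #{S ∈ F | x ∈ S} ↔ bias F x ≤ 0 := by
  rw [bias_eq_card_sub]
  omega

theorem neg_card_le_bias (F : Finset (Finset α)) (x : α) : -(#F : ℤ) ≤ bias F x := by
  have : #{S ∈ F | x ∈ S} ≤ #F := card_filter_le _ _
  rw [bias_eq_card_sub]
  omega

theorem bias_powerset {U : Finset α} {x : α} (hx : x ∈ U) : bias U.powerset x = 0 := by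
  rw [bias, ← insert_erase hx, sum_powerset_insert (notMem_erase x U), ← sum_add_distrib]
  refine sum_eq_zero fun S hS => ?_
  have hxS : x ∉ S := fun h => notMem_erase x U (mem_powerset.1 hS h)
  simp [hxS]

end Bias

section Stack

variable {α ι : Type*} [DecidableEq α] [Fintype ι]

/-- The family stacked from the families `layer i`: the members of each are marked by joining the
set `tag i` to them. -/
def stack (tag : ι → Finset α) (layer : ι → Finset (Finset α)) : Finset (Finset α) :=
  (univ.sigma layer).image fun p => p.2 ∪ tag p.1

variable {tag : ι → Finset α} {layer : ι → Finset (Finset α)} {U : Finset α}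

theorem mem_stack {R : Finset α} :
    R ∈ stack tag layer ↔ ∃ i, ∃ S ∈ layer i, S ∪ tag i = R := by
  simp [stack]

theorem supClosed_stack
    (h : ∀ i j, ∃ k, tag k = tag i ∪ tag j ∧ ∀ S ∈ layer i, ∀ T ∈ layer j, S ∪ T ∈ layer k) :
    SupClosed (stack tag layer : Set (Finset α)) := by
  intro R hR R' hR'
  obtain ⟨i, S, hS, rfl⟩ := mem_stack.1 (mem_coe.1 hR)
  obtain ⟨j, T, hT, rfl⟩ := mem_stack.1 (mem_coe.1 hR')
  obtain ⟨k, htag, hlayer⟩ := h i j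
  refine mem_coe.2 (mem_stack.2 ⟨k, S ∪ T, hlayer S hS T hT, ?_⟩)
  rw [htag, sup_eq_union, union_union_union_comm]

theorem bias_stack (tag_injective : Function.Injective tag) (tag_disjoint : ∀ i, Disjoint U (tag i))
    (layer_subset : ∀ i, layer i ⊆ U.powerset) {x : α} (hx : x ∈ U) :
    bias (stack tag layer) x = ∑ i, bias (layer i) x := by
  have inter_eq {i S} (hS : S ∈ layer i) : (S ∪ tag i) ∩ U = S := by
    rw [union_inter_distrib_right, inter_eq_left.2 (mem_powerset.1 (layer_subset i hS)),
      inter_comm, disjoint_iff_inter_eq_empty.1 (tag_disjoint i), union_empty]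
  have sdiff_eq {i S} (hS : S ∈ layer i) : (S ∪ tag i) \ U = tag i := by
    rw [union_sdiff_distrib, sdiff_eq_empty_iff_subset.2 (mem_powerset.1 (layer_subset i hS)),
      empty_union, sdiff_eq_self_of_disjoint (tag_disjoint i).symm]
  have union_tag_injOn :
      Set.InjOn (fun p : (_ : ι) × Finset α => p.2 ∪ tag p.1) (univ.sigma layer) := by
    rintro ⟨i, S⟩ hS ⟨j, T⟩ hT (heq : S ∪ tag i = T ∪ tag j)
    replace hS : S ∈ layer i := (mem_sigma.1 hS).2
    replace hT : T ∈ layer j := (mem_sigma.1 hT).2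
    obtain rfl : i = j := tag_injective (by rw [← sdiff_eq hS, heq, sdiff_eq hT])
    obtain rfl : S = T := by rw [← inter_eq hS, heq, inter_eq hT]
    rfl
  have mem_union_tag_iff (i S) : x ∈ S ∪ tag i ↔ x ∈ S := by
    simp [disjoint_left.1 (tag_disjoint i) hx]
  simp only [bias, stack, sum_image union_tag_injOn, sum_sigma, mem_union_tag_iff]

end Stack

section FlatTag

variable {α κ : Type*} [DecidableEq α] [Fintype κ]

/-- Tags for a bottom layer `none`, a top layer `some none`, and pairwise incomparable layers
`some (some k)` in between, any two of which join to the top. The additional point `f none` keeps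
the tags distinct also when `κ` has at most one element. -/
def flatTag (f : Option κ ↪ α) : Option (Option κ) → Finset α
  | none => ∅
  | some none => univ.map f
  | some (some k) => (univ.map f).erase (f (some k))

variable (f : Option κ ↪ α)

theorem flatTag_subset : ∀ i, flatTag f i ⊆ univ.map f
  | none => empty_subset _
  | some none => Subset.rfl
  | some (some _) => erase_subset _ _

theorem apply_mem_flatTag {o : Option κ} :
    ∀ {i}, f o ∈ flatTag f i ↔ i ≠ none ∧ (o = none ∨ i ≠ some o)
  | none => by simp [flatTag]
  | some none => by cases o <;> simp [flatTag]
  | some (some k) => by cases o <;> simp [flatTag, eq_comm]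

theorem flatTag_some_union_flatTag_some {i j : Option κ} (hij : i ≠ j) :
    flatTag f (some i) ∪ flatTag f (some j) = univ.map f := by
  refine (union_subset (flatTag_subset f _) (flatTag_subset f _)).antisymm fun z hz => ?_
  obtain ⟨o, -, rfl⟩ := mem_map.1 hz
  simp only [mem_union, apply_mem_flatTag]
  grind

theorem flatTag_injective : Function.Injective (flatTag f) := by
  intro i j hij
  have separated (o : Option κ) :
      (i ≠ none ∧ (o = none ∨ i ≠ some o)) ↔ (j ≠ none ∧ (o = none ∨ j ≠ some o)) := by
    rw [← apply_mem_flatTag f, hij, apply_mem_flatTag f]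
  have separated_none := separated none
  rcases i with _ | i <;> rcases j with _ | j <;> grind

end FlatTag

section FlatLayer

variable {α κ : Type*}

/-- The layers for `flatTag`: a base family `C` at the bottom, all subsets of `U` at the top, and
the families `B k` in between. -/
def flatLayer (U : Finset α) (C : Finset (Finset α)) (B : κ → Finset (Finset α)) :
    Option (Option κ) → Finset (Finset α)
  | none => C
  | some none => U.powerset
  | some (some k) => B k

variable {U : Finset α} {C : Finset (Finset α)} {B : κ → Finset (Finset α)}

theorem flatLayer_subset (hCU : C ⊆ U.powerset) (hBU : ∀ k, B k ⊆ U.powerset) :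
    ∀ i, flatLayer U C B i ⊆ U.powerset
  | none => hCU
  | some none => Subset.rfl
  | some (some k) => hBU k

variable [DecidableEq α]

theorem supClosed_powerset (U : Finset α) : SupClosed (U.powerset : Set (Finset α)) :=
  fun _ hS _ hT => mem_powerset.2 (union_subset (mem_powerset.1 hS) (mem_powerset.1 hT))

theorem supClosed_flatLayer (hC : SupClosed (C : Set (Finset α)))
    (hB : ∀ k, SupClosed (B k : Set (Finset α))) :
    ∀ i, SupClosed (flatLayer U C B i : Set (Finset α))
  | none => hC
  | some none => supClosed_powerset U
  | some (some k) => hB k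

theorem union_mem_flatLayer (hCU : C ⊆ U.powerset) (hC : SupClosed (C : Set (Finset α)))
    (hCB : ∀ k, ∀ S ∈ C, ∀ T ∈ B k, S ∪ T ∈ B k) :
    ∀ i, ∀ S ∈ C, ∀ T ∈ flatLayer U C B i, S ∪ T ∈ flatLayer U C B i
  | none => fun _ hS _ hT => hC hS hT
  | some none => fun _ hS _ hT => supClosed_powerset U (hCU hS) hT
  | some (some k) => hCB k

theorem supClosed_stack_flatLayer [Fintype κ] (f : Option κ ↪ α) (hCU : C ⊆ U.powerset)
    (hBU : ∀ k, B k ⊆ U.powerset) (hC : SupClosed (C : Set (Finset α)))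
    (hB : ∀ k, SupClosed (B k : Set (Finset α)))
    (hCB : ∀ k, ∀ S ∈ C, ∀ T ∈ B k, S ∪ T ∈ B k) :
    SupClosed (stack (flatTag f) (flatLayer U C B) : Set (Finset α)) := by
  refine supClosed_stack fun i j => ?_
  rcases eq_or_ne i j with rfl | hij
  · exact ⟨i, (union_self _).symm, fun S hS T hT => supClosed_flatLayer hC hB i hS hT⟩
  rcases i with _ | i
  · exact ⟨j, (empty_union _).symm, union_mem_flatLayer hCU hC hCB j⟩
  rcases j with _ | j
  · exact ⟨some i, (union_empty _).symm, fun S hS T hT =>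
      union_comm T S ▸ union_mem_flatLayer hCU hC hCB (some i) T hT S hS⟩
  · exact ⟨some none, (flatTag_some_union_flatTag_some f (by grind)).symm, fun S hS T hT =>
      supClosed_powerset U (flatLayer_subset hCU hBU _ hS) (flatLayer_subset hCU hBU _ hT)⟩

end FlatLayer

section Criterion

variable {A : Finset (Finset ℕ)}

theorem not_isFC_of_bias_pos {F : Finset (Finset ℕ)} (hF : UnionClosed F) (hAF : A ⊆ F)
    (bias_pos : ∀ x ∈ famUniverse A, 0 < bias F x) : ¬ IsFC A := fun h => by
  obtain ⟨x, hx, hle⟩ := h F hF hAF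
  exact (bias_pos x hx).not_ge ((card_le_two_mul_card_filter_iff F x).1 hle)

theorem subset_famUniverse {a : Finset ℕ} (ha : a ∈ A) : a ⊆ famUniverse A :=
  le_sup (f := id) ha

theorem exists_embedding_disjoint_map {α : Type*} [Infinite α] (U : Finset α) (κ : Type*)
    [Fintype κ] : ∃ f : κ ↪ α, Disjoint U (univ.map f) := by
  obtain ⟨g, hg⟩ := Fin.Embedding.exists_embedding_disjoint_range_of_add_le_ENat_card
    (s := (U : Set α)) (n := Fintype.card κ) (by simp)
  refine ⟨(Fintype.equivFin κ).toEmbedding.trans g, disjoint_left.2 fun z hzU hz => ?_⟩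
  obtain ⟨k, -, rfl⟩ := mem_map.1 hz
  exact Set.disjoint_left.1 hg hzU ⟨_, rfl⟩

theorem not_isFC_of_layers {κ : Type*} [Fintype κ] {C : Finset (Finset ℕ)}
    {B : κ → Finset (Finset ℕ)} (hAC : A ⊆ C) (hCU : C ⊆ (famUniverse A).powerset)
    (hBU : ∀ k, B k ⊆ (famUniverse A).powerset)
    (hC : SupClosed (C : Set (Finset ℕ))) (hB : ∀ k, SupClosed (B k : Set (Finset ℕ)))
    (hCB : ∀ k, ∀ S ∈ C, ∀ T ∈ B k, S ∪ T ∈ B k)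
    (bias_pos : ∀ x ∈ famUniverse A, 0 < bias C x + ∑ k, bias (B k) x) : ¬ IsFC A := by
  obtain ⟨f, hf⟩ := exists_embedding_disjoint_map (famUniverse A) (Option κ)
  let F := stack (flatTag f) (flatLayer (famUniverse A) C B)
  have subset_F : A ⊆ F := fun a ha => mem_stack.2 ⟨none, a, hAC ha, union_empty a⟩
  have F_unionClosed : UnionClosed F :=
    ⟨⟨_, mem_stack.2 ⟨some none, ∅, empty_mem_powerset _, rfl⟩⟩,
      fun _ hR _ hR' => supClosed_stack_flatLayer f hCU hBU hC hB hCB hR hR'⟩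
  refine not_isFC_of_bias_pos F_unionClosed subset_F fun x hx => ?_
  rw [bias_stack (flatTag_injective f) (fun i => hf.mono_right (flatTag_subset f i))
    (flatLayer_subset hCU hBU) hx, Fintype.sum_option, Fintype.sum_option]
  simpa only [flatLayer, bias_powerset hx, zero_add] using bias_pos x hx

theorem not_isFC_of_sum_mul_bias_pos {ι : Type*} [Fintype ι] {B : ι → Finset (Finset ℕ)}
    (w : ι → ℕ) (hBU : ∀ i, B i ⊆ (famUniverse A).powerset)
    (hB : ∀ i, SupClosed (B i : Set (Finset ℕ)))
    (hAB : ∀ i, ∀ a ∈ A, ∀ T ∈ B i, a ∪ T ∈ B i)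
    (bias_pos : ∀ x ∈ famUniverse A, 0 < ∑ i, w i * bias (B i) x) : ¬ IsFC A := by
  let C := {S ∈ (famUniverse A).powerset | ∀ i, ∀ T ∈ B i, S ∪ T ∈ B i}
  have subset_C : A ⊆ C := fun a ha =>
    mem_filter.2 ⟨mem_powerset.2 (subset_famUniverse ha), fun i => hAB i a ha⟩
  have C_supClosed : SupClosed (C : Set (Finset ℕ)) := fun S hS S' hS' => by
    obtain ⟨hSU, hSB⟩ := mem_filter.1 (mem_coe.1 hS)
    obtain ⟨hSU', hSB'⟩ := mem_filter.1 (mem_coe.1 hS')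
    refine mem_coe.2 (mem_filter.2 ⟨supClosed_powerset _ hSU hSU', fun i T hT => ?_⟩)
    rw [sup_eq_union, union_assoc]
    exact hSB i _ (hSB' i T hT)
  refine not_isFC_of_layers (κ := Σ i, Fin ((#C + 1) * w i)) (B := fun p => B p.1) subset_C
    (filter_subset _ _) (fun p => hBU p.1) C_supClosed (fun p => hB p.1)
    (fun p S hS => (mem_filter.1 hS).2 p.1) fun x hx => ?_
  have sum_copies : ∑ p : Σ i, Fin ((#C + 1) * w i), bias (B p.1) x
      = (#C + 1) * ∑ i, w i * bias (B i) x := by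
    simp [Fintype.sum_sigma, mul_sum, mul_assoc]
  rw [sum_copies]
  nlinarith [neg_card_le_bias C x, bias_pos x hx]

end Criterion

section Cover

variable {A : Finset (Finset ℕ)}

/-- The part of `S` covered by the members of `A` that are contained in `S`. -/
def coveredPart (A : Finset (Finset ℕ)) (S : Finset ℕ) : Finset ℕ :=
  famUniverse {a ∈ A | a ⊆ S}

theorem mem_coveredPart {S : Finset ℕ} {y : ℕ} :
    y ∈ coveredPart A S ↔ ∃ a ∈ A, a ⊆ S ∧ y ∈ a := by
  simp [coveredPart, famUniverse, mem_sup, and_assoc]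

theorem coveredPart_mono {S T : Finset ℕ} (h : S ⊆ T) : coveredPart A S ⊆ coveredPart A T :=
  sup_mono (monotone_filter_right A fun _ _ ha => ha.trans h)

/-- The subsets of the universe of `A` in which `y`, if it is an element, is covered. These are the
families that the criterion below stacks. -/
def coveringFamily (A : Finset (Finset ℕ)) (y : ℕ) : Finset (Finset ℕ) :=
  {S ∈ (famUniverse A).powerset | y ∈ S → y ∈ coveredPart A S}

theorem supClosed_coveringFamily (A : Finset (Finset ℕ)) (y : ℕ) :
    SupClosed (coveringFamily A y : Set (Finset ℕ)) := fun S hS T hT => by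
  obtain ⟨hSU, hyS⟩ := mem_filter.1 (mem_coe.1 hS)
  obtain ⟨hTU, hyT⟩ := mem_filter.1 (mem_coe.1 hT)
  refine mem_coe.2 (mem_filter.2 ⟨supClosed_powerset _ hSU hTU, fun hy => ?_⟩)
  exact (mem_union.1 hy).elim (fun h => coveredPart_mono subset_union_left (hyS h))
    fun h => coveredPart_mono subset_union_right (hyT h)

theorem subset_coveringFamily (A : Finset (Finset ℕ)) (y : ℕ) : A ⊆ coveringFamily A y :=
  fun a ha => mem_filter.2 ⟨mem_powerset.2 (subset_famUniverse ha),
    fun hy => mem_coveredPart.2 ⟨a, ha, Subset.rfl, hy⟩⟩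

theorem sum_mul_bias_coveringFamily (w : ℕ → ℕ) {x : ℕ} (hx : x ∈ famUniverse A) :
    ∑ y ∈ famUniverse A, w y * bias (coveringFamily A y) x =
      -∑ S ∈ (famUniverse A).powerset,
        (if x ∈ S then -1 else 1) * ((∑ y ∈ S \ coveredPart A S, w y : ℕ) : ℤ) := by
  let U := famUniverse A
  have sum_covered {S} (hS : S ∈ U.powerset) :
      ((∑ y ∈ U with y ∈ S → y ∈ coveredPart A S, w y : ℕ) : ℤ) =
        (∑ y ∈ U, w y : ℕ) - (∑ y ∈ S \ coveredPart A S, w y : ℕ) := by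
    have uncovered_eq : {y ∈ U | ¬(y ∈ S → y ∈ coveredPart A S)} = S \ coveredPart A S := by
      ext y
      have mem_U : y ∈ S → y ∈ U := fun hy => mem_powerset.1 hS hy
      simp only [mem_filter, mem_sdiff]
      tauto
    rw [← uncovered_eq, ← sum_filter_add_sum_filter_not U (fun y => y ∈ S → y ∈ coveredPart A S)]
    push_cast
    ring
  calc ∑ y ∈ U, w y * bias (coveringFamily A y) x
      = ∑ S ∈ U.powerset, (if x ∈ S then -1 else 1) *
          ((∑ y ∈ U with y ∈ S → y ∈ coveredPart A S, w y : ℕ) : ℤ) := by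
        simp only [bias, coveringFamily, sum_filter, mul_sum, Nat.cast_sum]
        rw [sum_comm]
        refine sum_congr rfl fun S _ => sum_congr rfl fun y _ => ?_
        split_ifs <;> simp
    _ = bias U.powerset x * (∑ y ∈ U, w y : ℕ) - ∑ S ∈ U.powerset,
          (if x ∈ S then -1 else 1) * ((∑ y ∈ S \ coveredPart A S, w y : ℕ) : ℤ) := by
        rw [bias, sum_mul, ← sum_sub_distrib]
        exact sum_congr rfl fun S hS => by rw [sum_covered hS, mul_sub]
    _ = _ := by rw [bias_powerset hx, zero_mul, zero_sub]

theorem not_isFC_of_sum_uncovered_lt (w : ℕ → ℕ)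
    (h : ∀ x ∈ famUniverse A,
      ∑ S ∈ (famUniverse A).powerset with x ∉ S, ∑ y ∈ S \ coveredPart A S, w y <
        ∑ S ∈ (famUniverse A).powerset with x ∈ S, ∑ y ∈ S \ coveredPart A S, w y) :
    ¬ IsFC A := by
  refine not_isFC_of_sum_mul_bias_pos (ι := famUniverse A) (B := fun y => coveringFamily A y)
    (fun y => w y) (fun _ => filter_subset _ _) (fun y => supClosed_coveringFamily A y)
    (fun y a ha T hT => supClosed_coveringFamily A y (subset_coveringFamily A y ha) hT)
    fun x hx => ?_
  rw [sum_coe_sort _ fun y => w y * bias (coveringFamily A y) x, sum_mul_bias_coveringFamily w hx]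
  simp only [ite_mul, sum_ite, neg_one_mul, one_mul, sum_neg_distrib, neg_add_rev, neg_neg,
    ← Nat.cast_sum]
  have := h x hx
  omega

end Cover

section Witness

/-- The thirteen sets: `{1, 2} ∪ e` for the pairs `e ⊆ {3, …, 9}` meeting `{3, 4}`, together with
`{5, 6, 7, 8}` and `{5, 6, 7, 9}`. -/
def witness : Finset (Finset ℕ) :=
  {{1, 2, 3, 4}, {1, 2, 3, 5}, {1, 2, 3, 6}, {1, 2, 3, 7}, {1, 2, 3, 8}, {1, 2, 3, 9},
    {1, 2, 4, 5}, {1, 2, 4, 6}, {1, 2, 4, 7}, {1, 2, 4, 8}, {1, 2, 4, 9},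
    {5, 6, 7, 8}, {5, 6, 7, 9}}

/-- Weights for the criterion, constant on the orbits `{1, 2}`, `{3, 4}`, `{5, 6, 7}`, `{8, 9}` of
the symmetry group of `witness`; they were found by solving the criterion's linear inequalities. -/
def weight (y : ℕ) : ℕ :=
  if y ≤ 2 then 16 else if y ≤ 4 then 6 else if y ≤ 7 then 2 else 1

theorem card_witness : #witness = 13 := rfl

theorem famUniverse_witness : famUniverse witness = Icc 1 9 := by decide +kernel

theorem isKFamily_witness : IsKFamily 4 9 witness := ⟨by decide, famUniverse_witness⟩

theorem sum_uncovered_witness_lt : ∀ x ∈ Icc 1 9,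
    ∑ S ∈ (Icc 1 9).powerset with x ∉ S, ∑ y ∈ S \ coveredPart witness S, weight y <
      ∑ S ∈ (Icc 1 9).powerset with x ∈ S, ∑ y ∈ S \ coveredPart witness S, weight y := by
  decide +kernel

theorem not_isFC_witness : ¬ IsFC witness := by
  refine not_isFC_of_sum_uncovered_lt weight ?_
  rw [famUniverse_witness]
  exact sum_uncovered_witness_lt

end Witness

end FranklComplete

/-- FC(4, 9) ≥ 14: there is a Non-FC family of 13 distinct 4-element subsets of
{1, …, 9} with universe {1, …, 9}. -/
theorem FC_lower_bound_4_9 :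
    ∃ A : Finset (Finset ℕ), A.card = 13 ∧ IsKFamily 4 9 A ∧ ¬ IsFC A :=
  ⟨FranklComplete.witness, FranklComplete.card_witness, FranklComplete.isKFamily_witness,
    FranklComplete.not_isFC_witness⟩
end

section
/- FC(5, 9) ≥ 31; that is, there exists a family of 30 distinct 5-element subsets of {1,…,9} whose universe equals {1,…,9} that is Non-FC. -/
/-!
The argument is Poonen's. Write the *balance* of `x` in a family for the number of members
containing `x` minus the number of members avoiding it; a union-closed family containing `A`
witnesses that `A` is Non-FC as soon as all balances on the universe `U` of `A` are negative.

Let `G₁, …, Gₙ` be union-closed families of subsets of `U` that absorb unions with members of `A`.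
Tag the members of `Gᵢ` with all but one of a set of fresh elements, the missing one depending
on `i`. Unions of members of distinct `Gᵢ` then carry all the tags, so adding every subset of `U`
with all the tags, and with no tags every subset of `U` that all the `Gᵢ` absorb, yields a
union-closed family containing `A`. The fully tagged sets contribute zero balance and the untagged
ones a bounded amount, so `A` is Non-FC once some combination of the `Gᵢ` with positive integer
coefficients has negative balances.

For the 30-set family, `Gₖ` consists of the sets which avoid `k` or contain a member of a suitable
generating family; the weights solve the resulting linear program.
-/

open Finset

section Balance

variable {α : Type*} [DecidableEq α]

/-- The balance of `x` in `F`: the number of members of `F` containing `x` minus the number of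
members avoiding it. It is an integer so that balances of disjoint families add up. -/
def balance (F : Finset (Finset α)) (x : α) : ℤ := ∑ T ∈ F, if x ∈ T then 1 else -1

lemma balance_eq_two_mul_card_filter_sub_card (F : Finset (Finset α)) (x : α) :
    balance F x = 2 * (#{T ∈ F | x ∈ T} : ℤ) - #F := by
  have hcard := card_filter_add_card_filter_not (s := F) (x ∈ ·)
  rw [balance, sum_ite, sum_const, sum_const, nsmul_eq_mul, nsmul_eq_mul, ← hcard]
  push_cast
  ring

lemma balance_le_card (F : Finset (Finset α)) (x : α) : balance F x ≤ #F := by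
  rw [card_eq_sum_ones, Nat.cast_sum]
  exact sum_le_sum fun T _ => by split_ifs <;> simp

lemma balance_powerset {U : Finset α} {x : α} (hx : x ∈ U) : balance U.powerset x = 0 := by
  rw [← insert_erase hx, balance, sum_powerset_insert (notMem_erase x U), ← sum_add_distrib]
  refine sum_eq_zero fun T hT => ?_
  have hxT : x ∉ T := fun h => notMem_erase x U (mem_powerset.1 hT h)
  simp [hxT]

end Balance

lemma not_isFC_of_balance_neg {A F : Finset (Finset ℕ)} (hF : UnionClosed F) (hAF : A ⊆ F)
    (hneg : ∀ x ∈ famUniverse A, balance F x < 0) : ¬ IsFC A := by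
  intro hFC
  obtain ⟨x, hx, hcard⟩ := hFC F hF hAF
  have := hneg x hx
  rw [balance_eq_two_mul_card_filter_sub_card] at this
  omega

section Layered

variable {α κ : Type*} [DecidableEq α] [Fintype κ] {U : Finset α}
  {L : κ → Finset (Finset α)} {tag : κ → Finset α}

/-- The family made of the layers `L p`, each member of which is enlarged by the set `tag p`. -/
def layered (L : κ → Finset (Finset α)) (tag : κ → Finset α) : Finset (Finset α) :=
  univ.biUnion fun p => (L p).image (· ∪ tag p)

lemma mem_layered {T : Finset α} : T ∈ layered L tag ↔ ∃ p, ∃ S ∈ L p, S ∪ tag p = T := by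
  simp only [layered, mem_biUnion, mem_univ, true_and, mem_image]

lemma union_inter_eq_left_of_disjoint {S Z : Finset α} (hS : S ⊆ U) (hZ : Disjoint U Z) :
    (S ∪ Z) ∩ U = S := by
  rw [union_inter_distrib_right, inter_eq_left.2 hS, disjoint_iff_inter_eq_empty.1 hZ.symm,
    union_empty]

lemma union_sdiff_eq_right_of_disjoint {S Z : Finset α} (hS : S ⊆ U) (hZ : Disjoint U Z) :
    (S ∪ Z) \ U = Z := by
  rw [union_sdiff_distrib, sdiff_eq_empty_iff_subset.2 hS, hZ.symm.sdiff_eq_left, empty_union]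

lemma balance_image_union {G : Finset (Finset α)} {Z : Finset α} (hG : G ⊆ U.powerset)
    (hZ : Disjoint U Z) {x : α} (hx : x ∈ U) :
    balance (G.image (· ∪ Z)) x = balance G x := by
  have hinj : Set.InjOn (· ∪ Z) (G : Set (Finset α)) :=
    Set.LeftInvOn.injOn (f₁' := (· ∩ U)) fun _ hS =>
      union_inter_eq_left_of_disjoint (mem_powerset.1 (hG hS)) hZ
  rw [balance, sum_image hinj]
  simp only [mem_union, disjoint_left.1 hZ hx, or_false, balance]

lemma balance_layered (hL : ∀ p, L p ⊆ U.powerset) (htag : ∀ p, Disjoint U (tag p))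
    (hinj : Function.Injective tag) {x : α} (hx : x ∈ U) :
    balance (layered L tag) x = ∑ p, balance (L p) x := by
  have hdisj : Set.PairwiseDisjoint (univ : Finset κ) fun p => (L p).image (· ∪ tag p) := by
    intro p _ q _ hpq
    refine disjoint_left.2 fun T hp hq => hpq (hinj ?_)
    obtain ⟨S, hS, rfl⟩ := mem_image.1 hp
    obtain ⟨R, hR, hRS⟩ := mem_image.1 hq
    rw [← union_sdiff_eq_right_of_disjoint (mem_powerset.1 (hL p hS)) (htag p), ← hRS,
      union_sdiff_eq_right_of_disjoint (mem_powerset.1 (hL q hR)) (htag q)]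
  rw [balance, layered, sum_biUnion hdisj]
  exact sum_congr rfl fun p _ => balance_image_union (hL p) (htag p) hx

lemma union_mem_layered
    (h : ∀ p q, ∃ r, tag r = tag p ∪ tag q ∧ ∀ S ∈ L p, ∀ T ∈ L q, S ∪ T ∈ L r)
    {S T : Finset α} (hS : S ∈ layered L tag) (hT : T ∈ layered L tag) :
    S ∪ T ∈ layered L tag := by
  obtain ⟨p, S', hS', rfl⟩ := mem_layered.1 hS
  obtain ⟨q, T', hT', rfl⟩ := mem_layered.1 hT
  obtain ⟨r, hr, hL⟩ := h p q
  exact mem_layered.2 ⟨r, S' ∪ T', hL S' hS' T' hT', by rw [hr, union_union_union_comm]⟩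

end Layered

/-- The families whose balances constrain the FC property of `A`: union-closed families `G` of
subsets of the universe of `A` which absorb unions with members of `A`. Unlike in `UnionClosed`, the
empty family is admitted. -/
structure IsUnionModule (A G : Finset (Finset ℕ)) : Prop where
  subset_powerset : G ⊆ (famUniverse A).powerset
  union_mem : ∀ S ∈ G, ∀ T ∈ G, S ∪ T ∈ G
  union_mem_of_mem_left : ∀ S ∈ A, ∀ T ∈ G, S ∪ T ∈ G

lemma subset_famUniverse {A : Finset (Finset ℕ)} {S : Finset ℕ} (hS : S ∈ A) :
    S ⊆ famUniverse A :=
  le_sup (f := id) hS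

section Poonen

variable {ι : Type*} [Fintype ι]

/-- The subsets of `U` whose unions with members of each `G i` stay in `G i`: the largest choice of
untagged layer in Poonen's construction. -/
def unionStabilizer (U : Finset ℕ) (G : ι → Finset (Finset ℕ)) : Finset (Finset ℕ) :=
  {T ∈ U.powerset | ∀ i, ∀ S ∈ G i, T ∪ S ∈ G i}

/-- The layers of Poonen's construction: the untagged layer `none`, the fully tagged layer
`some none`, and the given families in between. -/
def poonenLayer (U : Finset ℕ) (G : ι → Finset (Finset ℕ)) :
    Option (Option ι) → Finset (Finset ℕ)
  | none => unionStabilizer U G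
  | some none => U.powerset
  | some (some i) => G i

/-- The tags of Poonen's construction, before they are embedded into `ℕ`. The tag `none : Option ι`
is never removed; it separates the families `G i` from the untagged layer when `ι` has only one
element. -/
def poonenTag [DecidableEq ι] : Option (Option ι) → Finset (Option ι)
  | none => ∅
  | some none => univ
  | some (some i) => {some i}ᶜ

lemma poonenTag_injective [DecidableEq ι] : Function.Injective (poonenTag (ι := ι)) := by
  intro p q hpq
  have hmem (o : Option ι) : o ∈ poonenTag p ↔ o ∈ poonenTag q := by rw [hpq]
  match p, q with
  | none, none => rfl
  | none, some none => simpa [poonenTag] using hmem none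
  | none, some (some j) => simpa [poonenTag] using hmem none
  | some none, none => simpa [poonenTag] using hmem none
  | some none, some none => rfl
  | some none, some (some j) => simpa [poonenTag] using hmem (some j)
  | some (some i), none => simpa [poonenTag] using hmem none
  | some (some i), some none => simpa [poonenTag] using hmem (some i)
  | some (some i), some (some j) => simpa [poonenTag] using hmem (some i)

variable {A : Finset (Finset ℕ)} {G : ι → Finset (Finset ℕ)}

lemma poonenLayer_subset_powerset (hG : ∀ i, IsUnionModule A (G i)) (p : Option (Option ι)) :
    poonenLayer (famUniverse A) G p ⊆ (famUniverse A).powerset :=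
  match p with
  | none => filter_subset _ _
  | some none => Subset.rfl
  | some (some i) => (hG i).subset_powerset

lemma subset_unionStabilizer (hG : ∀ i, IsUnionModule A (G i)) :
    A ⊆ unionStabilizer (famUniverse A) G := fun S hS =>
  mem_filter.2 ⟨mem_powerset.2 (subset_famUniverse hS), fun i => (hG i).union_mem_of_mem_left S hS⟩

lemma union_mem_unionStabilizer {U S T : Finset ℕ} (hS : S ∈ unionStabilizer U G)
    (hT : T ∈ unionStabilizer U G) : S ∪ T ∈ unionStabilizer U G := by
  simp only [unionStabilizer, mem_filter, mem_powerset] at hS hT ⊢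
  refine ⟨union_subset hS.1 hT.1, fun i R hR => ?_⟩
  rw [union_assoc]
  exact hS.2 i _ (hT.2 i R hR)

lemma exists_poonenTag_eq_union [DecidableEq ι] (hG : ∀ i, IsUnionModule A (G i))
    (p q : Option (Option ι)) :
    ∃ r, poonenTag r = poonenTag p ∪ poonenTag q ∧
      ∀ S ∈ poonenLayer (famUniverse A) G p, ∀ T ∈ poonenLayer (famUniverse A) G q,
        S ∪ T ∈ poonenLayer (famUniverse A) G r := by
  have full (hpq : poonenTag p ∪ poonenTag q = univ) :
      ∃ r, poonenTag r = poonenTag p ∪ poonenTag q ∧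
        ∀ S ∈ poonenLayer (famUniverse A) G p, ∀ T ∈ poonenLayer (famUniverse A) G q,
          S ∪ T ∈ poonenLayer (famUniverse A) G r :=
    ⟨some none, hpq.symm, fun S hS T hT => mem_powerset.2 <| union_subset
      (mem_powerset.1 (poonenLayer_subset_powerset hG p hS))
      (mem_powerset.1 (poonenLayer_subset_powerset hG q hT))⟩
  match p, q with
  | none, none => exact ⟨none, (union_empty _).symm, fun S hS T hT =>
      union_mem_unionStabilizer hS hT⟩
  | none, some (some i) => exact ⟨some (some i), (empty_union _).symm, fun S hS T hT =>
      (mem_filter.1 hS).2 i T hT⟩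
  | some (some i), none => exact ⟨some (some i), (union_empty _).symm, fun S hS T hT =>
      union_comm T S ▸ (mem_filter.1 hT).2 i S hS⟩
  | some none, _ => exact full (top_sup_eq _)
  | _, some none => exact full (sup_top_eq _)
  | some (some i), some (some j) =>
    obtain rfl | hij := eq_or_ne i j
    · exact ⟨some (some i), (union_self _).symm, (hG i).union_mem⟩
    · refine full ?_
      simpa [poonenTag, ← compl_inter, ← disjoint_iff_inter_eq_empty] using hij

lemma exists_embedding_disjoint_map {β : Type*} [Finite β] (U : Finset ℕ) :
    ∃ e : β ↪ ℕ, ∀ s : Finset β, Disjoint U (s.map e) := by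
  let e : β ↪ ℕ := (Finite.equivFin β).toEmbedding.trans
    (Fin.valEmbedding.trans (addRightEmbedding (U.sup id + 1)))
  refine ⟨e, fun s => disjoint_left.2 fun x hx hxs => ?_⟩
  obtain ⟨b, -, rfl⟩ := mem_map.1 hxs
  have hle : e b ≤ U.sup id := le_sup (f := id) hx
  simp only [e, Function.Embedding.trans_apply, addRightEmbedding_apply] at hle
  omega

theorem not_isFC_of_sum_balance_lt (hG : ∀ i, IsUnionModule A (G i))
    (hsum : ∀ x ∈ famUniverse A, ∑ i, balance (G i) x < -2 ^ #(famUniverse A)) :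
    ¬ IsFC A := by
  classical
  let U := famUniverse A
  obtain ⟨e, he⟩ := exists_embedding_disjoint_map (β := Option ι) U
  let tag : Option (Option ι) → Finset ℕ := fun p => (poonenTag p).map e
  have hAF : A ⊆ layered (poonenLayer U G) tag := fun S hS =>
    mem_layered.2 ⟨none, S, subset_unionStabilizer hG hS, union_empty S⟩
  have htop : U ∪ tag (some none) ∈ layered (poonenLayer U G) tag :=
    mem_layered.2 ⟨some none, U, mem_powerset_self U, rfl⟩
  have hunion (p q : Option (Option ι)) : ∃ r, tag r = tag p ∪ tag q ∧
      ∀ S ∈ poonenLayer U G p, ∀ T ∈ poonenLayer U G q, S ∪ T ∈ poonenLayer U G r := by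
    obtain ⟨r, hr, hmem⟩ := exists_poonenTag_eq_union hG p q
    exact ⟨r, by simp only [tag, hr, map_union], hmem⟩
  refine not_isFC_of_balance_neg
    ⟨⟨_, htop⟩, fun S hS T hT => union_mem_layered hunion hS hT⟩ hAF fun x hx => ?_
  have hstab : balance (unionStabilizer U G) x ≤ 2 ^ #U := by
    refine (balance_le_card _ x).trans ?_
    exact_mod_cast (card_filter_le U.powerset _).trans_eq (card_powerset U)
  calc balance (layered (poonenLayer U G) tag) x
      = ∑ p, balance (poonenLayer U G p) x :=
        balance_layered (poonenLayer_subset_powerset hG) (fun p => he _)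
          ((map_injective e).comp poonenTag_injective) hx
    _ = balance (unionStabilizer U G) x + ∑ i, balance (G i) x := by
        simp only [Fintype.sum_option, poonenLayer, balance_powerset (U := U) hx, zero_add]
    _ < 0 := by linarith [hsum x hx]

end Poonen

theorem not_isFC_of_weighted_sum_balance_neg {κ : Type*} {A : Finset (Finset ℕ)} (K : Finset κ)
    (G : κ → Finset (Finset ℕ)) (w : κ → ℕ) (hG : ∀ k ∈ K, IsUnionModule A (G k))
    (hsum : ∀ x ∈ famUniverse A, ∑ k ∈ K, w k * balance (G k) x < 0) : ¬ IsFC A := by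
  -- Scaling the weights makes the negative sums outweigh the untagged layer.
  let N := 2 ^ #(famUniverse A) + 1
  refine not_isFC_of_sum_balance_lt (ι := Σ k : K, Fin (N * w k)) (G := fun i => G i.1)
    (fun i => hG i.1 i.1.2) fun x hx => ?_
  have hle : ∑ k ∈ K, w k * balance (G k) x ≤ -1 := Int.le_sub_one_of_lt (hsum x hx)
  calc ∑ i : Σ k : K, Fin (N * w k), balance (G i.1) x
      = N * ∑ k ∈ K, w k * balance (G k) x := by
        simp only [Fintype.sum_sigma, sum_const, card_univ, Fintype.card_fin, nsmul_eq_mul,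
          Nat.cast_mul, mul_assoc, ← mul_sum]
        rw [sum_coe_sort K fun k => (w k : ℤ) * balance (G k) x]
    _ ≤ N * (-1) := by gcongr
    _ < -2 ^ #(famUniverse A) := by push_cast [N]; linarith

/-- The subsets of `U` which avoid `k` or contain a member of `B`; the second alternative is what
makes room for the unions with the members of `A` containing `k`. -/
def guardedFamily (U : Finset ℕ) (k : ℕ) (B : Finset (Finset ℕ)) : Finset (Finset ℕ) :=
  {T ∈ U.powerset | k ∈ T → ∃ R ∈ B, R ⊆ T}

lemma isUnionModule_guardedFamily {A B : Finset (Finset ℕ)} {k : ℕ}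
    (hAB : ∀ S ∈ A, k ∈ S → ∃ R ∈ B, R ⊆ S) :
    IsUnionModule A (guardedFamily (famUniverse A) k B) := by
  have union_mem {S T : Finset ℕ} (hS : S ⊆ famUniverse A) (hSB : k ∈ S → ∃ R ∈ B, R ⊆ S)
      (hT : T ∈ guardedFamily (famUniverse A) k B) :
      S ∪ T ∈ guardedFamily (famUniverse A) k B := by
    obtain ⟨hTU, hTB⟩ := mem_filter.1 hT
    refine mem_filter.2 ⟨mem_powerset.2 (union_subset hS (mem_powerset.1 hTU)), fun hk => ?_⟩
    obtain hk | hk := mem_union.1 hk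
    · obtain ⟨R, hR, hRS⟩ := hSB hk
      exact ⟨R, hR, hRS.trans subset_union_left⟩
    · obtain ⟨R, hR, hRT⟩ := hTB hk
      exact ⟨R, hR, hRT.trans subset_union_right⟩
  exact
    { subset_powerset := filter_subset _ _
      union_mem := fun S hS T hT =>
        union_mem (mem_powerset.1 (mem_filter.1 hS).1) (mem_filter.1 hS).2 hT
      union_mem_of_mem_left := fun S hS T hT => union_mem (subset_famUniverse hS) (hAB S hS) hT }

/-- The Non-FC family of 30 sets: `{8, 9}` together with a triple of elements of `{1, …, 7}` meeting
both `{1, 2, 3, 4}` and `{5, 6, 7}`. -/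
def mixedFamily : Finset (Finset ℕ) :=
  {S ∈ (Icc 1 9).powersetCard 5 |
    {8, 9} ⊆ S ∧ (S ∩ {1, 2, 3, 4}).Nonempty ∧ (S ∩ {5, 6, 7}).Nonempty}

/-- The index of the block of `{1, 2, 3, 4} ∪ {5, 6, 7} ∪ {8, 9}` containing `x`. Permutations
preserving the blocks preserve `mixedFamily`, so all data below depend on blocks only. -/
def block (x : ℕ) : Fin 3 := if x ≤ 4 then 0 else if x ≤ 7 then 1 else 2

/-- The generating family for the guarded family of `k`. Taking `mixedFamily` for `k = 8, 9` as well
would make the linear program for the weights infeasible. -/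
def generators (k : ℕ) : Finset (Finset ℕ) :=
  ![mixedFamily, mixedFamily, {{5, 8, 9}, {6, 8, 9}, {7, 8, 9}}] (block k)

/-- A solution in positive integers of the linear program asking for negative weighted balances. -/
def weight (k : ℕ) : ℕ := ![3, 32, 188] (block k)

lemma card_mixedFamily : #mixedFamily = 30 := by decide +kernel

lemma famUniverse_mixedFamily : famUniverse mixedFamily = Icc 1 9 := by
  unfold famUniverse
  decide +kernel

lemma isKFamily_mixedFamily : IsKFamily 5 9 mixedFamily :=
  ⟨fun _ hS => (mem_powersetCard.1 (mem_filter.1 hS).1).symm, famUniverse_mixedFamily⟩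

lemma exists_generators_subset (k : ℕ) {S : Finset ℕ} (hS : S ∈ mixedFamily) :
    ∃ R ∈ generators k, R ⊆ S := by
  have htriples : ∀ S ∈ mixedFamily, ∃ R ∈ generators 8, R ⊆ S := by decide +kernel
  unfold generators
  match block k with
  | 0 | 1 => exact ⟨S, hS, Subset.rfl⟩
  | 2 => exact htriples S hS

lemma balance_guardedFamily_generators : ∀ k ∈ Icc 1 9, ∀ x ∈ Icc 1 9,
    balance (guardedFamily (Icc 1 9) k (generators k)) x =
      if x = k then ![-203, -200, -144] (block k)
      else !![3, 9, 53; 6, 4, 56; 0, 16, 112] (block k) (block x) := by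
  decide +kernel

lemma sum_weight_mul_balance {x : ℕ} (hx : x ∈ Icc 1 9) :
    ∑ k ∈ Icc 1 9, weight k * balance (guardedFamily (Icc 1 9) k (generators k)) x =
      ![-6, -20, -4] (block x) := by
  rw [sum_congr rfl fun k hk => by rw [balance_guardedFamily_generators k hk x hx]]
  revert x
  decide +kernel

/-- FC(5, 9) ≥ 31: there is a Non-FC family of 30 distinct 5-element subsets of
{1, …, 9} with universe {1, …, 9}. -/
theorem FC_lower_bound_5_9 :
    ∃ A : Finset (Finset ℕ), A.card = 30 ∧ IsKFamily 5 9 A ∧ ¬ IsFC A := by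
  refine ⟨mixedFamily, card_mixedFamily, isKFamily_mixedFamily, ?_⟩
  refine not_isFC_of_weighted_sum_balance_neg (Icc 1 9)
    (fun k => guardedFamily (famUniverse mixedFamily) k (generators k)) weight
    (fun k _ => isUnionModule_guardedFamily fun S hS _ => exists_generators_subset k hS) ?_
  rw [famUniverse_mixedFamily]
  intro x hx
  rw [sum_weight_mul_balance hx]
  generalize block x = b
  revert b
  decide
end

section
/- FC(7, 10) ≥ 85; that is, there exists a family of 84 distinct 7-element subsets of {1,…,10} whose universe equals {1,…,10} that is Non-FC. -/
/-!
Poonen's construction. Let `C` be a union-closed family of subsets of `V` containing `A`, and let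
`𝓑 k` be union-closed families of subsets of `V`, each closed under unions with members of `C`.
Adjoining to `V` a set `Y` of fresh elements, among them one `y k` for each `k`, the sets in `C`,
the sets `X ∪ (Y \ {y k})` with `X ∈ 𝓑 k` and the sets `X ∪ Y` with `X ⊆ V` form a union-closed
family containing `A`. The last kind contains each element of `V` exactly half of the time. So `A`
is Non-FC as soon as some weighted combination of the `𝓑 k` makes every element of `V` rare; the
contribution of `C` is drowned by repeating the `𝓑 k` often enough.

For `C` closed upwards in `V`, take for `𝓑 i` the subsets of `V` that contain `i` only if they lie
in `C`. Double counting turns the requirement into an upper bound, for each `x`, on the signed total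
weight of `C`. When `A` consists of all the `7`-subsets of `[10]` through `10`, a weight depending
only on whether an element is `10` leaves two inequalities between binomial sums.
-/

open Finset
open scoped FinsetFamily

section Excess

variable {α : Type*} [DecidableEq α]

/-- The contribution `±1` of the set `S` to the excess of a family at `x`. -/
def memSign (x : α) (S : Finset α) : ℤ := if x ∈ S then 1 else -1

/-- The number of members of `F` containing `x` minus the number of those avoiding `x`, so that
Frankl's condition at `x` reads `0 ≤ excess F x`. -/
def excess (F : Finset (Finset α)) (x : α) : ℤ := ∑ S ∈ F, memSign x S

lemma memSign_congr {x : α} {S T : Finset α} (h : x ∈ S ↔ x ∈ T) : memSign x S = memSign x T := by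
  simp only [memSign, h]

lemma memSign_insert_self (x : α) (S : Finset α) : memSign x (insert x S) = 1 :=
  if_pos (mem_insert_self x S)

lemma memSign_of_notMem {x : α} {S : Finset α} (h : x ∉ S) : memSign x S = -1 :=
  if_neg h

lemma excess_eq (F : Finset (Finset α)) (x : α) : excess F x = 2 * #{S ∈ F | x ∈ S} - #F := by
  have hcard := card_filter_add_card_filter_not (s := F) (x ∈ ·)
  simp only [excess, memSign, sum_ite, sum_const, nsmul_eq_mul]
  lia

lemma excess_nonneg_iff {F : Finset (Finset α)} {x : α} :
    0 ≤ excess F x ↔ #F ≤ 2 * #{S ∈ F | x ∈ S} := by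
  rw [excess_eq]
  lia

lemma excess_eq_neg_card {F : Finset (Finset α)} {x : α} (h : ∀ S ∈ F, x ∉ S) :
    excess F x = -#F := by
  rw [excess, sum_congr rfl fun S hS => memSign_of_notMem (h S hS)]
  simp

lemma excess_image_insert {F : Finset (Finset α)} {x : α} (h : ∀ S ∈ F, x ∉ S) :
    excess (F.image (insert x)) x = #F := by
  have hinj : Set.InjOn (insert x) (F : Set (Finset α)) :=
    insert_erase_invOn.2.injOn.mono h
  simp [excess, sum_image hinj, memSign_insert_self]

lemma excess_powerset_of_notMem {V : Finset α} {x : α} (hx : x ∉ V) :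
    excess V.powerset x = -2 ^ #V := by
  rw [excess_eq_neg_card fun S hS => notMem_mono (mem_powerset.1 hS) hx, card_powerset]
  norm_cast

lemma excess_powerset_of_mem {V : Finset α} {x : α} (hx : x ∈ V) : excess V.powerset x = 0 := by
  have hsub : ∀ S ∈ (V.erase x).powerset, x ∉ S := fun S hS =>
    notMem_mono (mem_powerset.1 hS) (notMem_erase x V)
  rw [← insert_erase hx, excess, sum_powerset_insert (notMem_erase x V),
    sum_congr rfl fun S hS => memSign_of_notMem (hsub S hS),
    sum_congr rfl fun S _ => memSign_insert_self x S]
  simp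

lemma excess_powersetCard_succ {U : Finset α} {x : α} (hx : x ∈ U) (s : ℕ) :
    excess (powersetCard (s + 1) U) x = (#U - 1).choose s - (#U - 1).choose (s + 1) := by
  have havoid (r : ℕ) : ∀ S ∈ powersetCard r (U.erase x), x ∉ S := fun S hS =>
    notMem_mono (mem_powersetCard.1 hS).1 (notMem_erase x U)
  have hdisj : Disjoint (powersetCard (s + 1) (U.erase x))
      ((powersetCard s (U.erase x)).image (insert x)) := by
    simp only [disjoint_right, forall_mem_image]
    exact fun S _ hS => havoid _ _ hS (mem_insert_self x S)
  calc excess (powersetCard (s + 1) U) x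
      = excess (powersetCard (s + 1) (U.erase x)) x +
          excess ((powersetCard s (U.erase x)).image (insert x)) x := by
        rw [excess, excess, excess, ← sum_union hdisj, ← powersetCard_succ_insert
          (notMem_erase x U), insert_erase hx]
    _ = (#U - 1).choose s - (#U - 1).choose (s + 1) := by
        rw [excess_eq_neg_card (havoid _), excess_image_insert (havoid _), card_powersetCard,
          card_powersetCard, card_erase_of_mem hx]
        ring

end Excess

section Glue

variable {α : Type*} [DecidableEq α]

/-- The family of all `X ∪ T` with `T ∈ 𝒯` and `X` in the fibre `Φ T` over `T`. -/
def glue (𝒯 : Finset (Finset α)) (Φ : Finset α → Finset (Finset α)) : Finset (Finset α) :=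
  𝒯.biUnion fun T => (Φ T).image (· ∪ T)

variable {V : Finset α} {𝒯 : Finset (Finset α)} {Φ : Finset α → Finset (Finset α)}

lemma mem_glue {S : Finset α} : S ∈ glue 𝒯 Φ ↔ ∃ T ∈ 𝒯, ∃ X ∈ Φ T, X ∪ T = S := by
  simp only [glue, mem_biUnion, mem_image]

lemma union_mem_glue (hunion : ∀ T ∈ 𝒯, ∀ T' ∈ 𝒯, T ∪ T' ∈ 𝒯)
    (hΦ : ∀ T T', Φ T ⊻ Φ T' ⊆ Φ (T ∪ T')) :
    ∀ A ∈ glue 𝒯 Φ, ∀ B ∈ glue 𝒯 Φ, A ∪ B ∈ glue 𝒯 Φ := by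
  intro A hA B hB
  obtain ⟨T, hT, X, hX, rfl⟩ := mem_glue.1 hA
  obtain ⟨T', hT', X', hX', rfl⟩ := mem_glue.1 hB
  exact mem_glue.2 ⟨T ∪ T', hunion T hT T' hT', X ∪ X', hΦ T T' (sup_mem_sups hX hX'),
    union_union_union_comm X X' T T'⟩

lemma excess_image_union {B : Finset (Finset α)} {T : Finset α} (hB : B ⊆ V.powerset)
    (hT : Disjoint V T) {x : α} (hx : x ∈ V) : excess (B.image (· ∪ T)) x = excess B x := by
  have hinj : Set.InjOn (· ∪ T) (B : Set (Finset α)) := fun X hX X' hX' h => by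
    rw [← union_sdiff_cancel_right (hT.mono_left (mem_powerset.1 (hB hX))),
      ← union_sdiff_cancel_right (hT.mono_left (mem_powerset.1 (hB hX')))]
    exact congrArg (· \ T) h
  rw [excess, sum_image hinj]
  refine sum_congr rfl fun X _ => memSign_congr ?_
  rw [mem_union, or_iff_left (disjoint_left.1 hT hx)]

lemma excess_glue (hΦ : ∀ T, Φ T ⊆ V.powerset) (h𝒯 : ∀ T ∈ 𝒯, Disjoint V T) {x : α}
    (hx : x ∈ V) : excess (glue 𝒯 Φ) x = ∑ T ∈ 𝒯, excess (Φ T) x := by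
  have htail {T S : Finset α} (hT : T ∈ 𝒯) (hS : S ∈ (Φ T).image (· ∪ T)) : S \ V = T := by
    obtain ⟨X, hX, rfl⟩ := mem_image.1 hS
    rw [union_sdiff_distrib, sdiff_eq_empty_iff_subset.2 (mem_powerset.1 (hΦ T hX)),
      empty_union, sdiff_eq_self_of_disjoint (h𝒯 T hT).symm]
  have hdisj : (𝒯 : Set (Finset α)).PairwiseDisjoint fun T => (Φ T).image (· ∪ T) :=
    fun T hT T' hT' hne => disjoint_left.2 fun S hS hS' =>
      hne ((htail hT hS).symm.trans (htail hT' hS'))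
  calc excess (glue 𝒯 Φ) x
      = ∑ T ∈ 𝒯, excess ((Φ T).image (· ∪ T)) x := sum_biUnion hdisj
    _ = ∑ T ∈ 𝒯, excess (Φ T) x :=
        sum_congr rfl fun T hT => excess_image_union (hΦ T) (h𝒯 T hT) hx

end Glue

section Gadget

variable {α κ : Type*} [DecidableEq α]

/-- A family `B` of subsets of `V` that is closed under unions and under unions with the members
of `C`: the candidates for the fibres of a union-closed family containing `C`. -/
structure IsUnionModule_s11 (V : Finset α) (C B : Finset (Finset α)) : Prop where
  subset_powerset : B ⊆ V.powerset
  sups_self_subset : B ⊻ B ⊆ B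
  sups_subset : C ⊻ B ⊆ B

/-- The tails of Poonen's construction on the fresh elements `range e`: the empty set, the set of
all fresh elements, and the complements of the single elements `e (some k)`. The element `e none`
lies in every nonempty tail and keeps those complements distinct from `∅`. -/
def tails [Fintype κ] (e : Option κ ↪ α) : Finset (Finset α) :=
  insert ∅ (insert (univ.map e) (univ.image fun k => (univ.map e).erase (e (some k))))

/-- The fibre of Poonen's construction over a tail `T`: it is `C` over `∅`, `𝓑 k` over the tail
missing just `e (some k)`, and the whole power set of `V` over the full tail. -/
def fiber (V : Finset α) (C : Finset (Finset α)) (𝓑 : κ → Finset (Finset α))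
    (e : Option κ ↪ α) [Fintype κ] (T : Finset α) : Finset (Finset α) :=
  if T = ∅ then C else {X ∈ V.powerset | ∀ k, e (some k) ∉ T → X ∈ 𝓑 k}

variable [Fintype κ] {e : Option κ ↪ α}

lemma mem_tails {T : Finset α} :
    T ∈ tails e ↔ T = ∅ ∨ T = univ.map e ∨ ∃ k, (univ.map e).erase (e (some k)) = T := by
  simp only [tails, mem_insert, mem_image, mem_univ, true_and]

lemma subset_of_mem_tails {T : Finset α} (hT : T ∈ tails e) : T ⊆ univ.map e := by
  obtain rfl | rfl | ⟨k, rfl⟩ := mem_tails.1 hT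
  exacts [empty_subset _, Subset.rfl, erase_subset _ _]

lemma union_mem_tails : ∀ T ∈ tails e, ∀ T' ∈ tails e, T ∪ T' ∈ tails e := by
  intro T hT T' hT'
  have hfull : univ.map e ∈ tails e := mem_tails.2 (.inr (.inl rfl))
  obtain rfl | rfl | ⟨k, rfl⟩ := mem_tails.1 hT
  · rwa [empty_union]
  · rwa [union_eq_left.2 (subset_of_mem_tails hT')]
  obtain rfl | rfl | ⟨l, rfl⟩ := mem_tails.1 hT'
  · rwa [union_empty]
  · rwa [union_eq_right.2 (erase_subset _ _)]
  obtain rfl | hkl := eq_or_ne k l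
  · rwa [union_self]
  · have hk : e (some k) ∈ (univ.map e).erase (e (some l)) := by simp [hkl]
    rwa [erase_union_of_mem hk, union_eq_left.2 (erase_subset _ _)]

lemma sum_tails {M : Type*} [AddCommMonoid M] (f : Finset α → M) :
    ∑ T ∈ tails e, f T =
      f ∅ + (f (univ.map e) + ∑ k, f ((univ.map e).erase (e (some k)))) := by
  have hmem (i : Option κ) : e i ∈ univ.map e := mem_map_of_mem e (mem_univ i)
  have hinj : Function.Injective fun k => (univ.map e).erase (e (some k)) := fun k l h =>
    Option.some_injective κ <| e.injective <| erase_injOn _ (hmem _) (hmem _) h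
  have hfull : univ.map e ∉ univ.image fun k => (univ.map e).erase (e (some k)) := by
    simp
  have hempty : ∅ ∉ insert (univ.map e)
      (univ.image fun k => (univ.map e).erase (e (some k))) := by
    simp only [mem_insert, mem_image, mem_univ, true_and, not_or, not_exists]
    refine ⟨(ne_empty_of_mem (hmem none)).symm, fun k => ne_empty_of_mem (a := e none) ?_⟩
    simp
  rw [tails, sum_insert hempty, sum_insert hfull, sum_image hinj.injOn]

variable {V : Finset α} {C : Finset (Finset α)} {𝓑 : κ → Finset (Finset α)}

lemma fiber_empty : fiber V C 𝓑 e ∅ = C := if_pos rfl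

lemma mem_fiber {T X : Finset α} (hT : T ≠ ∅) :
    X ∈ fiber V C 𝓑 e T ↔ X ⊆ V ∧ ∀ k, e (some k) ∉ T → X ∈ 𝓑 k := by
  rw [fiber, if_neg hT, mem_filter, mem_powerset]

lemma fiber_full : fiber V C 𝓑 e (univ.map e) = V.powerset := by
  ext X
  rw [mem_fiber (ne_empty_of_mem (mem_map_of_mem e (mem_univ none)))]
  simp

lemma fiber_erase {k : κ} (hk : 𝓑 k ⊆ V.powerset) :
    fiber V C 𝓑 e ((univ.map e).erase (e (some k))) = 𝓑 k := by
  ext X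
  rw [mem_fiber (ne_empty_of_mem (a := e none) (by simp))]
  simp only [mem_erase, mem_map', mem_univ, and_true, not_not, ne_eq, e.injective.eq_iff,
    Option.some_inj, forall_eq]
  exact and_iff_right_of_imp fun hX => mem_powerset.1 (hk hX)

lemma fiber_subset_powerset (hC : C ⊆ V.powerset) (T : Finset α) :
    fiber V C 𝓑 e T ⊆ V.powerset := by
  rw [fiber]
  split_ifs
  exacts [hC, filter_subset _ _]

lemma fiber_sups_fiber_subset (hC : IsUnionModule_s11 V C C) (h𝓑 : ∀ k, IsUnionModule_s11 V C (𝓑 k))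
    (T T' : Finset α) : fiber V C 𝓑 e T ⊻ fiber V C 𝓑 e T' ⊆ fiber V C 𝓑 e (T ∪ T') := by
  have hcore {T : Finset α} (hT : T ≠ ∅) : C ⊻ fiber V C 𝓑 e T ⊆ fiber V C 𝓑 e T := by
    simp only [sups_subset_iff, mem_fiber hT]
    exact fun X hX X' hX' => ⟨union_subset (mem_powerset.1 (hC.subset_powerset hX)) hX'.1,
      fun k hk => (h𝓑 k).sups_subset (sup_mem_sups hX (hX'.2 k hk))⟩
  obtain rfl | hT := eq_or_ne T ∅
  · obtain rfl | hT' := eq_or_ne T' ∅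
    · simpa only [union_empty, fiber_empty] using hC.sups_self_subset
    · simpa only [empty_union, fiber_empty] using hcore hT'
  obtain rfl | hT' := eq_or_ne T' ∅
  · simpa only [union_empty, fiber_empty, sups_comm] using hcore hT
  have hTT' : T ∪ T' ≠ ∅ := fun h => hT (union_eq_empty.1 h).1
  simp only [sups_subset_iff, mem_fiber hT, mem_fiber hT', mem_fiber hTT', mem_union, not_or]
  exact fun X hX X' hX' => ⟨union_subset hX.1 hX'.1, fun k hk =>
    (h𝓑 k).sups_self_subset (sup_mem_sups (hX.2 k hk.1) (hX'.2 k hk.2))⟩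

lemma excess_glue_tails (hC : C ⊆ V.powerset) (h𝓑 : ∀ k, 𝓑 k ⊆ V.powerset)
    (he : Disjoint V (univ.map e)) {x : α} (hx : x ∈ V) :
    excess (glue (tails e) (fiber V C 𝓑 e)) x = excess C x + ∑ k, excess (𝓑 k) x := by
  rw [excess_glue (fiber_subset_powerset hC) (fun T hT => he.mono_right (subset_of_mem_tails hT))
    hx, sum_tails, fiber_empty, fiber_full, excess_powerset_of_mem hx, zero_add]
  simp only [fiber_erase (h𝓑 _)]

end Gadget

section NotFC

lemma exists_embedding_disjoint_map_s11 (κ : Type*) [Fintype κ] (V : Finset ℕ) :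
    ∃ e : κ ↪ ℕ, Disjoint V (univ.map e) := by
  have : Infinite {n // n ∉ V} := V.finite_toSet.infinite_compl.to_subtype
  let e : κ ↪ {n // n ∉ V} :=
    (Fintype.equivFin κ).toEmbedding.trans (Fin.valEmbedding.trans (Infinite.natEmbedding _))
  refine ⟨e.trans (Function.Embedding.subtype _), disjoint_right.2 fun n hn => ?_⟩
  obtain ⟨k, -, rfl⟩ := mem_map.1 hn
  exact (e k).2

lemma famUniverse_subset {A : Finset (Finset ℕ)} {V : Finset ℕ} (hA : A ⊆ V.powerset) :
    famUniverse A ⊆ V :=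
  Finset.sup_le fun _ hS => mem_powerset.1 (hA hS)

variable {V : Finset ℕ} {A C : Finset (Finset ℕ)}

theorem not_isFC_of_excess_add_sum_neg {κ : Type*} [Fintype κ] {𝓑 : κ → Finset (Finset ℕ)}
    (hAC : A ⊆ C) (hC : IsUnionModule_s11 V C C) (h𝓑 : ∀ k, IsUnionModule_s11 V C (𝓑 k))
    (hneg : ∀ x ∈ V, excess C x + ∑ k, excess (𝓑 k) x < 0) : ¬ IsFC A := by
  intro hFC
  obtain ⟨e, he⟩ := exists_embedding_disjoint_map_s11 (Option κ) V
  have hAF : A ⊆ glue (tails e) (fiber V C 𝓑 e) := fun S hS =>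
    mem_glue.2 ⟨∅, mem_tails.2 (.inl rfl), S, by rw [fiber_empty]; exact hAC hS, union_empty S⟩
  have hnonempty : (glue (tails e) (fiber V C 𝓑 e)).Nonempty :=
    ⟨_, mem_glue.2 ⟨univ.map e, mem_tails.2 (.inr (.inl rfl)), ∅,
      by rw [fiber_full]; exact empty_mem_powerset V, rfl⟩⟩
  obtain ⟨x, hxA, hx⟩ := hFC _
    ⟨hnonempty, union_mem_glue union_mem_tails (fiber_sups_fiber_subset hC h𝓑)⟩ hAF
  have hxV : x ∈ V := famUniverse_subset (hAC.trans hC.subset_powerset) hxA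
  rw [← excess_nonneg_iff, excess_glue_tails hC.subset_powerset
    (fun k => (h𝓑 k).subset_powerset) he hxV] at hx
  exact hx.not_gt (hneg x hxV)

theorem not_isFC_of_weighted_excess_neg {ι : Type*} [Fintype ι] {𝓑 : ι → Finset (Finset ℕ)}
    (w : ι → ℕ) (hAC : A ⊆ C) (hC : IsUnionModule_s11 V C C) (h𝓑 : ∀ i, IsUnionModule_s11 V C (𝓑 i))
    (hneg : ∀ x ∈ V, ∑ i, w i * excess (𝓑 i) x < 0) : ¬ IsFC A := by
  -- Enough copies of the weighted fibres outweigh the fixed contribution of `C`.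
  set N := #C + 1
  refine not_isFC_of_excess_add_sum_neg (κ := Σ i, Fin (N * w i)) (𝓑 := fun k => 𝓑 k.1) hAC hC
    (fun k => h𝓑 k.1) fun x hx => ?_
  have hsum : ∑ k : Σ i, Fin (N * w i), excess (𝓑 k.1) x = N * ∑ i, w i * excess (𝓑 i) x := by
    simp [Fintype.sum_sigma, mul_sum, mul_assoc]
  have hC_lt : excess C x < N := by
    have := card_filter_le C (x ∈ ·)
    rw [excess_eq]
    lia
  rw [hsum]
  nlinarith [hneg x hx]

end NotFC

section RestrictAt

variable {α : Type*} [DecidableEq α] {V : Finset α} {C : Finset (Finset α)}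

/-- The subsets of `V` that can contain `i` only if they belong to `C`. -/
def restrictAt (V : Finset α) (C : Finset (Finset α)) (i : α) : Finset (Finset α) :=
  {X ∈ V.powerset | i ∈ X → X ∈ C}

lemma isUnionModule_self_of_upper (hCV : C ⊆ V.powerset)
    (hup : ∀ X ∈ C, ∀ Z ⊆ V, X ⊆ Z → Z ∈ C) : IsUnionModule_s11 V C C := by
  have hsup : C ⊻ C ⊆ C := sups_subset_iff.2 fun X hX X' hX' => hup X hX _
    (union_subset (mem_powerset.1 (hCV hX)) (mem_powerset.1 (hCV hX'))) subset_union_left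
  exact ⟨hCV, hsup, hsup⟩

lemma isUnionModule_restrictAt (hCV : C ⊆ V.powerset) (hup : ∀ X ∈ C, ∀ Z ⊆ V, X ⊆ Z → Z ∈ C)
    (i : α) : IsUnionModule_s11 V C (restrictAt V C i) where
  subset_powerset := filter_subset _ _
  sups_self_subset := by
    simp only [sups_subset_iff, restrictAt, mem_filter, mem_powerset, sup_eq_union]
    intro X hX X' hX'
    have hunion := union_subset hX.1 hX'.1
    refine ⟨hunion, fun hi => ?_⟩
    obtain hi | hi := mem_union.1 hi
    · exact hup X (hX.2 hi) _ hunion subset_union_left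
    · exact hup X' (hX'.2 hi) _ hunion subset_union_right
  sups_subset := by
    simp only [sups_subset_iff, restrictAt, mem_filter, mem_powerset, sup_eq_union]
    intro X hX X' hX'
    have hunion := union_subset (mem_powerset.1 (hCV hX)) hX'.1
    exact ⟨hunion, fun _ => hup X hX _ hunion subset_union_left⟩

lemma excess_restrictAt (hCV : C ⊆ V.powerset) (i x : α) :
    excess (restrictAt V C i) x =
      (∑ X ∈ C, if i ∈ X then memSign x X else 0) + excess (V.erase i).powerset x := by
  have hsplit : restrictAt V C i = {X ∈ C | i ∈ X} ∪ (V.erase i).powerset := by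
    ext X
    have := @hCV X
    simp only [restrictAt, mem_filter, mem_powerset, mem_union, subset_erase] at this ⊢
    tauto
  have hdisj : Disjoint {X ∈ C | i ∈ X} (V.erase i).powerset := by
    simp only [disjoint_left, mem_filter, mem_powerset, subset_erase]
    tauto
  rw [hsplit, excess, sum_union hdisj, sum_filter, excess]

lemma excess_powerset_erase {x : α} (hx : x ∈ V) (i : α) :
    excess (V.erase i).powerset x = if i = x then -2 ^ #(V.erase x) else 0 := by
  split_ifs with h
  · subst h
    exact excess_powerset_of_notMem (notMem_erase i V)
  · exact excess_powerset_of_mem (mem_erase.2 ⟨Ne.symm h, hx⟩)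

lemma sum_mul_excess_restrictAt (hCV : C ⊆ V.powerset) (w : α → ℤ) {x : α} (hx : x ∈ V) :
    ∑ i ∈ V, w i * excess (restrictAt V C i) x =
      ∑ X ∈ C, memSign x X * ∑ i ∈ X, w i - 2 ^ #(V.erase x) * w x := by
  have hdouble : ∑ i ∈ V, ∑ X ∈ C, (if i ∈ X then w i * memSign x X else 0) =
      ∑ X ∈ C, memSign x X * ∑ i ∈ X, w i := by
    rw [sum_comm]
    refine sum_congr rfl fun X hX => ?_
    rw [← sum_filter, filter_mem_eq_inter, inter_eq_right.2 (mem_powerset.1 (hCV hX)), mul_sum]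
    exact sum_congr rfl fun i _ => mul_comm _ _
  simp only [excess_restrictAt hCV, excess_powerset_erase hx, mul_add, sum_add_distrib, mul_sum,
    mul_ite, mul_zero, sum_ite_eq', hx, if_true]
  rw [hdouble]
  simp only [mul_sum]
  ring

end RestrictAt

theorem not_isFC_of_weighted_sum_lt {V : Finset ℕ} {A C : Finset (Finset ℕ)} (w : ℕ → ℕ)
    (hAC : A ⊆ C) (hCV : C ⊆ V.powerset) (hup : ∀ X ∈ C, ∀ Z ⊆ V, X ⊆ Z → Z ∈ C)
    (hlt : ∀ x ∈ V, ∑ X ∈ C, memSign x X * ∑ i ∈ X, (w i : ℤ) < 2 ^ #(V.erase x) * w x) :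
    ¬ IsFC A := by
  refine not_isFC_of_weighted_excess_neg (ι := V) (𝓑 := fun i => restrictAt V C i)
    (fun i => w i) hAC (isUnionModule_self_of_upper hCV hup)
    (fun i => isUnionModule_restrictAt hCV hup i) fun x hx => ?_
  rw [sum_coe_sort V fun i => w i * excess (restrictAt V C i) x,
    sum_mul_excess_restrictAt hCV (fun i => w i) hx]
  exact sub_neg.2 (hlt x hx)

section StarFamily

variable {α : Type*} [DecidableEq α] {a : α} {U : Finset α} {k : ℕ}

/-- The star with apex `a` over `U`: the sets `{a} ∪ Z` with `Z` an `r`-subset of `U`. -/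
def starFamily (a : α) (U : Finset α) (r : ℕ) : Finset (Finset α) :=
  (powersetCard r U).image (insert a)

/-- The sets `{a} ∪ Z` with `Z ⊆ U` of more than `k` elements, that is, the subsets of
`insert a U` including a member of `starFamily a U (k + 1)`. -/
def upperStarFamily (a : α) (U : Finset α) (k : ℕ) : Finset (Finset α) :=
  {Z ∈ U.powerset | k < #Z}.image (insert a)

lemma injOn_insert_powerset (ha : a ∉ U) : Set.InjOn (insert a) (U.powerset : Set (Finset α)) :=
  insert_erase_invOn.2.injOn.mono fun _ hZ => notMem_mono (mem_powerset.1 hZ) ha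

lemma card_starFamily (ha : a ∉ U) (r : ℕ) : #(starFamily a U r) = (#U).choose r := by
  have hinj : Set.InjOn (insert a) (powersetCard r U : Set (Finset α)) :=
    (injOn_insert_powerset ha).mono fun _ hZ => mem_powerset.2 (mem_powersetCard.1 hZ).1
  rw [starFamily, card_image_of_injOn hinj, card_powersetCard]

lemma card_eq_and_subset_of_mem_starFamily (ha : a ∉ U) {r : ℕ} {S : Finset α}
    (hS : S ∈ starFamily a U r) : #S = r + 1 ∧ S ⊆ insert a U := by
  obtain ⟨Z, hZ, rfl⟩ := mem_image.1 hS
  obtain ⟨hZU, rfl⟩ := mem_powersetCard.1 hZ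
  exact ⟨card_insert_of_notMem (notMem_mono hZU ha), insert_subset_insert a hZU⟩

lemma sup_starFamily (hk : k < #U) : (starFamily a U (k + 1)).sup id = insert a U := by
  have hne : (powersetCard (k + 1) U).Nonempty := powersetCard_nonempty.2 hk
  calc (starFamily a U (k + 1)).sup id
      = (powersetCard (k + 1) U).sup ((fun _ => {a}) ⊔ id) := by
        rw [starFamily, sup_image]; rfl
    _ = insert a U := by rw [sup_sup, sup_const hne, powersetCard_sup U k hk]; rfl

lemma starFamily_subset_upperStarFamily : starFamily a U (k + 1) ⊆ upperStarFamily a U k :=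
  image_subset_image fun Z hZ => by
    rw [mem_powersetCard] at hZ
    exact mem_filter.2 ⟨mem_powerset.2 hZ.1, by lia⟩

lemma upperStarFamily_subset_powerset : upperStarFamily a U k ⊆ (insert a U).powerset := by
  simp only [upperStarFamily, image_subset_iff, mem_filter, mem_powerset]
  exact fun Z hZ => insert_subset_insert a hZ.1

lemma mem_upperStarFamily_of_subset (ha : a ∉ U) :
    ∀ X ∈ upperStarFamily a U k, ∀ Z ⊆ insert a U, X ⊆ Z → Z ∈ upperStarFamily a U k := by
  simp only [upperStarFamily, mem_filter, mem_powerset, mem_image]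
  rintro _ ⟨X, hX, rfl⟩ Z hZ hXZ
  obtain ⟨haZ, hXZ⟩ := insert_subset_iff.1 hXZ
  have hX_le : #X ≤ #(Z.erase a) :=
    card_le_card (subset_erase.2 ⟨hXZ, notMem_mono hX.1 ha⟩)
  exact ⟨Z.erase a, ⟨subset_insert_iff.1 hZ, hX.2.trans_le hX_le⟩, insert_erase haZ⟩

lemma sum_upperStarFamily {M : Type*} [AddCommMonoid M] (ha : a ∉ U) (f : Finset α → M) :
    ∑ X ∈ upperStarFamily a U k, f X =
      ∑ s ∈ Ico k #U, ∑ Z ∈ powersetCard (s + 1) U, f (insert a Z) := by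
  have hinj := (injOn_insert_powerset ha).mono (coe_subset.2 (filter_subset (k < #·) U.powerset))
  have hmaps : ∀ Z ∈ U.powerset.filter (k < #·), #Z - 1 ∈ Ico k #U := fun Z hZ => by
    have hZ := mem_filter.1 hZ
    have := card_le_card (mem_powerset.1 hZ.1)
    rw [mem_Ico]
    lia
  rw [upperStarFamily, sum_image hinj, ← sum_fiberwise_of_maps_to hmaps]
  refine sum_congr rfl fun s hs => sum_congr ?_ fun _ _ => rfl
  ext Z
  have := (mem_Ico.1 hs).1
  simp only [mem_filter, mem_powerset, mem_powersetCard]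
  lia

lemma sum_ite_insert_apex (ha : a ∉ U) (b c : ℤ) {Z : Finset α} (hZ : Z ⊆ U) :
    ∑ i ∈ insert a Z, (if i = a then b else c) = b + c * #Z := by
  have haZ : a ∉ Z := notMem_mono hZ ha
  rw [sum_insert haZ, if_pos rfl, sum_congr rfl fun i hi => by
    rw [if_neg (ne_of_mem_of_not_mem hi haZ)]]
  rw [sum_const, nsmul_eq_mul, mul_comm]

lemma sum_upperStarFamily_memSign_mul (ha : a ∉ U) (b c : ℤ) (x : α) :
    ∑ X ∈ upperStarFamily a U k, memSign x X * ∑ i ∈ X, (if i = a then b else c) =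
      ∑ s ∈ Ico k #U, (∑ Z ∈ powersetCard (s + 1) U, memSign x (insert a Z)) *
        (b + c * (s + 1)) := by
  rw [sum_upperStarFamily ha]
  refine sum_congr rfl fun s _ => ?_
  rw [sum_mul]
  refine sum_congr rfl fun Z hZ => ?_
  obtain ⟨hZU, hcard⟩ := mem_powersetCard.1 hZ
  rw [sum_ite_insert_apex ha b c hZU, hcard]
  push_cast
  rfl

theorem not_isFC_starFamily {a : ℕ} {U : Finset ℕ} {k : ℕ} (ha : a ∉ U) (b c : ℕ)
    (hapex : ∑ s ∈ Ico k #U, ((#U).choose (s + 1) : ℤ) * (b + c * (s + 1)) < 2 ^ #U * b)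
    (hbase : ∑ s ∈ Ico k #U,
      ((#U - 1).choose s - (#U - 1).choose (s + 1) : ℤ) * (b + c * (s + 1)) < 2 ^ #U * c) :
    ¬ IsFC (starFamily a U (k + 1)) := by
  refine not_isFC_of_weighted_sum_lt (fun i => if i = a then b else c)
    starFamily_subset_upperStarFamily upperStarFamily_subset_powerset
    (mem_upperStarFamily_of_subset ha) fun x hx => ?_
  have hpow : #((insert a U).erase x) = #U := by
    rw [card_erase_of_mem hx, card_insert_of_notMem ha, Nat.add_sub_cancel]
  simp only [hpow, Nat.cast_ite, sum_upperStarFamily_memSign_mul ha]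
  obtain rfl | hxU := mem_insert.1 hx
  · simpa [memSign_insert_self] using hapex
  · have hxa : x ≠ a := ne_of_mem_of_not_mem hxU ha
    have hsign (s : ℕ) : ∑ Z ∈ powersetCard (s + 1) U, memSign x (insert a Z) =
        (#U - 1).choose s - (#U - 1).choose (s + 1) := by
      rw [← excess_powersetCard_succ hxU, excess]
      exact sum_congr rfl fun Z _ => memSign_congr (by simp [hxa])
    simpa only [hsign, if_neg hxa] using hbase

lemma isKFamily_starFamily {n k : ℕ} (hk : k < n) :
    IsKFamily (k + 2) (n + 1) (starFamily (n + 1) (Icc 1 n) (k + 1)) := by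
  have hIcc : insert (n + 1) (Icc 1 n) = Icc 1 (n + 1) := insert_Icc_right_eq_Icc_add_one (by lia)
  rw [IsKFamily, famUniverse, ← hIcc]
  exact ⟨fun S hS => card_eq_and_subset_of_mem_starFamily (by simp) hS,
    sup_starFamily (by simpa using hk)⟩

end StarFamily

/-- FC(7, 10) ≥ 85: there is a Non-FC family of 84 distinct 7-element subsets of
{1, …, 10} with universe {1, …, 10}. -/
theorem FC_lower_bound_7_10 :
    ∃ A : Finset (Finset ℕ), A.card = 84 ∧ IsKFamily 7 10 A ∧ ¬ IsFC A := by
  refine ⟨starFamily 10 (Icc 1 9) 6, ?_, isKFamily_starFamily (by norm_num), ?_⟩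
  · rw [card_starFamily (by simp), Nat.card_Icc]
    rfl
  · -- Weights `b` at `10` and `c` elsewhere work when `837 * c < 382 * b` and `56 * b < 139 * c`.
    exact not_isFC_starFamily (by simp) 9 4 (by decide) (by decide)
end

section
/- For every integer n > 8, FC(6, n) exists and FC(6, n) ≤ 1 + ⌈(5/4032) · n(n−1)(n−2)(n−3)(n−4)(n−5)⌉; that is, every family of 1 + ⌈(5/4032) · n(n−1)(n−2)(n−3)(n−4)(n−5)⌉ distinct 6-element subsets of {1,…,n} whose universe equals {1,…,n} is FC. -/
/-!
Let `Z` be a set of nine points containing at least 76 = 84 - 8 members of `A` of size six, and let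
`F ⊇ A` be union-closed. Split `F` into fibers according to the trace of its members outside `Z`.
Each fiber is a union-closed family on `Z`, and remains so after taking unions with the six-sets of
`A` inside `Z`. If every fiber `𝓑` has nonnegative surplus `∑ S ∈ 𝓑, (2|S| - 9)`, then the elements
of `Z` lie on average in at least half of the members of `F`, so one of them does.

To bound the surplus, replace the large levels of `𝓑` by those of the up-set it generates and
compare proportions of levels under a random permutation of `Z`. What is lost by this replacement
are the supersets `V` of members of `𝓑` that are not in `𝓑`. The union of all members of `𝓑` inside
such a `V` misses some `x ∈ V`, so no set `K` with `x ∈ K ⊆ V` is in `A`; as only eight six-sets are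
missing, there are at most eight such `V` of size six, at most one of size seven and none larger.
If there is one at all, there is slack in the comparison of levels: either the up-set contains every
set of size at least six, while the sets `K` above are absent from the low levels of `𝓑`, or it
omits some set of size six or more, which leaves at most three singletons in `𝓑`. This slack makes
up for the loss.

Finally, a family containing more than 75/84 of all six-subsets of an `n`-set contains, by averaging
over the nine-subsets, more than 75 of the six-subsets of one of them.
-/

namespace FranklComplete

open Finset Fintype Equiv
open scoped FinsetFamily Pointwise Nat

section Stars
variable {α : Type*} [DecidableEq α] {V : Finset α}

theorem card_filter_mem_powersetCard_succ {x : α} (hx : x ∈ V) (k : ℕ) :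
    #{K ∈ powersetCard (k + 1) V | x ∈ K} = (#V - 1).choose k := by
  simpa using card_filter_powersetCard_subset {x} V (k + 1) (by simpa using hx) (by simp)

theorem two_mul_le_card_star_union_star_add_one {W : Finset α} {x y : α} {k : ℕ}
    (hVW : V ≠ W) (hV : #V = k + 1) (hW : #W = k + 1) (hx : x ∈ V) (hy : y ∈ W) :
    2 * k ≤ #({K ∈ powersetCard k V | x ∈ K} ∪ {K ∈ powersetCard k W | y ∈ K}) + 1 := by
  obtain _ | k := k
  · simp
  have hinter : #({K ∈ powersetCard (k + 1) V | x ∈ K} ∩ {K ∈ powersetCard (k + 1) W | y ∈ K})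
      ≤ (#(V ∩ W)).choose (k + 1) := by
    rw [← card_powersetCard]
    refine card_le_card fun K hK => ?_
    simp only [mem_inter, mem_filter, mem_powersetCard] at hK ⊢
    exact ⟨subset_inter hK.1.1.1 hK.2.1.1, hK.1.1.2⟩
  have hVW_card : #(V ∩ W) ≤ k + 1 := by
    have hne : V ∩ W ≠ V := fun h =>
      hVW (eq_of_subset_of_card_le (inter_eq_left.1 h) (hW.trans hV.symm).le)
    have := card_lt_card (inter_subset_left.ssubset_of_ne hne)
    lia
  have hle_one := hinter.trans (Nat.choose_le_choose _ hVW_card)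
  have hcardV := card_filter_mem_powersetCard_succ hx k
  have hcardW := card_filter_mem_powersetCard_succ hy k
  simp only [hV, hW, Nat.add_sub_cancel, Nat.choose_succ_self_right, Nat.choose_self]
    at hcardV hcardW hle_one
  have := card_union_add_card_inter
    {K ∈ powersetCard (k + 1) V | x ∈ K} {K ∈ powersetCard (k + 1) W | y ∈ K}
  lia

end Stars

section Surplus
variable {α : Type*} [Fintype α] {𝓑 : Finset (Finset α)}

/-- The surplus of a family over its ground type: the number of incidences `x ∈ S` with `S ∈ 𝓑`
minus the number of non-incidences. If it is nonnegative, the average element lies in at least half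
of the members of `𝓑`. -/
def surplus (𝓑 : Finset (Finset α)) : ℤ := ∑ S ∈ 𝓑, (2 * (#S : ℤ) - card α)

theorem surplus_eq_sum_slice (𝓑 : Finset (Finset α)) :
    surplus 𝓑 = ∑ k ∈ range (card α + 1), #(𝓑 # k) * (2 * (k : ℤ) - card α) := by
  have hmaps : ∀ S ∈ 𝓑, #S ∈ range (card α + 1) := fun S _ =>
    mem_range_succ_iff.2 (card_le_univ S)
  simp only [surplus, ← sum_fiberwise_of_maps_to' hmaps fun k : ℕ => 2 * (k : ℤ) - card α,
    sum_const, nsmul_eq_mul, slice]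

theorem card_slice_eq_choose {k : ℕ} (h : ∀ S : Finset α, #S = k → S ∈ 𝓑) :
    #(𝓑 # k) = (card α).choose k := by
  rw [← card_univ, ← card_powersetCard]
  congr 1
  ext S
  simp only [mem_slice, mem_powersetCard_univ, and_iff_right_iff_imp]
  exact h S

theorem card_slice_add_choose_le {V : Finset α} {x : α} (hx : x ∈ V)
    (h : ∀ K ⊆ V, x ∈ K → K ∉ 𝓑) (k : ℕ) :
    #(𝓑 # (k + 1)) + (#V - 1).choose k ≤ (card α).choose (k + 1) := by
  classical
  have hdisj : Disjoint (𝓑 # (k + 1)) {K ∈ powersetCard (k + 1) V | x ∈ K} := by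
    refine disjoint_left.2 fun K hK hKV => ?_
    simp only [mem_filter, mem_powersetCard] at hKV
    exact h K hKV.1.1 hKV.2 (slice_subset hK)
  rw [← card_filter_mem_powersetCard_succ hx, ← card_union_of_disjoint hdisj, ← card_univ,
    ← card_powersetCard]
  refine card_le_card fun K hK => mem_powersetCard_univ.2 ?_
  simp only [mem_union, mem_slice, mem_filter, mem_powersetCard] at hK
  tauto

end Surplus

section Slices
variable {α : Type*} [Fintype α] [DecidableEq α] {𝓑 : Finset (Finset α)} {V : Finset α}

/-- The proportion of the `k`-element subsets of `α` that belong to `𝓑`. It is the probability that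
a uniformly random permutation sends a fixed `k`-element set into `𝓑`. For `card α < k` it takes the
junk value `0 / 0 = 0`. -/
def sliceDensity (𝓑 : Finset (Finset α)) (k : ℕ) : ℚ≥0 := #(𝓑 # k) / (card α).choose k

/-- The up-set generated by `𝓑` in the finite power set of `α`, as a `Finset`; `upperClosure` is its
analogue for `Set`. -/
def upClosure (𝓑 : Finset (Finset α)) : Finset (Finset α) := {V | ∃ S ∈ 𝓑, S ⊆ V}

theorem card_perm_smul_mem_congr (𝓑 : Finset (Finset α)) {I J : Finset α} (h : #I = #J) :
    #{σ : Perm α | σ • I ∈ 𝓑} = #{σ : Perm α | σ • J ∈ 𝓑} := by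
  have := Set.powersetCard.isPretransitive (α := α) (n := #I)
  obtain ⟨τ, hτ⟩ := MulAction.exists_smul_eq (Perm α)
    (⟨J, h.symm⟩ : Set.powersetCard α #I) ⟨I, rfl⟩
  obtain rfl : τ • J = I := congrArg Subtype.val hτ
  exact card_bijective (· * τ) (Group.mulRight_bijective τ) fun σ => by simp [mul_smul]

theorem card_filter_smul_mem (𝓑 : Finset (Finset α)) (σ : Perm α) (k : ℕ) :
    #{J ∈ powersetCard k univ | σ • J ∈ 𝓑} = #(𝓑 # k) :=
  card_bijective (σ • ·) (MulAction.bijective σ) fun J => by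
    simp [mem_slice, and_comm]

theorem choose_mul_card_perm_smul_mem (𝓑 : Finset (Finset α)) (I : Finset α) :
    (card α).choose #I * #{σ : Perm α | σ • I ∈ 𝓑} = (card α)! * #(𝓑 # #I) := by
  have := card_mul_eq_card_mul (fun (J : Finset α) (σ : Perm α) => σ • J ∈ 𝓑)
    (s := powersetCard #I univ) (t := univ)
    (fun J hJ => card_perm_smul_mem_congr 𝓑 (mem_powersetCard_univ.1 hJ))
    (fun σ _ => card_filter_smul_mem 𝓑 σ #I)
  simpa [Fintype.card_perm] using this

theorem dens_perm_smul_mem (𝓑 : Finset (Finset α)) (I : Finset α) :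
    dens {σ : Perm α | σ • I ∈ 𝓑} = sliceDensity 𝓑 #I := by
  have hchoose : 0 < (card α).choose #I := Nat.choose_pos (card_le_univ I)
  rw [dens, sliceDensity, Fintype.card_perm, div_eq_div_iff (by positivity) (by positivity)]
  exact_mod_cast by linarith [choose_mul_card_perm_smul_mem 𝓑 I]

theorem sliceDensity_le_upClosure (𝓑 : Finset (Finset α)) {k l : ℕ} (hkl : k ≤ l)
    (hl : l ≤ card α) : sliceDensity 𝓑 k ≤ sliceDensity (upClosure 𝓑) l := by
  obtain ⟨L, hL⟩ := exists_subset_card_eq (s := (univ : Finset α)) hl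
  obtain ⟨K, hKL, rfl⟩ := exists_subset_card_eq (hL.2.symm ▸ hkl)
  rw [← hL.2, ← dens_perm_smul_mem, ← dens_perm_smul_mem]
  refine dens_le_dens fun σ hσ => ?_
  simp only [upClosure, mem_filter_univ] at hσ ⊢
  exact ⟨_, hσ, smul_finset_subset_smul_finset hKL⟩

theorem card_slice_mul_choose_le_upClosure (𝓑 : Finset (Finset α)) {k l : ℕ}
    (hkl : k ≤ l) (hl : l ≤ card α) :
    #(𝓑 # k) * (card α).choose l ≤ #((upClosure 𝓑) # l) * (card α).choose k := by
  have hk_pos : 0 < (card α).choose k := Nat.choose_pos (hkl.trans hl)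
  have hl_pos : 0 < (card α).choose l := Nat.choose_pos hl
  have h := sliceDensity_le_upClosure 𝓑 hkl hl
  rw [sliceDensity, sliceDensity, div_le_div_iff₀ (by positivity) (by positivity)] at h
  exact_mod_cast h

/-- With `J` and `K` disjoint subsets of `L`, of sizes `j`, `k` and `l`, and `σ` a random
permutation, `σ • L ∈ upClosure 𝓑` as soon as one of `σ • J`, `σ • K` is in `𝓑`, and
`σ • (J ∪ K) ∈ 𝓑` as soon as both are. -/
theorem sliceDensity_add_le (h𝓑 : SupClosed (𝓑 : Set (Finset α))) {j k l : ℕ}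
    (hjkl : j + k ≤ l) (hl : l ≤ card α) :
    sliceDensity 𝓑 j + sliceDensity 𝓑 k
      ≤ sliceDensity (upClosure 𝓑) l + sliceDensity 𝓑 (j + k) := by
  obtain ⟨L, -, rfl⟩ := exists_subset_card_eq (s := (univ : Finset α)) hl
  obtain ⟨M, hML, hM⟩ := exists_subset_card_eq hjkl
  obtain ⟨J, hJM, rfl⟩ := exists_subset_card_eq (hM.symm ▸ Nat.le_add_right j k)
  obtain rfl : #(M \ J) = k := by rw [card_sdiff_of_subset hJM, hM, Nat.add_sub_cancel_left]
  have hJL : J ⊆ L := hJM.trans hML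
  have hKL : M \ J ⊆ L := sdiff_subset.trans hML
  simp only [← hM, ← dens_perm_smul_mem]
  rw [← dens_union_add_dens_inter]
  gcongr
  · intro σ hσ
    simp only [upClosure, mem_union, mem_filter_univ] at hσ ⊢
    rcases hσ with h | h
    · exact ⟨_, h, smul_finset_subset_smul_finset hJL⟩
    · exact ⟨_, h, smul_finset_subset_smul_finset hKL⟩
  · intro σ hσ
    simp only [mem_inter, mem_filter_univ] at hσ ⊢
    have := h𝓑 hσ.1 hσ.2
    rwa [sup_eq_union, ← smul_finset_union, union_sdiff_of_subset hJM] at this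

theorem card_slice_add_card_slice_upClosure_sdiff (𝓑 : Finset (Finset α)) (k : ℕ) :
    #(𝓑 # k) + #((upClosure 𝓑 \ 𝓑) # k) = #((upClosure 𝓑) # k) := by
  have hsub : 𝓑 # k ⊆ (upClosure 𝓑) # k :=
    filter_subset_filter _ fun S hS => mem_filter_univ _ |>.2 ⟨S, hS, Subset.rfl⟩
  rw [← card_sdiff_add_card_eq_card hsub, add_comm]
  congr 2
  ext S
  simp only [mem_slice, mem_sdiff]
  tauto

theorem choose_le_card_slice_upClosure {S : Finset α} (hS : S ∈ 𝓑) {k : ℕ} (hk : #S ≤ k) :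
    (card α - #S).choose (k - #S) ≤ #((upClosure 𝓑) # k) := by
  rw [← card_univ, ← card_filter_powersetCard_subset S univ k (subset_univ S) hk]
  refine card_le_card fun V hV => ?_
  simp only [mem_filter, mem_powersetCard_univ] at hV
  exact mem_slice.2 ⟨mem_filter_univ _ |>.2 ⟨S, hS, hV.2⟩, hV.1⟩

theorem card_slice_one_le_of_notMem_upClosure (hV : V ∉ upClosure 𝓑) :
    #(𝓑 # 1) ≤ card α - #V := by
  rw [← card_compl, ← Nat.choose_one_right #Vᶜ, ← card_powersetCard]
  refine card_le_card fun S hS => mem_powersetCard.2 ⟨?_, (mem_slice.1 hS).2⟩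
  obtain ⟨hS𝓑, hScard⟩ := mem_slice.1 hS
  obtain ⟨a, rfl⟩ := card_eq_one.1 hScard
  simp only [upClosure, mem_filter_univ, not_exists, not_and] at hV
  simpa using hV _ hS𝓑

section Missing
variable {𝓐 : Finset (Finset α)}

/-- The witness `x` is any point of `V` outside the largest member of `𝓑` contained in `V`. -/
theorem exists_mem_forall_subset_notMem (h𝓑 : SupClosed (𝓑 : Set (Finset α)))
    (h𝓐 : ∀ S ∈ 𝓑, ∀ K ∈ 𝓐, S ∪ K ∈ 𝓑) (hV : V ∈ upClosure 𝓑 \ 𝓑) :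
    ∃ x ∈ V, ∀ K ⊆ V, x ∈ K → K ∉ 𝓑 ∧ K ∉ 𝓐 := by
  simp only [upClosure, mem_sdiff, mem_filter_univ] at hV
  obtain ⟨⟨S, hS, hSV⟩, hV𝓑⟩ := hV
  have hne : {T ∈ 𝓑 | T ⊆ V}.Nonempty := ⟨S, mem_filter.2 ⟨hS, hSV⟩⟩
  set M := {T ∈ 𝓑 | T ⊆ V}.sup' hne id
  have le_M : ∀ T ∈ 𝓑, T ⊆ V → T ⊆ M := fun T hT hTV => le_sup' id (mem_filter.2 ⟨hT, hTV⟩)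
  have hM𝓑 : M ∈ 𝓑 := h𝓑.finsetSup'_mem hne fun T hT => (mem_filter.1 hT).1
  have hMV : M ⊆ V := sup'_le hne id fun T hT => (mem_filter.1 hT).2
  obtain ⟨x, hxV, hxM⟩ := exists_of_ssubset (hMV.ssubset_of_ne fun h => hV𝓑 (h ▸ hM𝓑))
  refine ⟨x, hxV, fun K hKV hxK => ⟨fun hK => hxM (le_M K hK hKV hxK), fun hK => hxM ?_⟩⟩
  exact le_M _ (h𝓐 S hS K hK) (union_subset hSV hKV) (mem_union_right S hxK)

theorem card_slice_upClosure_sdiff_le (h𝓑 : SupClosed (𝓑 : Set (Finset α)))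
    (h𝓐 : ∀ S ∈ 𝓑, ∀ K ∈ 𝓐, S ∪ K ∈ 𝓑) (k : ℕ) :
    #((upClosure 𝓑 \ 𝓑) # k) ≤ #(powersetCard k univ \ 𝓐) := by
  refine card_le_card fun V hV => ?_
  obtain ⟨hV𝓑, hVk⟩ := mem_slice.1 hV
  obtain ⟨x, hx, hxV⟩ := exists_mem_forall_subset_notMem h𝓑 h𝓐 hV𝓑
  exact mem_sdiff.2 ⟨mem_powersetCard_univ.2 hVk, (hxV V Subset.rfl hx).2⟩

theorem exists_filter_mem_powersetCard_subset (h𝓑 : SupClosed (𝓑 : Set (Finset α)))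
    (h𝓐 : ∀ S ∈ 𝓑, ∀ K ∈ 𝓐, S ∪ K ∈ 𝓑) (hV : V ∈ upClosure 𝓑 \ 𝓑) (k : ℕ) :
    ∃ x ∈ V, {K ∈ powersetCard k V | x ∈ K} ⊆ powersetCard k univ \ 𝓐 := by
  obtain ⟨x, hx, hxV⟩ := exists_mem_forall_subset_notMem h𝓑 h𝓐 hV
  refine ⟨x, hx, fun K hK => ?_⟩
  simp only [mem_filter, mem_powersetCard] at hK
  exact mem_sdiff.2 ⟨mem_powersetCard_univ.2 hK.1.2, (hxV K hK.1.1 hK.2).2⟩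

theorem choose_le_card_powersetCard_sdiff (h𝓑 : SupClosed (𝓑 : Set (Finset α)))
    (h𝓐 : ∀ S ∈ 𝓑, ∀ K ∈ 𝓐, S ∪ K ∈ 𝓑) (hV : V ∈ upClosure 𝓑 \ 𝓑) (k : ℕ) :
    (#V - 1).choose k ≤ #(powersetCard (k + 1) univ \ 𝓐) := by
  obtain ⟨x, hx, hsub⟩ := exists_filter_mem_powersetCard_subset h𝓑 h𝓐 hV (k + 1)
  exact (card_filter_mem_powersetCard_succ hx k).symm.trans_le (card_le_card hsub)

theorem card_slice_succ_upClosure_sdiff_le_one (h𝓑 : SupClosed (𝓑 : Set (Finset α)))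
    (h𝓐 : ∀ S ∈ 𝓑, ∀ K ∈ 𝓐, S ∪ K ∈ 𝓑) {k : ℕ}
    (hk : #(powersetCard k univ \ 𝓐) + 1 < 2 * k) :
    #((upClosure 𝓑 \ 𝓑) # (k + 1)) ≤ 1 := by
  refine card_le_one.2 fun V hV W hW => by_contra fun hVW => hk.not_ge ?_
  obtain ⟨hV𝓑, hVk⟩ := mem_slice.1 hV
  obtain ⟨hW𝓑, hWk⟩ := mem_slice.1 hW
  obtain ⟨x, hx, hVsub⟩ := exists_filter_mem_powersetCard_subset h𝓑 h𝓐 hV𝓑 k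
  obtain ⟨y, hy, hWsub⟩ := exists_filter_mem_powersetCard_subset h𝓑 h𝓐 hW𝓑 k
  exact (two_mul_le_card_star_union_star_add_one hVW hVk hWk hx hy).trans
    (Nat.add_le_add_right (card_le_card (union_subset hVsub hWsub)) 1)

end Missing
end Slices

section NinePoints
variable {α : Type*} [Fintype α] [DecidableEq α] {𝓐 𝓑 : Finset (Finset α)}

theorem card_slice_le_upClosure_of_nine (hα : card α = 9) (𝓑 : Finset (Finset α)) :
    #(𝓑 # 0) ≤ #((upClosure 𝓑) # 9) ∧ #(𝓑 # 1) ≤ #((upClosure 𝓑) # 8) ∧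
      #(𝓑 # 2) ≤ #((upClosure 𝓑) # 7) ∧ 3 * #(𝓑 # 3) ≤ 7 * #((upClosure 𝓑) # 7) ∧
      2 * #(𝓑 # 4) ≤ 3 * #((upClosure 𝓑) # 6) := by
  have h09 := card_slice_mul_choose_le_upClosure 𝓑 (show 0 ≤ 9 by simp) hα.ge
  have h18 := card_slice_mul_choose_le_upClosure 𝓑 (show 1 ≤ 8 by simp) (by simp [hα])
  have h27 := card_slice_mul_choose_le_upClosure 𝓑 (show 2 ≤ 7 by simp) (by simp [hα])
  have h37 := card_slice_mul_choose_le_upClosure 𝓑 (show 3 ≤ 7 by simp) (by simp [hα])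
  have h46 := card_slice_mul_choose_le_upClosure 𝓑 (show 4 ≤ 6 by simp) (by simp [hα])
  simp only [hα, Nat.choose] at h09 h18 h27 h37 h46
  lia

theorem card_slice_two_three_le_of_nine (hα : card α = 9)
    (h𝓑 : SupClosed (𝓑 : Set (Finset α))) :
    7 * #(𝓑 # 2) + 3 * #(𝓑 # 3) ≤ 2 * #(𝓑 # 5) + 3 * #((upClosure 𝓑) # 6) := by
  have h := sliceDensity_add_le h𝓑 (show 2 + 3 ≤ 6 by simp) (by simp [hα])
  simp only [sliceDensity, hα] at h
  norm_num [Nat.choose] at h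
  have h' : (#(𝓑 # 2) / 36 + #(𝓑 # 3) / 84 : ℚ) ≤ #((upClosure 𝓑) # 6) / 84 + #(𝓑 # 5) / 126 := by
    exact_mod_cast h
  suffices (7 * #(𝓑 # 2) + 3 * #(𝓑 # 3) : ℚ) ≤ 2 * #(𝓑 # 5) + 3 * #((upClosure 𝓑) # 6) by
    exact_mod_cast this
  linarith

/-- A lower bound for twice the surplus of a union-closed family `𝓑` on nine points that contains
every set of size at least six having a member as a subset. It is obtained from the surplus, written
as a sum over levels, by eliminating level five through `card_slice_two_three_le_of_nine`; each
summand compares two levels and is nonnegative. -/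
def levelSlack (𝓑 : Finset (Finset α)) : ℤ :=
  18 * (#((upClosure 𝓑) # 9) - #(𝓑 # 0)) + 14 * (#((upClosure 𝓑) # 8) - #(𝓑 # 1)) +
    3 * (#((upClosure 𝓑) # 7) - #(𝓑 # 2)) + (7 * #((upClosure 𝓑) # 7) - 3 * #(𝓑 # 3)) +
    (3 * #((upClosure 𝓑) # 6) - 2 * #(𝓑 # 4))

theorem levelSlack_le (hα : card α = 9) (h𝓑 : SupClosed (𝓑 : Set (Finset α))) :
    levelSlack 𝓑 ≤ 2 * surplus 𝓑 + 6 * #((upClosure 𝓑 \ 𝓑) # 6) +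
      10 * #((upClosure 𝓑 \ 𝓑) # 7) + 14 * #((upClosure 𝓑 \ 𝓑) # 8) +
      18 * #((upClosure 𝓑 \ 𝓑) # 9) := by
  have h235 := card_slice_two_three_le_of_nine hα h𝓑
  have h6 := card_slice_add_card_slice_upClosure_sdiff 𝓑 6
  have h7 := card_slice_add_card_slice_upClosure_sdiff 𝓑 7
  have h8 := card_slice_add_card_slice_upClosure_sdiff 𝓑 8
  have h9 := card_slice_add_card_slice_upClosure_sdiff 𝓑 9
  rw [surplus_eq_sum_slice, hα]
  simp only [sum_range_succ, sum_range_zero, levelSlack]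
  push_cast
  lia

theorem levelSlack_nonneg (hα : card α = 9) (𝓑 : Finset (Finset α)) : 0 ≤ levelSlack 𝓑 := by
  have := card_slice_le_upClosure_of_nine hα 𝓑
  rw [levelSlack]
  lia

/-- The bound `58 = 6 * 8 + 10 * 1` is the largest possible deficit in `levelSlack_le` when eight
sets of size six and one set of size seven are missing from the up-closure. -/
theorem le_levelSlack_of_forall_mem_upClosure (hα : card α = 9)
    (hfull : ∀ W : Finset α, 6 ≤ #W → W ∈ upClosure 𝓑) {V : Finset α} (hV : 6 ≤ #V) {x : α}
    (hx : x ∈ V) (hxV : ∀ K ⊆ V, x ∈ K → K ∉ 𝓑) : 58 ≤ levelSlack 𝓑 := by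
  have hu : ∀ k, 6 ≤ k → #((upClosure 𝓑) # k) = (9).choose k := fun k hk =>
    hα ▸ card_slice_eq_choose fun W hW => hfull W (hW ▸ hk)
  have hb : ∀ k, #(𝓑 # (k + 1)) + (5).choose k ≤ (9).choose (k + 1) := fun k =>
    (Nat.add_le_add_left (Nat.choose_le_choose k (by lia)) _).trans
      (hα ▸ card_slice_add_choose_le hx hxV k)
  have h09 := (card_slice_le_upClosure_of_nine hα 𝓑).1
  have hb1 := hb 0
  have hb2 := hb 1
  have hb3 := hb 2
  have hb4 := hb 3
  rw [levelSlack, hu 6 (by simp), hu 7 (by simp), hu 8 (by simp)]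
  simp only [Nat.choose, zero_add, Nat.reduceAdd] at hb1 hb2 hb3 hb4 ⊢
  lia

theorem le_levelSlack_of_notMem_upClosure (hα : card α = 9) {V S : Finset α} (hV : 6 ≤ #V)
    (hV𝓑 : V ∉ upClosure 𝓑) (hS : S ∈ 𝓑) (hScard : #S ≤ 4) : 58 ≤ levelSlack 𝓑 := by
  have hu8 : ∀ T ∈ 𝓑, #T ≤ 8 → 9 ≤ #((upClosure 𝓑) # 8) + #T := fun T hT hT8 => by
    have h := choose_le_card_slice_upClosure hT hT8
    rw [hα, show 9 - #T = 8 - #T + 1 by lia, Nat.choose_succ_self_right] at h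
    lia
  have hu8_five := hu8 S hS (by lia)
  have hb1_le := card_slice_one_le_of_notMem_upClosure hV𝓑
  have hb1_or : #(𝓑 # 1) = 0 ∨ 8 ≤ #((upClosure 𝓑) # 8) := by
    refine (Nat.eq_zero_or_pos _).imp_right fun hpos => ?_
    obtain ⟨T, hT⟩ := card_pos.1 hpos
    obtain ⟨hT𝓑, hTcard⟩ := mem_slice.1 hT
    have := hu8 T hT𝓑 (by lia)
    lia
  have := card_slice_le_upClosure_of_nine hα 𝓑
  rw [levelSlack]
  lia

theorem le_levelSlack_of_mem_upClosure_sdiff (hα : card α = 9)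
    (h𝓑 : SupClosed (𝓑 : Set (Finset α))) {V S : Finset α} (hV : V ∈ upClosure 𝓑 \ 𝓑)
    (hVcard : 6 ≤ #V) (hS : S ∈ 𝓑) (hScard : #S ≤ 4) : 58 ≤ levelSlack 𝓑 := by
  by_cases hfull : ∀ W : Finset α, 6 ≤ #W → W ∈ upClosure 𝓑
  · obtain ⟨x, hx, hxV⟩ := exists_mem_forall_subset_notMem h𝓑 (𝓐 := ∅) (by simp) hV
    exact le_levelSlack_of_forall_mem_upClosure hα hfull hVcard hx fun K hK hxK => (hxV K hK hxK).1
  · push Not at hfull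
    obtain ⟨W, hWcard, hW⟩ := hfull
    exact le_levelSlack_of_notMem_upClosure hα hWcard hW hS hScard

theorem surplus_nonneg_of_nine (hα : card α = 9) (h𝓑 : SupClosed (𝓑 : Set (Finset α)))
    (h𝓐 : ∀ S ∈ 𝓑, ∀ K ∈ 𝓐, S ∪ K ∈ 𝓑) (hcard : #(powersetCard 6 univ \ 𝓐) ≤ 8) :
    0 ≤ surplus 𝓑 := by
  by_cases hsmall : ∃ S ∈ 𝓑, #S ≤ 4
  swap
  · push Not at hsmall
    exact sum_nonneg fun S hS => by have := hsmall S hS; lia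
  obtain ⟨S, hS, hScard⟩ := hsmall
  have slice_eq_zero {k : ℕ} (h : ∀ V ∈ upClosure 𝓑 \ 𝓑, #V ≠ k) :
      #((upClosure 𝓑 \ 𝓑) # k) = 0 := card_eq_zero.2 (filter_eq_empty_iff.2 fun V hV => h V hV)
  have hle_seven : ∀ V ∈ upClosure 𝓑 \ 𝓑, #V ≤ 7 := fun V hV => by
    by_contra! hlt
    have hstar := (choose_le_card_powersetCard_sdiff h𝓑 h𝓐 hV 5).trans hcard
    have := (Nat.choose_le_choose 5 (show 7 ≤ #V - 1 by lia)).trans hstar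
    simp [Nat.choose] at this
  have h6 := (card_slice_upClosure_sdiff_le h𝓑 h𝓐 6).trans hcard
  have h7 := card_slice_succ_upClosure_sdiff_le_one h𝓑 h𝓐 (k := 6) (by lia)
  have hslack := levelSlack_le hα h𝓑
  rw [slice_eq_zero fun V hV => ((hle_seven V hV).trans_lt (by simp : 7 < 8)).ne,
    slice_eq_zero fun V hV => ((hle_seven V hV).trans_lt (by simp : 7 < 9)).ne] at hslack
  by_cases hmissing : ∃ V ∈ upClosure 𝓑 \ 𝓑, 6 ≤ #V
  · obtain ⟨V, hV, hVcard⟩ := hmissing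
    have := le_levelSlack_of_mem_upClosure_sdiff hα h𝓑 hV hVcard hS hScard
    lia
  · push Not at hmissing
    rw [slice_eq_zero fun V hV => (hmissing V hV).ne,
      slice_eq_zero fun V hV => ((hmissing V hV).trans (by simp : 6 < 7)).ne] at hslack
    have := levelSlack_nonneg hα 𝓑
    lia

end NinePoints

section Fibers
variable {β : Type*} [DecidableEq β] {Z : Finset β} {𝓕 : Finset (Finset β)}

/-- The fiber of `𝓕` over the trace `T` outside `Z`: the sets `S ⊆ Z` with `S ∪ T ∈ 𝓕`, encoded as
finsets of the subtype `Z`, so that results about families on a fintype apply. For `T = ∅` it is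
the family of members of `𝓕` contained in `Z`. -/
def fiber (𝓕 : Finset (Finset β)) (Z T : Finset β) : Finset (Finset Z) :=
  {S | S.map (.subtype (· ∈ Z)) ∪ T ∈ 𝓕}

theorem mem_fiber {T : Finset β} {S : Finset Z} :
    S ∈ fiber 𝓕 Z T ↔ S.map (.subtype (· ∈ Z)) ∪ T ∈ 𝓕 := mem_filter_univ _

theorem union_mem_fiber {T : Finset β} {S K : Finset Z} {𝓐 : Finset (Finset β)}
    (h : ∀ A ∈ 𝓕, ∀ B ∈ 𝓐, A ∪ B ∈ 𝓕) (hS : S ∈ fiber 𝓕 Z T) (hK : K ∈ fiber 𝓐 Z ∅) :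
    S ∪ K ∈ fiber 𝓕 Z T := by
  rw [mem_fiber, union_empty] at hK
  rw [mem_fiber, map_union, union_right_comm]
  exact h _ (mem_fiber.1 hS) _ hK

theorem supClosed_fiber (h𝓕 : SupClosed (𝓕 : Set (Finset β))) (Z T : Finset β) :
    SupClosed (fiber 𝓕 Z T : Set (Finset Z)) := fun S hS S' hS' => by
  simp only [mem_coe, mem_fiber, sup_eq_union, map_union] at hS hS' ⊢
  rw [union_union_distrib_right]
  exact h𝓕 hS hS'

theorem sum_surplus_fiber (𝓕 : Finset (Finset β)) (Z : Finset β) :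
    ∑ T ∈ 𝓕.image (· \ Z), surplus (fiber 𝓕 Z T) = ∑ S ∈ 𝓕, (2 * (#(Z ∩ S) : ℤ) - #Z) := by
  rw [← sum_fiberwise_of_maps_to (s := 𝓕) fun S hS => mem_image_of_mem (· \ Z) hS]
  refine sum_congr rfl fun T hT => ?_
  obtain ⟨U, -, rfl⟩ := mem_image.1 hT
  have hsub (S : Finset Z) : S.map (.subtype (· ∈ Z)) ⊆ Z := map_subtype_subset S
  have hinter (S : Finset Z) : Z ∩ (S.map (.subtype (· ∈ Z)) ∪ U \ Z) = S.map (.subtype _) := by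
    rw [inter_union_distrib_left, inter_sdiff_self, union_empty, inter_eq_right.2 (hsub S)]
  refine sum_bij' (fun S _ => S.map (.subtype _) ∪ U \ Z) (fun S _ => S.subtype (· ∈ Z))
    (fun S hS => ?_) (fun S hS => ?_) (fun S _ => ?_) (fun S hS => ?_) (fun S _ => ?_)
  · rw [mem_filter, union_sdiff_distrib, sdiff_eq_empty_iff_subset.2 (hsub S), empty_union,
      _root_.sdiff_idem]
    exact ⟨mem_fiber.1 hS, rfl⟩
  · obtain ⟨hS𝓕, hSU⟩ := mem_filter.1 hS
    rwa [mem_fiber, subtype_map, filter_mem_eq_inter, ← hSU, union_comm, sdiff_union_inter]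
  · rw [← (map_injective (.subtype (· ∈ Z))).eq_iff, subtype_map, filter_mem_eq_inter, inter_comm,
      hinter]
  · obtain ⟨-, hSU⟩ := mem_filter.1 hS
    rw [subtype_map, filter_mem_eq_inter, ← hSU, union_comm, sdiff_union_inter]
  · rw [hinter, card_map, card_coe]

theorem exists_card_le_two_mul_of_surplus_nonneg (hZ : Z.Nonempty)
    (h : ∀ T, 0 ≤ surplus (fiber 𝓕 Z T)) :
    ∃ x ∈ Z, #𝓕 ≤ 2 * #{S ∈ 𝓕 | x ∈ S} := by
  by_contra! hrare
  have hsum : #𝓕 * #Z ≤ 2 * ∑ S ∈ 𝓕, #(Z ∩ S) := by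
    have := (sum_nonneg fun T _ => h T).trans_eq (sum_surplus_fiber 𝓕 Z)
    rw [sum_sub_distrib, ← mul_sum, sum_const, nsmul_eq_mul] at this
    exact_mod_cast sub_nonneg.1 this
  obtain ⟨x₀, hx₀⟩ := hZ
  have hdeg := sum_card_inter_le (s := Z) (B := 𝓕) (n := (#𝓕 - 1) / 2) fun x hx => by
    have := hrare x hx
    lia
  have := hrare x₀ hx₀
  have hlt : 2 * ((#𝓕 - 1) / 2) < #𝓕 := by lia
  have := Nat.mul_lt_mul_of_pos_right hlt (card_pos.2 ⟨x₀, hx₀⟩)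
  lia

theorem card_powersetCard_univ_sdiff_fiber_empty (𝓐 : Finset (Finset β)) (Z : Finset β) (k : ℕ) :
    #(powersetCard k univ \ fiber 𝓐 Z ∅) + #(𝓐 ∩ powersetCard k Z) = (#Z).choose k := by
  have hmap : (powersetCard k univ \ fiber 𝓐 Z ∅).map (mapEmbedding (.subtype (· ∈ Z))).toEmbedding
      = powersetCard k Z \ 𝓐 := by
    ext K
    simp only [mem_map, mem_sdiff, mem_powersetCard, mem_fiber, union_empty]
    constructor
    · rintro ⟨K, ⟨⟨-, hK⟩, hKA⟩, rfl⟩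
      exact ⟨⟨map_subtype_subset K, (card_map _).trans hK⟩, hKA⟩
    · rintro ⟨⟨hKZ, hK⟩, hKA⟩
      have hK_map : (K.subtype (· ∈ Z)).map (.subtype (· ∈ Z)) = K := by
        rw [subtype_map, filter_mem_eq_inter, inter_eq_left.2 hKZ]
      exact ⟨K.subtype (· ∈ Z), ⟨⟨subset_univ _, by rw [← card_map, hK_map, hK]⟩,
        hK_map.symm ▸ hKA⟩, hK_map⟩
  rw [← card_map, hmap, inter_comm, card_sdiff_add_card_inter, card_powersetCard]

end Fibers

section DoubleCounting
variable {β : Type*} [DecidableEq β]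

theorem exists_powersetCard_mul_choose_le {N : Finset β} {𝓐 : Finset (Finset β)} {r t : ℕ}
    (hrt : r ≤ t) (ht : t ≤ #N) (h𝓐 : 𝓐 ⊆ powersetCard r N) :
    ∃ Z ∈ powersetCard t N, #𝓐 * t.choose r ≤ #(𝓐 ∩ powersetCard r Z) * (#N).choose r := by
  have hcount : ∑ Z ∈ powersetCard t N, #(𝓐 ∩ powersetCard r Z)
      = #𝓐 * (#N - r).choose (t - r) := by
    have hinter (Z : Finset β) : 𝓐 ∩ powersetCard r Z = {K ∈ 𝓐 | K ⊆ Z} := by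
      ext K
      simp only [mem_inter, mem_filter, mem_powersetCard, and_congr_right_iff, and_iff_left_iff_imp]
      exact fun hK _ => (mem_powersetCard.1 (h𝓐 hK)).2
    simp only [hinter]
    refine (sum_card_bipartiteAbove_eq_sum_card_bipartiteBelow (t := 𝓐) fun Z K => K ⊆ Z).trans ?_
    refine sum_const_nat fun K hK => ?_
    obtain ⟨hKN, rfl⟩ := mem_powersetCard.1 (h𝓐 hK)
    exact card_filter_powersetCard_subset K N t hKN hrt
  by_contra! hlt
  have hsum := sum_lt_sum_of_nonempty (powersetCard_nonempty.2 ht) hlt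
  rw [← sum_mul, hcount, sum_const, card_powersetCard, smul_eq_mul] at hsum
  have hchoose : (#N).choose t * (#𝓐 * t.choose r)
      = #𝓐 * (#N - r).choose (t - r) * (#N).choose r := by
    rw [mul_left_comm, Nat.choose_mul hrt]
    ring
  exact hsum.ne' hchoose

end DoubleCounting

section FranklCompleteness
variable {A : Finset (Finset ℕ)} {Z : Finset ℕ}

theorem subset_famUniverse_of_choose_lt {k : ℕ}
    (h : (#Z - 1).choose k < #(A ∩ powersetCard k Z)) : Z ⊆ famUniverse A := fun x hx => by
  by_contra hxA
  refine h.not_ge ?_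
  rw [← card_erase_of_mem hx, ← card_powersetCard]
  refine card_le_card fun K hK => ?_
  obtain ⟨hKA, hK⟩ := mem_inter.1 hK
  obtain ⟨hKZ, hKk⟩ := mem_powersetCard.1 hK
  exact mem_powersetCard.2
    ⟨subset_erase.2 ⟨hKZ, fun hxK => hxA (mem_sup.2 ⟨K, hKA, hxK⟩)⟩, hKk⟩

theorem isFC_of_seventy_six_le (hZ : #Z = 9) (h : 76 ≤ #(A ∩ powersetCard 6 Z)) : IsFC A := by
  intro F hF hAF
  have hF_sup : SupClosed (F : Set (Finset ℕ)) := fun S hS T hT => hF.2 S hS T hT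
  have hF_union : ∀ S ∈ F, ∀ K ∈ A, S ∪ K ∈ F := fun S hS K hK => hF.2 S hS K (hAF hK)
  have hchoose : Nat.choose 9 6 = 84 := rfl
  have hmissing := card_powersetCard_univ_sdiff_fiber_empty A Z 6
  rw [hZ, hchoose] at hmissing
  have hsurplus (T : Finset ℕ) : 0 ≤ surplus (fiber F Z T) :=
    surplus_nonneg_of_nine ((card_coe Z).trans hZ) (supClosed_fiber hF_sup Z T)
      (fun _ hS _ hK => union_mem_fiber hF_union hS hK) (by lia)
  obtain ⟨x, hx, hxF⟩ :=
    exists_card_le_two_mul_of_surplus_nonneg (card_pos.1 (hZ ▸ Nat.succ_pos 8)) hsurplus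
  have hfew : (#Z - 1).choose 6 < #(A ∩ powersetCard 6 Z) := by
    rw [hZ, show Nat.choose (9 - 1) 6 = 28 from rfl]
    lia
  exact ⟨x, subset_famUniverse_of_choose_lt hfew hx, hxF⟩

theorem choose_six_lt_of_eq_one_add_ceil {n m : ℕ}
    (hm : (m : ℤ) = 1 + ⌈(5 / 4032 : ℚ) * ((n : ℚ) * ((n : ℚ) - 1) * ((n : ℚ) - 2) * ((n : ℚ) - 3) *
      ((n : ℚ) - 4) * ((n : ℚ) - 5))⌉) : 25 * n.choose 6 < 28 * m := by
  have hdesc : (n * (n - 1) * (n - 2) * (n - 3) * (n - 4) * (n - 5) : ℚ) = 720 * n.choose 6 := by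
    have h := descPochhammer_eval_eq_descFactorial ℚ n 6
    rw [Nat.descFactorial_eq_factorial_mul_choose] at h
    simpa [descPochhammer_succ_eval, Nat.factorial] using h
  have hceil := Int.le_ceil
    ((5 / 4032 : ℚ) * (n * (n - 1) * (n - 2) * (n - 3) * (n - 4) * (n - 5)))
  rw [← sub_eq_iff_eq_add'.2 hm, hdesc] at hceil
  push_cast at hceil
  suffices (25 * n.choose 6 : ℚ) < 28 * m by exact_mod_cast this
  linarith

end FranklCompleteness

end FranklComplete

theorem FC_upper_bound_k6_general {N : Finset ℕ} (hN : 8 < N.card) {A : Finset (Finset ℕ)}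
    (hA : 25 * N.card.choose 6 < 28 * (A ∩ N.powersetCard 6).card) : IsFC A := by
  obtain ⟨Z, hZN, hZ⟩ := FranklComplete.exists_powersetCard_mul_choose_le (show 6 ≤ 9 by simp) hN
    (A.inter_subset_right (s₂ := N.powersetCard 6))
  obtain ⟨hZN, hZcard⟩ := Finset.mem_powersetCard.1 hZN
  refine FranklComplete.isFC_of_seventy_six_le hZcard ?_
  rw [Finset.inter_assoc, Finset.inter_eq_right.2 (Finset.powersetCard_mono hZN),
    show Nat.choose 9 6 = 84 from rfl] at hZ
  by_contra! hlt
  have := Nat.mul_le_mul_right (N.card.choose 6) (Nat.le_of_lt_succ hlt)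
  lia

/-- For every n > 8, FC(6, n) exists and is at most 1 + ⌈5 / 4032 · (n : ℚ) * ((n : ℚ) - 1) * ((n : ℚ) - 2) * ((n : ℚ) - 3) * ((n : ℚ) - 4) * ((n : ℚ) - 5)⌉. -/
theorem FC_upper_bound_k6 :
    ∀ n : ℕ, 8 < n →
      ∀ m : ℕ,
        (m : ℤ) = 1 + ⌈(5 / 4032 : ℚ) * ((n : ℚ) * ((n : ℚ) - 1) * ((n : ℚ) - 2) * ((n : ℚ) - 3) * ((n : ℚ) - 4) * ((n : ℚ) - 5))⌉ →
        (∃ v : ℕ, IsLeast (FCwitnesses 6 n) v ∧ v ≤ m) ∧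
        (∀ A : Finset (Finset ℕ), A.card = m → IsKFamily 6 n A → IsFC A) := by
  intro n hn m hm
  have hlt := FranklComplete.choose_six_lt_of_eq_one_add_ceil hm
  have hFC : ∀ A : Finset (Finset ℕ), A.card = m → IsKFamily 6 n A → IsFC A := by
    intro A hcard hA
    have hsub : A ⊆ (Finset.Icc 1 n).powersetCard 6 := fun S hS =>
      Finset.mem_powersetCard.2 (hA.1 S hS).symm
    refine FC_upper_bound_k6_general (N := Finset.Icc 1 n) (by simpa using hn) ?_
    rwa [Finset.inter_eq_left.2 hsub, hcard, Nat.card_Icc, Nat.add_sub_cancel]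
  have hm_mem : m ∈ FCwitnesses 6 n := ⟨by lia, hFC⟩
  exact ⟨⟨sInf (FCwitnesses 6 n), ⟨Nat.sInf_mem ⟨m, hm_mem⟩, fun _ => Nat.sInf_le⟩,
    Nat.sInf_le hm_mem⟩, hFC⟩
end

section
/- FC(5, 8) ≤ 36; that is, every family of 36 distinct 5-element subsets of {1,…,8} whose universe equals {1,…,8} is FC. -/
/-!
Fix the part of a union-closed family lying outside the eight-point set `U` and complement the
part inside `U`. This gives intersection-closed families `C` on `U`; the complement of each of the
36 given five-element sets is a triple all of whose intersections with members of `C` are again in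
`C`, so at most 20 triples of `U` are unstable. It suffices that the average set size in each such
`C` is at most 4.

A small set `S` outside `C` that is contained in a member of `C` forces a point `v`: every member
of `C` containing `S` contains `v`. All sets between `S` and `U.erase v` are then outside `C`, and
the triples among them are unstable. The bound of 20 thus limits how many small sets can be lost,
and the large sets lost with them compensate, level by level, for their absence.
-/

namespace FranklComplete

open Finset

variable {α : Type*} [DecidableEq α] {U V S T A B : Finset α} {C : Finset (Finset α)} {v w x : α}
  {a b k : ℕ}

lemma mem_slice_Icc {R : Finset α} : R ∈ (Icc A B) # k ↔ A ⊆ R ∧ R ⊆ B ∧ #R = k := by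
  simp [mem_slice, and_assoc]

lemma slice_Icc_inter_slice_Icc (A B X Y : Finset α) (k : ℕ) :
    (Icc A X) # k ∩ (Icc B Y) # k = (Icc (A ∪ B) (X ∩ Y)) # k := by
  ext R
  simp only [mem_inter, mem_slice_Icc, union_subset_iff, subset_inter_iff]
  tauto

lemma card_slice_Icc (h : A ⊆ B) (hk : #A ≤ k) :
    #((Icc A B) # k) = (#B - #A).choose (k - #A) := by
  rw [← card_sdiff_of_subset h, ← card_powersetCard]
  refine card_nbij' (· \ A) (· ∪ A) ?_ ?_ ?_ ?_
  · intro R hR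
    obtain ⟨hAR, hRB, rfl⟩ := mem_slice_Icc.1 hR
    exact mem_powersetCard.2 ⟨sdiff_subset_sdiff hRB subset_rfl, card_sdiff_of_subset hAR⟩
  · intro X hX
    obtain ⟨hXB, hXk⟩ := mem_powersetCard.1 hX
    have hdisj : Disjoint X A := disjoint_of_subset_left hXB sdiff_disjoint
    refine mem_slice_Icc.2
      ⟨subset_union_right, union_subset (hXB.trans sdiff_subset) h, ?_⟩
    rw [card_union_of_disjoint hdisj, hXk, Nat.sub_add_cancel hk]
  · intro R hR
    exact sdiff_union_of_subset (mem_slice_Icc.1 hR).1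
  · intro X hX
    have hXB := (mem_powersetCard.1 hX).1
    exact union_sdiff_cancel_right (disjoint_of_subset_left hXB sdiff_disjoint)

lemma card_slice_Icc_le (ha : a ≤ #A) (hb : #B ≤ b) :
    #((Icc A B) # k) ≤ (b - a).choose (k - a) := by
  obtain hempty | ⟨R, hR⟩ := ((Icc A B) # k).eq_empty_or_nonempty
  · simp [hempty]
  obtain ⟨hAR, hRB, rfl⟩ := mem_slice_Icc.1 hR
  obtain ⟨A', hA', rfl⟩ := exists_subset_card_eq ha
  calc #((Icc A B) # #R) ≤ #((Icc A' B) # #R) := by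
        refine card_le_card fun X hX ↦ ?_
        obtain ⟨hAX, hX⟩ := mem_slice_Icc.1 hX
        exact mem_slice_Icc.2 ⟨hA'.trans hAX, hX⟩
    _ = (#B - #A').choose (#R - #A') :=
        card_slice_Icc (hA'.trans (hAR.trans hRB)) (card_le_card (hA'.trans hAR))
    _ ≤ (b - #A').choose (#R - #A') := Nat.choose_le_choose _ (by lia)

lemma card_slice_Icc_add_card_slice_Icc_le {X Y : Finset α} {M : Finset (Finset α)}
    (hA : (Icc A X) # k ⊆ M) (hB : (Icc B Y) # k ⊆ M) :
    #((Icc A X) # k) + #((Icc B Y) # k) ≤ #M + #((Icc (A ∪ B) (X ∩ Y)) # k) := by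
  rw [← card_union_add_card_inter, slice_Icc_inter_slice_Icc]
  gcongr
  exact union_subset hA hB

lemma card_slice_Icc_three_add_card_le (h : A ⊆ B) (hA : 2 ≤ #A) (hB : 4 ≤ #B) :
    #((Icc A B) # 3) + #A ≤ #B := by
  have hAB := card_le_card h
  obtain hA3 | hA3 := Nat.lt_or_ge 3 #A
  · have hempty : (Icc A B) # 3 = ∅ := by
      refine eq_empty_of_forall_notMem fun R hR ↦ ?_
      obtain ⟨hAR, -, hR3⟩ := mem_slice_Icc.1 hR
      exact hA3.not_ge (hR3 ▸ card_le_card hAR)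
    simpa [hempty] using hAB
  · rw [card_slice_Icc h hA3]
    obtain hA2 | hA3 : #A = 2 ∨ #A = 3 := by lia
    · simp only [hA2, Nat.reduceSub, Nat.choose_one_right]
      lia
    · simp only [hA3, Nat.reduceSub, Nat.choose_zero_right]
      lia

lemma card_lt_card_union (h : #A = #B) (hne : A ≠ B) : #A < #(A ∪ B) := by
  refine card_lt_card (subset_union_left.ssubset_of_ne fun hA ↦ hne ?_)
  exact (eq_of_subset_of_card_le (left_eq_union.1 hA) h.le).symm

/-! ### Pairs and triples -/

-- The `i`-th set to be added meets each earlier one in at most one point, so it is charged at most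
-- `i - 1`.
lemma mul_card_le_card_biUnion_add_choose_two {ι : Type*} {f : ι → Finset α}
    {q : ℕ} {s : Finset ι} (hq : ∀ i ∈ s, q ≤ #(f i))
    (hinter : ∀ i ∈ s, ∀ j ∈ s, i ≠ j → #(f i ∩ f j) ≤ 1) :
    q * #s ≤ #(s.biUnion f) + (#s).choose 2 := by
  classical
  induction s using Finset.induction_on with
  | empty => simp
  | insert i s hi ih =>
    have ih := ih (fun j hj ↦ hq j (mem_insert_of_mem hj))
      fun j hj l hl ↦ hinter j (mem_insert_of_mem hj) l (mem_insert_of_mem hl)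
    have hcharge : #(f i ∩ s.biUnion f) ≤ #s := by
      rw [inter_biUnion]
      refine card_biUnion_le.trans ((sum_le_card_nsmul s _ 1 fun j hj ↦ ?_).trans (by simp))
      exact hinter i (mem_insert_self i s) j (mem_insert_of_mem hj)
        (ne_of_mem_of_not_mem hj hi).symm
    have hunion := card_union_add_card_inter (f i) (s.biUnion f)
    have hqi := hq i (mem_insert_self i s)
    have hchoose : (#s + 1).choose 2 = #s + (#s).choose 2 := by
      rw [Nat.choose_succ_succ' (#s) 1, Nat.choose_one_right]
    rw [biUnion_insert, card_insert_of_notMem hi, hchoose, mul_add, mul_one]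
    lia

lemma mul_card_le_card_add_choose_two_of_pairs {s M : Finset (Finset α)} {q : ℕ}
    (hs : ∀ P ∈ s, #P = 2) (hM : ∀ P ∈ s, ∃ B, (Icc P B) # 3 ⊆ M ∧ q ≤ #((Icc P B) # 3)) :
    q * #s ≤ #M + (#s).choose 2 := by
  choose! B hBM hBq using hM
  refine (mul_card_le_card_biUnion_add_choose_two hBq fun P hP Q hQ hne ↦ ?_).trans ?_
  · have hunion := card_lt_card_union ((hs P hP).trans (hs Q hQ).symm) hne
    rw [hs P hP] at hunion
    rw [slice_Icc_inter_slice_Icc]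
    exact (card_slice_Icc_le hunion le_rfl).trans_eq (Nat.choose_zero_right _)
  · gcongr
    exact biUnion_subset.2 hBM

lemma sum_card_filter_mem (hC : C ⊆ powersetCard k U) :
    ∑ x ∈ U, #{S ∈ C | x ∈ S} = #C * k := by
  calc ∑ x ∈ U, #{S ∈ C | x ∈ S} = ∑ S ∈ C, #{x ∈ U | x ∈ S} :=
        sum_card_bipartiteAbove_eq_sum_card_bipartiteBelow (· ∈ ·)
    _ = ∑ _S ∈ C, k := by
        refine sum_congr rfl fun S hS ↦ ?_
        obtain ⟨hSU, hSk⟩ := mem_powersetCard.1 (hC hS)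
        rw [filter_mem_eq_inter, inter_eq_right.2 hSU, hSk]
    _ = #C * k := by rw [sum_const, smul_eq_mul]

lemma eq_pair_of_card_eq_two (hS : #S = 2) (hv : v ∈ S) (hw : w ∈ S) (hne : v ≠ w) :
    S = {v, w} :=
  (eq_of_subset_of_card_le (insert_subset hv (singleton_subset_iff.2 hw))
    (by rw [hS, card_pair hne])).symm

lemma card_filter_mem_le_of_meets {𝒜 : Finset (Finset α)} (h𝒜 : ∀ P ∈ 𝒜, #P = 2)
    (hmeet : ∀ P ∈ 𝒜, ¬ Disjoint P S) (hv : v ∉ S) : #{P ∈ 𝒜 | v ∈ P} ≤ #S := by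
  refine (card_le_card fun P hP ↦ ?_).trans (card_image_le (s := S) (f := fun y ↦ {v, y}))
  obtain ⟨hP, hvP⟩ := mem_filter.1 hP
  obtain ⟨y, hyP, hyS⟩ := not_disjoint_iff.1 (hmeet P hP)
  exact mem_image.2
    ⟨y, hyS, (eq_pair_of_card_eq_two (h𝒜 P hP) hvP hyP (ne_of_mem_of_not_mem hyS hv).symm).symm⟩

section CrossIntersecting

variable {β : Type*} {W : Finset β} {𝒜 𝒯 𝒬 : Finset (Finset β)}

-- If neither point of some `{a, b} ∈ 𝒬` is common to all of `𝒬`, then at most two pairs of `𝒜` pass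
-- through `a` and at most two through `b`.
lemma exists_forall_mem_of_cross_intersecting (h𝒜 : ∀ P ∈ 𝒜, #P = 2) (hcard : 5 ≤ #𝒜)
    (h𝒬 : ∀ Q ∈ 𝒬, #Q = 2) (hne : 𝒬.Nonempty) (hmeet : ∀ P ∈ 𝒜, ∀ Q ∈ 𝒬, ¬ Disjoint P Q) :
    ∃ a, ∀ Q ∈ 𝒬, a ∈ Q := by
  classical
  by_contra! hcon
  obtain ⟨Q, hQ⟩ := hne
  obtain ⟨a, b, -, rfl⟩ := card_eq_two.1 (h𝒬 Q hQ)
  have hthrough : ∀ c, #{P ∈ 𝒜 | c ∈ P} ≤ 2 := by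
    intro c
    obtain ⟨R, hR, hcR⟩ := hcon c
    exact h𝒬 R hR ▸ card_filter_mem_le_of_meets h𝒜 (fun P hP ↦ hmeet P hP R hR) hcR
  have hcover : 𝒜 ⊆ {P ∈ 𝒜 | a ∈ P} ∪ {P ∈ 𝒜 | b ∈ P} := by
    intro P hP
    have := hmeet P hP _ hQ
    rw [← filter_or, mem_filter]
    rw [disjoint_insert_right, disjoint_singleton_right] at this
    tauto
  have := (card_le_card hcover).trans (card_union_le _ _)
  have := hthrough a
  have := hthrough b
  lia

-- If all pairs of `𝒬` contain `a`, with other endpoints `L`, then a triple of `𝒯` missing `a`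
-- must contain `L`.
lemma card_add_card_le_of_star (hW : 5 ≤ #W) {a : β} (ha : a ∈ W)
    (h𝒯 : 𝒯 ⊆ powersetCard 3 W) (h𝒬 : 𝒬 ⊆ powersetCard 2 W) (hcard : 2 ≤ #𝒬)
    (hstar : ∀ Q ∈ 𝒬, a ∈ Q) (hmeet : ∀ T ∈ 𝒯, ∀ Q ∈ 𝒬, ¬ Disjoint T Q) :
    #𝒯 + #𝒬 ≤ (#W).choose 2 := by
  classical
  set L := {b ∈ W.erase a | {a, b} ∈ 𝒬}
  have hLW : L ⊆ W.erase a := filter_subset _ _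
  have h𝒬L : #𝒬 ≤ #L := by
    refine (card_le_card fun Q hQ ↦ ?_).trans (card_image_le (s := L) (f := fun b ↦ {a, b}))
    obtain ⟨hQW, hQ2⟩ := mem_powersetCard.1 (h𝒬 hQ)
    obtain ⟨b, hbQ, hba⟩ := exists_mem_ne (hQ2 ▸ one_lt_two) a
    have hQab := eq_pair_of_card_eq_two hQ2 (hstar Q hQ) hbQ hba.symm
    refine mem_image.2 ⟨b, mem_filter.2 ⟨mem_erase.2 ⟨hba, hQW hbQ⟩, hQab ▸ hQ⟩, hQab.symm⟩
  have hwith : #{T ∈ 𝒯 | a ∈ T} ≤ (#W - 1).choose 2 := by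
    refine (card_le_card fun T hT ↦ ?_).trans
      (card_slice_Icc_le (card_singleton a).ge le_rfl (k := 3))
    obtain ⟨hT, haT⟩ := mem_filter.1 hT
    obtain ⟨hTW, hT3⟩ := mem_powersetCard.1 (h𝒯 hT)
    exact mem_slice_Icc.2 ⟨singleton_subset_iff.2 haT, hTW, hT3⟩
  have hwithout : {T ∈ 𝒯 | a ∉ T} ⊆ (Icc L (W.erase a)) # 3 := by
    intro T hT
    obtain ⟨hT, haT⟩ := mem_filter.1 hT
    obtain ⟨hTW, hT3⟩ := mem_powersetCard.1 (h𝒯 hT)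
    refine mem_slice_Icc.2 ⟨fun b hb ↦ ?_, subset_erase.2 ⟨hTW, haT⟩, hT3⟩
    by_contra hbT
    exact hmeet T hT _ (mem_filter.1 hb).2 (by simp [haT, hbT])
  have hsplit := card_filter_add_card_filter_not (s := 𝒯) (a ∈ ·)
  have hchoose : (#W).choose 2 = (#W - 1) + (#W - 1).choose 2 := by
    obtain ⟨n, hn⟩ := Nat.exists_eq_add_of_lt hW
    rw [hn]
    simp [Nat.choose_succ_succ' _ 1]
  have hrest := card_slice_Icc_three_add_card_le hLW (hcard.trans h𝒬L)
    (by rw [card_erase_of_mem ha]; lia)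
  rw [card_erase_of_mem ha] at hrest
  have := card_le_card hwithout
  lia

lemma card_add_card_le_of_cross_intersecting (hW : 5 ≤ #W)
    (h𝒜 : ∀ P ∈ 𝒜, #P = 2) (h𝒜card : 5 ≤ #𝒜) (h𝒯 : 𝒯 ⊆ powersetCard 3 W)
    (h𝒯card : #𝒯 < (#W).choose 2) (h𝒬 : 𝒬 ⊆ powersetCard 2 W)
    (h𝒜𝒬 : ∀ P ∈ 𝒜, ∀ Q ∈ 𝒬, ¬ Disjoint P Q) (h𝒯𝒬 : ∀ T ∈ 𝒯, ∀ Q ∈ 𝒬, ¬ Disjoint T Q) :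
    #𝒯 + #𝒬 ≤ (#W).choose 2 := by
  obtain hsmall | hlarge := Nat.lt_or_ge #𝒬 2
  · lia
  obtain ⟨Q, hQ⟩ : 𝒬.Nonempty := card_pos.1 (by lia)
  obtain ⟨a, ha⟩ := exists_forall_mem_of_cross_intersecting h𝒜 h𝒜card
    (fun R hR ↦ (mem_powersetCard.1 (h𝒬 hR)).2) ⟨Q, hQ⟩ h𝒜𝒬
  exact card_add_card_le_of_star hW ((mem_powersetCard.1 (h𝒬 hQ)).1 (ha Q hQ)) h𝒯 h𝒬 hlarge ha h𝒯𝒬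

end CrossIntersecting

/-! ### Closure in an intersection-closed family -/

/-- The `k`-element subsets of `U` that lie in some member of `C` but do not belong to `C`. For `C`
closed under intersection, these are the sets that differ from their closure, the smallest member
of `C` containing them. -/
def nonclosed (U : Finset α) (C : Finset (Finset α)) (k : ℕ) : Finset (Finset α) :=
  {S ∈ powersetCard k U | S ∉ C ∧ ∃ R ∈ C, S ⊆ R}

/-- The `k`-element subsets of `U` that lie in no member of `C`, i.e. have no closure. -/
def uncovered (U : Finset α) (C : Finset (Finset α)) (k : ℕ) : Finset (Finset α) :=
  {S ∈ powersetCard k U | ∀ R ∈ C, ¬ S ⊆ R}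

/-- The `k`-element subsets of `U` that do not belong to `C`, whether or not they have a closure. -/
def missing (U : Finset α) (C : Finset (Finset α)) (k : ℕ) : Finset (Finset α) :=
  powersetCard k U \ C

/-- `v` is a point of `U` in the closure of `S ⊆ U` with respect to `C`, but not in `S`. A set with
no closure forces every point outside it. -/
structure Forces (U : Finset α) (C : Finset (Finset α)) (S : Finset α) (v : α) : Prop where
  mem_ground : v ∈ U
  subset_erase : S ⊆ U.erase v
  mem_of_subset : ∀ R ∈ C, S ⊆ R → v ∈ R

lemma mem_nonclosed :
    S ∈ nonclosed U C k ↔ S ⊆ U ∧ #S = k ∧ S ∉ C ∧ ∃ R ∈ C, S ⊆ R := by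
  simp [nonclosed, and_assoc]

lemma mem_uncovered : S ∈ uncovered U C k ↔ S ⊆ U ∧ #S = k ∧ ∀ R ∈ C, ¬ S ⊆ R := by
  simp [uncovered, and_assoc]

lemma mem_missing : S ∈ missing U C k ↔ S ⊆ U ∧ #S = k ∧ S ∉ C := by
  simp [missing, and_assoc]

lemma missing_mono {W : Finset α} (h : W ⊆ U) : missing W C k ⊆ missing U C k :=
  sdiff_subset_sdiff (powersetCard_mono h) subset_rfl

lemma card_missing_add_card_inter (U : Finset α) (C : Finset (Finset α)) (k : ℕ) :
    #(missing U C k) + #(powersetCard k U ∩ C) = (#U).choose k := by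
  rw [missing, card_sdiff_add_card_inter, card_powersetCard]

lemma card_slice_add_card_missing (hC : C ⊆ U.powerset) (k : ℕ) :
    #(C # k) + #(missing U C k) = (#U).choose k := by
  have hslice : C # k = powersetCard k U ∩ C := by
    ext R
    simp only [mem_slice, mem_inter, mem_powersetCard]
    exact ⟨fun h ↦ ⟨⟨mem_powerset.1 (hC h.1), h.2⟩, h.1⟩, fun h ↦ ⟨h.2, h.1.2⟩⟩
  rw [hslice, add_comm, card_missing_add_card_inter]

lemma card_missing_eq (U : Finset α) (C : Finset (Finset α)) (k : ℕ) :
    #(missing U C k) = #(nonclosed U C k) + #(uncovered U C k) := by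
  rw [← card_union_of_disjoint]
  · congr 1
    ext S
    simp only [mem_union, mem_missing, mem_nonclosed, mem_uncovered]
    by_cases hS : ∃ R ∈ C, S ⊆ R
    · grind
    · have : S ∉ C := fun h ↦ hS ⟨S, h, subset_rfl⟩
      grind
  · refine disjoint_left.2 fun S hS hS' ↦ ?_
    obtain ⟨-, -, -, R, hR, hSR⟩ := mem_nonclosed.1 hS
    exact (mem_uncovered.1 hS').2.2 R hR hSR

lemma uncovered_eq_empty_iff :
    uncovered U C k = ∅ ↔ ∀ S ∈ powersetCard k U, ∃ R ∈ C, S ⊆ R := by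
  simp [uncovered, filter_eq_empty_iff]

lemma mem_of_mem_uncovered (hS : S ∈ uncovered U C k) (hx : U.erase x ∈ C) : x ∈ S := by
  obtain ⟨hSU, -, hunc⟩ := mem_uncovered.1 hS
  exact by_contra fun hxS ↦ hunc _ hx (subset_erase.2 ⟨hSU, hxS⟩)

lemma exists_forces_of_mem_nonclosed (hC : C ⊆ U.powerset) (hinf : InfClosed (C : Set (Finset α)))
    (hS : S ∈ nonclosed U C k) : ∃ v, Forces U C S v := by
  obtain ⟨hSU, -, hSC, R, hR, hSR⟩ := mem_nonclosed.1 hS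
  have hne : {R ∈ C | S ⊆ R}.Nonempty := ⟨R, mem_filter.2 ⟨hR, hSR⟩⟩
  have hmem : {R ∈ C | S ⊆ R}.inf' hne id ∈ C :=
    hinf.finsetInf'_mem hne fun R hR ↦ (mem_filter.1 hR).1
  have hsub : S ⊆ {R ∈ C | S ⊆ R}.inf' hne id := le_inf' _ _ fun R hR ↦ (mem_filter.1 hR).2
  obtain ⟨v, hv, hvS⟩ :=
    exists_of_ssubset (hsub.ssubset_of_ne (ne_of_mem_of_not_mem hmem hSC).symm)
  exact ⟨v, mem_powerset.1 (hC hmem) hv, subset_erase.2 ⟨hSU, hvS⟩,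
    fun R hR hSR ↦ inf'_le id (mem_filter.2 ⟨hR, hSR⟩) hv⟩

lemma powersetCard_subset_slice_union_nonclosed (hV : V ⊆ U)
    (hcov : ∀ S ∈ powersetCard k V, ∃ R ∈ C, S ⊆ R) :
    powersetCard k V ⊆ C # k ∪ nonclosed U C k := by
  intro S hS
  obtain ⟨hSV, hSk⟩ := mem_powersetCard.1 hS
  rw [mem_union, mem_slice, mem_nonclosed]
  by_cases hSC : S ∈ C
  · exact .inl ⟨hSC, hSk⟩
  · exact .inr ⟨hSV.trans hV, hSk, hSC, hcov S hS⟩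

lemma card_le_card_slice_one_add_card_nonclosed (hV : V ⊆ U) (hcov : ∀ x ∈ V, ∃ R ∈ C, x ∈ R) :
    #V ≤ #(C # 1) + #(nonclosed U C 1) := by
  rw [← Nat.choose_one_right #V, ← card_powersetCard]
  refine (card_le_card (powersetCard_subset_slice_union_nonclosed hV fun S hS ↦ ?_)).trans
    (card_union_le _ _)
  obtain ⟨hSV, hS1⟩ := mem_powersetCard.1 hS
  obtain ⟨x, rfl⟩ := card_eq_one.1 hS1
  simpa using hcov x (by simpa using hSV)

lemma card_filter_superset_le (hC : C ⊆ U.powerset) (h : ∀ R ∈ C, S ⊆ R → T ⊆ R) (k : ℕ) :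
    #{R ∈ C # k | S ⊆ R} ≤ (#U - #T).choose (k - #T) := by
  refine (card_le_card fun R hR ↦ ?_).trans (card_slice_Icc_le le_rfl le_rfl)
  obtain ⟨hR, hSR⟩ := mem_filter.1 hR
  obtain ⟨hRC, hRk⟩ := mem_slice.1 hR
  exact mem_slice_Icc.2 ⟨h R hRC hSR, mem_powerset.1 (hC hRC), hRk⟩

-- Double counting of the pairs `S ⊆ R` with `#S = a`, `R ∈ C` and `#R = b`; a non-closed `S` is
-- counted through `insert v S` for a point `v` that it forces.
lemma card_slice_mul_choose_le (hC : C ⊆ U.powerset) (hinf : InfClosed (C : Set (Finset α)))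
    (a b : ℕ) :
    #(C # b) * b.choose a ≤ #(C # a) * (#U - a).choose (b - a) +
      #(nonclosed U C a) * (#U - (a + 1)).choose (b - (a + 1)) := by
  have hdisj : Disjoint (C # a) (nonclosed U C a) :=
    disjoint_left.2 fun S hS hS' ↦ (mem_nonclosed.1 hS').2.2.1 (mem_slice.1 hS).1
  calc #(C # b) * b.choose a = ∑ R ∈ C # b, #(powersetCard a R) := by
        refine (sum_const_nat fun R hR ↦ ?_).symm
        rw [card_powersetCard, (mem_slice.1 hR).2]
    _ ≤ ∑ R ∈ C # b, #{S ∈ C # a ∪ nonclosed U C a | S ⊆ R} := by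
        refine sum_le_sum fun R hR ↦ card_le_card fun S hS ↦ ?_
        have hRC := (mem_slice.1 hR).1
        have hsub : powersetCard a R ⊆ C # a ∪ nonclosed U C a :=
          powersetCard_subset_slice_union_nonclosed (mem_powerset.1 (hC hRC))
            fun S hS ↦ ⟨R, hRC, (mem_powersetCard.1 hS).1⟩
        exact mem_filter.2 ⟨hsub hS, (mem_powersetCard.1 hS).1⟩
    _ = ∑ S ∈ C # a ∪ nonclosed U C a, #{R ∈ C # b | S ⊆ R} := by
        simp_rw [card_filter]
        exact sum_comm
    _ = ∑ S ∈ C # a, #{R ∈ C # b | S ⊆ R} + ∑ S ∈ nonclosed U C a, #{R ∈ C # b | S ⊆ R} :=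
        sum_union hdisj
    _ ≤ _ := by
        simp only [← smul_eq_mul]
        gcongr
        · refine sum_le_card_nsmul _ _ _ fun S hS ↦ ?_
          rw [← (mem_slice.1 hS).2]
          exact card_filter_superset_le hC (fun R _ h ↦ h) b
        · refine sum_le_card_nsmul _ _ _ fun S hS ↦ ?_
          obtain ⟨v, hv⟩ := exists_forces_of_mem_nonclosed hC hinf hS
          have hvS : v ∉ S := fun h ↦ notMem_erase v U (hv.subset_erase h)
          rw [← (mem_nonclosed.1 hS).2.1, ← card_insert_of_notMem hvS]
          exact card_filter_superset_le hC
            (fun R hR h ↦ insert_subset (hv.mem_of_subset R hR h) h) b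

lemma card_slice_card_sub_one_le (hC : C ⊆ U.powerset) (hU : U.Nonempty)
    (h : ∀ x ∈ U, U.erase x ∈ C → x ∈ S) : #(C # (#U - 1)) ≤ #S := by
  refine (card_le_card fun R hR ↦ ?_).trans (card_image_le (s := S) (f := U.erase))
  obtain ⟨hRC, hRcard⟩ := mem_slice.1 hR
  have hRU := mem_powerset.1 (hC hRC)
  obtain ⟨x, hx⟩ : ∃ x, U \ R = {x} := by
    rw [← card_eq_one, card_sdiff_of_subset hRU, hRcard]
    have := hU.card_pos
    lia
  have hRx : U.erase x = R := by
    rw [← sdiff_singleton_eq_erase, ← hx, Finset.sdiff_sdiff_eq_self hRU]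
  have hxU : x ∈ U := sdiff_subset (hx ▸ mem_singleton_self x)
  exact mem_image.2 ⟨x, h x hxU (hRx ▸ hRC), hRx⟩

lemma Forces.slice_subset_missing_erase (hv : Forces U C S v) (k : ℕ) :
    (Icc S (U.erase v)) # k ⊆ missing (U.erase v) C k := by
  intro R hR
  obtain ⟨hSR, hRU, hRk⟩ := mem_slice_Icc.1 hR
  exact mem_missing.2
    ⟨hRU, hRk, fun hRC ↦ notMem_erase v U (hRU (hv.mem_of_subset R hRC hSR))⟩

lemma Forces.slice_subset_missing (hv : Forces U C S v) (k : ℕ) :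
    (Icc S (U.erase v)) # k ⊆ missing U C k :=
  (hv.slice_subset_missing_erase k).trans (missing_mono (erase_subset v U))

lemma Forces.card_slice (hv : Forces U C S v) (hk : #S ≤ k) :
    #((Icc S (U.erase v)) # k) = (#U - 1 - #S).choose (k - #S) := by
  rw [card_slice_Icc hv.subset_erase hk, card_erase_of_mem hv.mem_ground]

lemma Forces.not_disjoint_sdiff {R : Finset α} (hv : Forces U C S v) (hR : R ∈ C)
    (hRU : R ⊆ U.erase v) : ¬ Disjoint S (U.erase v \ R) := by
  intro hdisj
  have hSR : S ⊆ R := fun x hx ↦ by_contra fun hxR ↦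
    disjoint_left.1 hdisj hx (mem_sdiff.2 ⟨hv.subset_erase hx, hxR⟩)
  exact notMem_erase v U (hRU (hv.mem_of_subset R hR hSR))

lemma Forces.choose_le_card_missing (hv : Forces U C S v) (hk : #S ≤ k) :
    (#U - 1 - #S).choose (k - #S) ≤ #(missing U C k) :=
  hv.card_slice hk ▸ card_le_card (hv.slice_subset_missing k)

lemma Forces.choose_le_card_missing_erase (hv : Forces U C S v) (hk : #S ≤ k) :
    (#U - 1 - #S).choose (k - #S) ≤ #(missing (U.erase v) C k) :=
  hv.card_slice hk ▸ card_le_card (hv.slice_subset_missing_erase k)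

lemma Forces.two_mul_choose_le_of_ne (hS : Forces U C S v) (hT : Forces U C T w) (hvw : v ≠ w)
    (hcard : #T = #S) (hk : #S ≤ k) :
    2 * (#U - 1 - #S).choose (k - #S) ≤ #(missing U C k) + (#U - 2 - #S).choose (k - #S) := by
  have hground : #(U.erase v ∩ U.erase w) ≤ #U - 2 := by
    have hw : w ∈ U.erase v := mem_erase.2 ⟨hvw.symm, hT.mem_ground⟩
    have hinter : U.erase v ∩ U.erase w = (U.erase v).erase w := by
      rw [inter_erase, inter_eq_left.2 (erase_subset v U)]
    rw [hinter, card_erase_of_mem hw, card_erase_of_mem hS.mem_ground, Nat.sub_sub]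
  have h := card_slice_Icc_add_card_slice_Icc_le (hS.slice_subset_missing k)
    (hT.slice_subset_missing k)
  rw [hS.card_slice hk, hT.card_slice (hcard.trans_le hk), hcard, ← two_mul] at h
  exact h.trans (by gcongr; exact card_slice_Icc_le (card_le_card subset_union_left) hground)

lemma Forces.two_mul_choose_le_of_same (hS : Forces U C S v) (hT : Forces U C T v) (hne : S ≠ T)
    (hcard : #T = #S) (hk : #S ≤ k) :
    2 * (#U - 1 - #S).choose (k - #S) ≤
      #(missing (U.erase v) C k) + (#U - 1 - (#S + 1)).choose (k - (#S + 1)) := by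
  have h := card_slice_Icc_add_card_slice_Icc_le (hS.slice_subset_missing_erase k)
    (hT.slice_subset_missing_erase k)
  rw [hS.card_slice hk, hT.card_slice (hcard.trans_le hk), hcard, ← two_mul, inter_self] at h
  refine h.trans (Nat.add_le_add_left (card_slice_Icc_le (card_lt_card_union hcard.symm hne) ?_) _)
  exact (card_erase_of_mem hS.mem_ground).le

lemma Forces.card_missing_erase_add_le (hT : Forces U C T w) (hv : v ∈ U) (hvw : v ≠ w)
    (hU : #T + 2 ≤ #U) (hk : #T + 1 ≤ k) :
    #(missing (U.erase v) C k) + (#U - 1 - (#T + 1)).choose (k - (#T + 1)) ≤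
      #(missing U C k) := by
  have hsub : insert v T ⊆ U.erase w := insert_subset (mem_erase.2 ⟨hvw, hv⟩) hT.subset_erase
  have hcardU : #(U.erase w) = #U - 1 := card_erase_of_mem hT.mem_ground
  obtain ⟨X, hXT, hXU, hX⟩ :=
    exists_subsuperset_card_eq hsub (card_insert_le v T) (by lia : #T + 1 ≤ #(U.erase w))
  have hTX : T ⊆ X := (subset_insert v T).trans hXT
  have hblock : (Icc X (U.erase w)) # k ⊆ missing U C k :=
    fun R hR ↦ hT.slice_subset_missing k <| by
      obtain ⟨hXR, hR⟩ := mem_slice_Icc.1 hR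
      exact mem_slice_Icc.2 ⟨hTX.trans hXR, hR⟩
  have hdisj : Disjoint (missing (U.erase v) C k) ((Icc X (U.erase w)) # k) := by
    refine disjoint_left.2 fun R hR hR' ↦ notMem_erase v U ((mem_missing.1 hR).1 ?_)
    exact (mem_slice_Icc.1 hR').1 (hXT (mem_insert_self v T))
  rw [← hX, ← hcardU, ← card_slice_Icc hXU (hX.trans_le hk), ← card_union_of_disjoint hdisj]
  exact card_le_card (union_subset (missing_mono (erase_subset v U)) hblock)

/-! ### Families with few unstable triples -/

/-- The triples of `U` that some member of `C` cuts down to a set outside `C`. -/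
def unstableTriples (U : Finset α) (C : Finset (Finset α)) : Finset (Finset α) :=
  {T ∈ powersetCard 3 U | ∃ R ∈ C, T ∩ R ∉ C}

/-- The average set size in `C` is at most `4`, in terms of the number of sets of each size. -/
def LevelBound (C : Finset (Finset α)) : Prop :=
  #(C # 5) + 2 * #(C # 6) + 3 * #(C # 7) + 4 * #(C # 8) ≤
    #(C # 3) + 2 * #(C # 2) + 3 * #(C # 1) + 4 * #(C # 0)

/-- An intersection-closed family on eight points with at most `20 = 56 - 36` unstable triples: the
families of complements that arise from union-closed families stable under `36` five-element
sets. -/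
structure NearlyStable (U : Finset α) (C : Finset (Finset α)) : Prop where
  card_ground : #U = 8
  subset_powerset : C ⊆ U.powerset
  nonempty : C.Nonempty
  infClosed : InfClosed (C : Set (Finset α))
  card_unstableTriples_le : #(unstableTriples U C) ≤ 20

/-- The number of non-closed pairs containing `x`: the degree of `x` in the graph formed by these
pairs. -/
def pairDegree (U : Finset α) (C : Finset (Finset α)) (x : α) : ℕ :=
  #{P ∈ nonclosed U C 2 | x ∈ P}

lemma nonclosed_three_subset_unstableTriples : nonclosed U C 3 ⊆ unstableTriples U C := by
  intro T hT
  obtain ⟨hTU, hT3, hTC, R, hR, hTR⟩ := mem_nonclosed.1 hT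
  refine mem_filter.2 ⟨mem_powersetCard.2 ⟨hTU, hT3⟩, R, hR, ?_⟩
  rwa [inter_eq_left.2 hTR]

lemma Forces.slice_subset_unstableTriples (hv : Forces U C S v) (hS : S ∈ nonclosed U C k) :
    (Icc S (U.erase v)) # 3 ⊆ unstableTriples U C := by
  intro T hT
  obtain ⟨hST, hTU, hT3⟩ := mem_slice_Icc.1 hT
  obtain ⟨-, -, -, R, hR, hSR⟩ := mem_nonclosed.1 hS
  refine mem_filter.2
    ⟨mem_powersetCard.2 ⟨hTU.trans (erase_subset v U), hT3⟩, R, hR, fun hTR ↦ ?_⟩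
  have hvTR := hv.mem_of_subset _ hTR (subset_inter hST hSR)
  exact notMem_erase v U (hTU (mem_inter.1 hvTR).1)

lemma pairDegree_le {W : Finset α} (hW : ∀ P ∈ nonclosed U C 2, P ⊆ W) (x : α) :
    pairDegree U C x ≤ #W - 1 := by
  refine (card_le_card fun P hP ↦ ?_).trans <|
    (card_slice_Icc_le (A := {x}) (k := 2) (card_singleton x).ge (le_refl #W)).trans_eq
      (Nat.choose_one_right _)
  obtain ⟨hP, hxP⟩ := mem_filter.1 hP
  exact mem_slice_Icc.2 ⟨singleton_subset_iff.2 hxP, hW P hP, (mem_nonclosed.1 hP).2.1⟩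

lemma pairDegree_le_card_nonclosed (x : α) : pairDegree U C x ≤ #(nonclosed U C 2) :=
  card_le_card (filter_subset _ _)

namespace NearlyStable

lemma exists_forces (H : NearlyStable U C) (hS : S ∈ nonclosed U C k) : ∃ v, Forces U C S v :=
  exists_forces_of_mem_nonclosed H.subset_powerset H.infClosed hS

lemma card_nonclosed_three_le (H : NearlyStable U C) : #(nonclosed U C 3) ≤ 20 :=
  (card_le_card nonclosed_three_subset_unstableTriples).trans H.card_unstableTriples_le

lemma empty_mem (H : NearlyStable U C) : ∅ ∈ C := by
  by_contra h
  obtain ⟨R, hR⟩ := H.nonempty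
  have hempty : ∅ ∈ nonclosed U C 0 :=
    mem_nonclosed.2 ⟨empty_subset U, card_empty, h, R, hR, empty_subset R⟩
  obtain ⟨v, hv⟩ := H.exists_forces hempty
  have hcount := card_le_card (hv.slice_subset_unstableTriples hempty)
  rw [hv.card_slice (by simp), H.card_ground, card_empty] at hcount
  have := hcount.trans H.card_unstableTriples_le
  norm_num [Nat.choose] at this

lemma card_slice_zero (H : NearlyStable U C) : #(C # 0) = 1 :=
  card_eq_one.2 ⟨∅, by ext S; simpa [mem_slice] using fun h ↦ h ▸ H.empty_mem⟩

lemma card_nonclosed_one_le (H : NearlyStable U C) : #(nonclosed U C 1) ≤ 1 := by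
  refine card_le_one.2 fun S hS T hT ↦ by_contra fun hne ↦ ?_
  have hS1 := (mem_nonclosed.1 hS).2.1
  have hT1 := (mem_nonclosed.1 hT).2.1
  obtain ⟨v, hv⟩ := H.exists_forces hS
  obtain ⟨w, hw⟩ := H.exists_forces hT
  have hcount := card_slice_Icc_add_card_slice_Icc_le (hv.slice_subset_unstableTriples hS)
    (hw.slice_subset_unstableTriples hT)
  have hunion : 2 ≤ #(S ∪ T) := hS1.symm.trans_lt (card_lt_card_union (hS1.trans hT1.symm) hne)
  have hoverlap : #((Icc (S ∪ T) (U.erase v ∩ U.erase w)) # 3) ≤ (8 - 2).choose (3 - 2) :=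
    card_slice_Icc_le hunion
      (H.card_ground ▸ card_le_card (inter_subset_left.trans (erase_subset v U)))
  rw [hv.card_slice (by lia), hw.card_slice (by lia), H.card_ground, hS1, hT1] at hcount
  have := H.card_unstableTriples_le
  norm_num [Nat.choose] at hcount hoverlap
  lia

lemma five_mul_card_le (H : NearlyStable U C) {s : Finset (Finset α)}
    (hs : s ⊆ {P ∈ nonclosed U C 2 | x ∈ P}) :
    5 * #s ≤ #{T ∈ unstableTriples U C | x ∈ T} + (#s).choose 2 := by
  refine mul_card_le_card_add_choose_two_of_pairs
    (fun P hP ↦ (mem_nonclosed.1 (mem_filter.1 (hs hP)).1).2.1) fun P hP ↦ ?_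
  obtain ⟨hP, hxP⟩ := mem_filter.1 (hs hP)
  have hP2 := (mem_nonclosed.1 hP).2.1
  obtain ⟨v, hv⟩ := H.exists_forces hP
  refine ⟨U.erase v, fun T hT ↦ mem_filter.2
    ⟨hv.slice_subset_unstableTriples hP hT, (mem_slice_Icc.1 hT).1 hxP⟩, ?_⟩
  simp [hv.card_slice (by lia : #P ≤ 3), hP2, H.card_ground]

lemma four_mul_card_le (H : NearlyStable U C) {s : Finset (Finset α)}
    (hs : s ⊆ {P ∈ nonclosed U C 2 | x ∉ P}) :
    4 * #s ≤ #{T ∈ unstableTriples U C | x ∉ T} + (#s).choose 2 := by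
  refine mul_card_le_card_add_choose_two_of_pairs
    (fun P hP ↦ (mem_nonclosed.1 (mem_filter.1 (hs hP)).1).2.1) fun P hP ↦ ?_
  obtain ⟨hP, hxP⟩ := mem_filter.1 (hs hP)
  have hP2 := (mem_nonclosed.1 hP).2.1
  obtain ⟨v, hv⟩ := H.exists_forces hP
  refine ⟨(U.erase v).erase x, fun T hT ↦ ?_, ?_⟩
  · obtain ⟨hPT, hTU, hT3⟩ := mem_slice_Icc.1 hT
    obtain ⟨hTv, hxT⟩ := subset_erase.1 hTU
    exact mem_filter.2
      ⟨hv.slice_subset_unstableTriples hP (mem_slice_Icc.2 ⟨hPT, hTv, hT3⟩), hxT⟩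
  · have hcard : #(U.erase v) = 7 := by rw [card_erase_of_mem hv.mem_ground, H.card_ground]
    have := pred_card_le_card_erase (s := U.erase v) (a := x)
    rw [card_slice_Icc (subset_erase.2 ⟨hv.subset_erase, hxP⟩) (by lia), hP2,
      Nat.choose_one_right]
    lia

-- Five pairs through `x` give at least 15 unstable triples through `x`,
-- two pairs missing `x` at least 7 others.
lemma card_nonclosed_two_le_of_five_le (H : NearlyStable U C) (hx : 5 ≤ pairDegree U C x) :
    #(nonclosed U C 2) ≤ pairDegree U C x + 1 := by
  by_contra! hcon
  have hsplit := card_filter_add_card_filter_not (s := nonclosed U C 2) (x ∈ ·)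
  rw [pairDegree] at hx hcon
  obtain ⟨s, hs, hs5⟩ := exists_subset_card_eq hx
  obtain ⟨t, ht, ht2⟩ := exists_subset_card_eq (n := 2) (s := {P ∈ nonclosed U C 2 | x ∉ P})
    (by lia)
  have hthrough := H.five_mul_card_le hs
  have havoid := H.four_mul_card_le ht
  have htriples := card_filter_add_card_filter_not (s := unstableTriples U C) (x ∈ ·)
  have := H.card_unstableTriples_le
  norm_num [hs5, ht2, Nat.choose] at hthrough havoid
  lia

lemma card_nonclosed_two_le (H : NearlyStable U C) : #(nonclosed U C 2) ≤ 8 := by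
  by_cases hlarge : ∃ x, 5 ≤ pairDegree U C x
  · obtain ⟨x, hx⟩ := hlarge
    have hdeg := pairDegree_le (fun P (hP : P ∈ nonclosed U C 2) ↦ (mem_nonclosed.1 hP).1) x
    have := H.card_nonclosed_two_le_of_five_le hx
    rw [H.card_ground] at hdeg
    lia
  push Not at hlarge
  have hlocal : ∀ x ∈ U, 7 * pairDegree U C x ≤ 2 * #{T ∈ unstableTriples U C | x ∈ T} := by
    intro x _
    have hcount : 5 * pairDegree U C x ≤ _ + (pairDegree U C x).choose 2 :=
      H.five_mul_card_le subset_rfl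
    have := hlarge x
    interval_cases pairDegree U C x <;> norm_num [Nat.choose] at hcount ⊢ <;> lia
  have hsum := sum_le_sum hlocal
  have hpairs : ∑ x ∈ U, pairDegree U C x = #(nonclosed U C 2) * 2 :=
    sum_card_filter_mem (filter_subset _ _)
  have htriples : ∑ x ∈ U, #{T ∈ unstableTriples U C | x ∈ T} = #(unstableTriples U C) * 3 :=
    sum_card_filter_mem (filter_subset _ _)
  rw [← mul_sum, ← mul_sum, hpairs, htriples] at hsum
  have := H.card_unstableTriples_le
  lia

end NearlyStable

/-! ### The level bound -/

namespace NearlyStable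

lemma card_le_of_mem (H : NearlyStable U C) {R : Finset α} (hR : R ∈ C) :
    #R ≤ #(C # 1) + #(nonclosed U C 1) :=
  card_le_card_slice_one_add_card_nonclosed (mem_powerset.1 (H.subset_powerset hR))
    fun _ hx ↦ ⟨R, hR, hx⟩

lemma le_of_slice_ne_zero (H : NearlyStable U C) (hk : #(C # k) ≠ 0) :
    k ≤ #(C # 1) + #(nonclosed U C 1) := by
  obtain ⟨R, hR⟩ := card_ne_zero.1 hk
  obtain ⟨hRC, rfl⟩ := mem_slice.1 hR
  exact H.card_le_of_mem hRC

lemma card_slice_seven_le (H : NearlyStable U C) (h : ∀ x ∈ U, U.erase x ∈ C → x ∈ S) :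
    #(C # 7) ≤ #S := by
  simpa [H.card_ground] using card_slice_card_sub_one_le H.subset_powerset
    (card_pos.1 (H.card_ground ▸ by norm_num : 0 < #U)) h

lemma card_ground_le_of_one_lt (H : NearlyStable U C) (h7 : 1 < #(C # 7)) :
    8 ≤ #(C # 1) + #(nonclosed U C 1) := by
  rw [← H.card_ground]
  refine card_le_card_slice_one_add_card_nonclosed subset_rfl fun x hx ↦ ?_
  by_contra! hcon
  have hle := H.card_slice_seven_le (S := {x}) fun y _ hy ↦ by
    by_contra hyx
    exact hcon _ hy (mem_erase.2 ⟨fun hxy ↦ hyx (mem_singleton.2 hxy.symm), hx⟩)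
  exact h7.not_ge (by simpa using hle)

lemma ten_mul_card_slice_five_le (H : NearlyStable U C) :
    10 * #(C # 5) ≤ 10 * #(C # 3) + 4 * #(nonclosed U C 3) := by
  have h := card_slice_mul_choose_le H.subset_powerset H.infClosed 3 5
  norm_num [H.card_ground, Nat.choose] at h
  lia

lemma three_mul_card_slice_six_le (H : NearlyStable U C) :
    3 * #(C # 6) ≤ 3 * #(C # 2) + 2 * #(nonclosed U C 2) := by
  have h := card_slice_mul_choose_le H.subset_powerset H.infClosed 2 6
  norm_num [H.card_ground, Nat.choose] at h
  lia

lemma ten_mul_card_slice_six_le (H : NearlyStable U C) :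
    10 * #(C # 6) ≤ 5 * #(C # 3) + 3 * #(nonclosed U C 3) := by
  have h := card_slice_mul_choose_le H.subset_powerset H.infClosed 3 6
  norm_num [H.card_ground, Nat.choose] at h
  lia

lemma slice_eight_eq_empty (H : NearlyStable U C) (hU : U ∉ C) : C # 8 = ∅ := by
  refine eq_empty_of_forall_notMem fun R hR ↦ hU ?_
  obtain ⟨hRC, hR8⟩ := mem_slice.1 hR
  have hRU : R = U := eq_of_subset_of_card_le (mem_powerset.1 (H.subset_powerset hRC))
    (by rw [hR8, H.card_ground])
  exact hRU ▸ hRC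

lemma levelBound_of_card_slice_seven_le (H : NearlyStable U C) (hU : U ∉ C)
    (h7 : #(C # 7) ≤ 2) : LevelBound C := by
  have h0 := H.card_slice_zero
  have h8 : #(C # 8) = 0 := by rw [H.slice_eight_eq_empty hU, card_empty]
  have h35 := H.ten_mul_card_slice_five_le
  have h26 := H.three_mul_card_slice_six_le
  have hn1 := H.card_nonclosed_one_le
  have hn2 := H.card_nonclosed_two_le
  have hn3 := H.card_nonclosed_three_le
  have h5 := H.le_of_slice_ne_zero (k := 5)
  have h6 := H.le_of_slice_ne_zero (k := 6)
  have h7pos := H.le_of_slice_ne_zero (k := 7)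
  have h7large := H.card_ground_le_of_one_lt
  rw [LevelBound]
  omega

lemma exists_six_le_pairDegree (H : NearlyStable U C)
    (hcov : ∀ P ∈ powersetCard 2 U, ∃ R ∈ C, P ⊆ R) (hS : S ∈ nonclosed U C 1) :
    ∃ x, 6 ≤ pairDegree U C x := by
  obtain ⟨v, hv⟩ := H.exists_forces hS
  have hS1 := (mem_nonclosed.1 hS).2.1
  obtain ⟨x, rfl⟩ := card_eq_one.1 hS1
  refine ⟨x, ?_⟩
  have hcard : #((Icc {x} (U.erase v)) # 2) = 6 := by
    simp [hv.card_slice (by simp : #{x} ≤ 2), H.card_ground]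
  rw [← hcard]
  refine card_le_card fun P hP ↦ ?_
  obtain ⟨hPU, hP2, hPC⟩ := mem_missing.1 (hv.slice_subset_missing 2 hP)
  exact mem_filter.2
    ⟨mem_nonclosed.2 ⟨hPU, hP2, hPC, hcov P (mem_powersetCard.2 ⟨hPU, hP2⟩)⟩,
      singleton_subset_iff.1 (mem_slice_Icc.1 hP).1⟩

/-- The level bound, once every set of at most two points has a closure, follows from this
comparison of small sets differing from their closure with large sets outside `C`. -/
def MissingBound (U : Finset α) (C : Finset (Finset α)) : Prop :=
  #(nonclosed U C 3) + 2 * #(nonclosed U C 2) + 3 * #(nonclosed U C 1) ≤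
    #(missing U C 5) + 2 * #(missing U C 6) + 3 * #(missing U C 7)

lemma forces_of_forall_eq (H : NearlyStable U C)
    (h : ∀ S ∈ nonclosed U C k, ∀ w, Forces U C S w → w = v) (hS : S ∈ nonclosed U C k) :
    Forces U C S v := by
  obtain ⟨w, hw⟩ := H.exists_forces hS
  exact h S hS w hw ▸ hw

lemma missingBound_of_card_nonclosed_two_le_one (H : NearlyStable U C)
    (hn1 : #(nonclosed U C 1) = 0) (hn2 : #(nonclosed U C 2) ≤ 1) : MissingBound U C := by
  have hn3 := H.card_nonclosed_three_le
  rw [MissingBound]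
  obtain hn2 | hn2 := Nat.le_one_iff_eq_zero_or_eq_one.1 hn2
  · have h35 := H.ten_mul_card_slice_five_le
    have h36 := H.ten_mul_card_slice_six_le
    have h3 := card_slice_add_card_missing H.subset_powerset 3
    have h5 := card_slice_add_card_missing H.subset_powerset 5
    have h6 := card_slice_add_card_missing H.subset_powerset 6
    have hm3 := card_missing_eq U C 3
    norm_num [H.card_ground, Nat.choose] at h3 h5 h6
    lia
  · obtain ⟨P, hP⟩ := card_pos.1 (hn2 ▸ one_pos)
    obtain ⟨v, hv⟩ := H.exists_forces hP
    have hP2 := (mem_nonclosed.1 hP).2.1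
    have h5 := hv.choose_le_card_missing (k := 5) (by lia)
    have h6 := hv.choose_le_card_missing (k := 6) (by lia)
    have h7 : 1 ≤ #(missing U C 7) := by
      simpa [H.card_ground, hP2] using hv.choose_le_card_missing (k := 7) (by lia)
    norm_num [H.card_ground, hP2, Nat.choose] at h5 h6
    lia

lemma missingBound_of_forces_ne (H : NearlyStable U C) (hS : S ∈ nonclosed U C 2)
    (hT : T ∈ nonclosed U C 2) (hv : Forces U C S v) (hw : Forces U C T w) (hvw : v ≠ w) :
    MissingBound U C := by
  have hS2 := (mem_nonclosed.1 hS).2.1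
  have hT2 := (mem_nonclosed.1 hT).2.1
  have h5 := hv.two_mul_choose_le_of_ne hw hvw (hT2.trans hS2.symm) (k := 5) (by lia)
  have h6 := hv.two_mul_choose_le_of_ne hw hvw (hT2.trans hS2.symm) (k := 6) (by lia)
  have h7 := hv.two_mul_choose_le_of_ne hw hvw (hT2.trans hS2.symm) (k := 7) (by lia)
  have hn1 := H.card_nonclosed_one_le
  have hn2 := H.card_nonclosed_two_le
  have hn3 := H.card_nonclosed_three_le
  norm_num [H.card_ground, hS2, Nat.choose] at h5 h6 h7
  rw [MissingBound]
  lia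

lemma card_missing_erase_ge (H : NearlyStable U C)
    (hpairs : ∀ P ∈ nonclosed U C 2, Forces U C P v) (hn2 : 1 < #(nonclosed U C 2)) :
    14 ≤ #(missing (U.erase v) C 5) ∧ 6 ≤ #(missing (U.erase v) C 6) ∧
      1 ≤ #(missing (U.erase v) C 7) := by
  obtain ⟨P, hP, Q, hQ, hne⟩ := one_lt_card.1 hn2
  have hP2 := (mem_nonclosed.1 hP).2.1
  have hcard := (mem_nonclosed.1 hQ).2.1.trans hP2.symm
  have hPv := hpairs P hP
  have hQv := hpairs Q hQ
  have h5 := hPv.two_mul_choose_le_of_same hQv hne hcard (k := 5) (by lia)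
  have h6 := hPv.two_mul_choose_le_of_same hQv hne hcard (k := 6) (by lia)
  have h7 : 1 ≤ #(missing (U.erase v) C 7) := by
    simpa [H.card_ground, hP2] using hPv.choose_le_card_missing_erase (k := 7) (by lia)
  norm_num [H.card_ground, hP2, Nat.choose] at h5 h6
  lia

lemma missingBound_of_card_nonclosed_two_le_four (H : NearlyStable U C)
    (hpairs : ∀ P ∈ nonclosed U C 2, Forces U C P v) (hn1 : #(nonclosed U C 1) = 0)
    (hn2 : 1 < #(nonclosed U C 2)) (hn2' : #(nonclosed U C 2) ≤ 4) : MissingBound U C := by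
  obtain ⟨h5, h6, h7⟩ := H.card_missing_erase_ge hpairs hn2
  have hmono := fun k ↦ card_le_card (missing_mono (C := C) (k := k) (erase_subset v U))
  have := hmono 5
  have := hmono 6
  have := hmono 7
  have hn3 := H.card_nonclosed_three_le
  rw [MissingBound]
  lia

lemma missingBound_of_triple_forces_ne (H : NearlyStable U C)
    (hpairs : ∀ P ∈ nonclosed U C 2, Forces U C P v) (hn2 : 1 < #(nonclosed U C 2))
    (hT : T ∈ nonclosed U C 3) (hw : Forces U C T w) (hvw : v ≠ w) : MissingBound U C := by
  obtain ⟨P, hP⟩ := card_pos.1 (one_pos.trans hn2)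
  have hvU := (hpairs P hP).mem_ground
  obtain ⟨h5, h6, h7⟩ := H.card_missing_erase_ge hpairs hn2
  have hT3 := (mem_nonclosed.1 hT).2.1
  have hU : #T + 2 ≤ #U := by rw [hT3, H.card_ground]; norm_num
  have h5' := hw.card_missing_erase_add_le hvU hvw hU (k := 5) (by lia)
  have h6' := hw.card_missing_erase_add_le hvU hvw hU (k := 6) (by lia)
  have h7' := hw.card_missing_erase_add_le hvU hvw hU (k := 7) (by lia)
  have hn1 := H.card_nonclosed_one_le
  have hn2 := H.card_nonclosed_two_le
  have hn3 := H.card_nonclosed_three_le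
  norm_num [H.card_ground, hT3, Nat.choose] at h5' h6' h7'
  rw [MissingBound]
  lia

-- The complements in `U.erase v` of the five-element members of `C` meet every set forcing `v`.
lemma card_nonclosed_three_le_card_missing_erase (H : NearlyStable U C) (hv : v ∈ U)
    (hpairs : ∀ P ∈ nonclosed U C 2, Forces U C P v)
    (htriples : ∀ T ∈ nonclosed U C 3, Forces U C T v) (hn2 : 5 ≤ #(nonclosed U C 2)) :
    #(nonclosed U C 3) ≤ #(missing (U.erase v) C 5) := by
  set W := U.erase v
  have hW : #W = 7 := by rw [card_erase_of_mem hv, H.card_ground]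
  set 𝒬 := (powersetCard 5 W ∩ C).image (W \ ·)
  have hmem : ∀ R ∈ powersetCard 5 W ∩ C, R ⊆ W ∧ #R = 5 ∧ R ∈ C := by
    simp [mem_powersetCard, and_assoc]
  have h𝒬sub : 𝒬 ⊆ powersetCard 2 W := by
    refine image_subset_iff.2 fun R hR ↦ mem_powersetCard.2 ⟨sdiff_subset, ?_⟩
    rw [card_sdiff_of_subset (hmem R hR).1, hW, (hmem R hR).2.1]
  have h𝒬card : #𝒬 = #(powersetCard 5 W ∩ C) := by
    refine card_image_of_injOn fun R hR R' hR' h ↦ ?_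
    rw [← Finset.sdiff_sdiff_eq_self (hmem R hR).1, ← Finset.sdiff_sdiff_eq_self (hmem R' hR').1]
    exact congrArg (W \ ·) h
  have hmeet : ∀ S, Forces U C S v → ∀ Q ∈ 𝒬, ¬ Disjoint S Q := by
    intro S hS
    refine forall_mem_image.2 fun R hR ↦ ?_
    exact hS.not_disjoint_sdiff (hmem R hR).2.2 (hmem R hR).1
  have hle : #(nonclosed U C 3) + #𝒬 ≤ (#W).choose 2 := by
    refine card_add_card_le_of_cross_intersecting (hW ▸ by norm_num)
      (fun P hP ↦ (mem_nonclosed.1 hP).2.1) hn2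
      (fun T hT ↦ mem_powersetCard.2 ⟨(htriples T hT).subset_erase, (mem_nonclosed.1 hT).2.1⟩)
      ?_ h𝒬sub (fun P hP ↦ hmeet P (hpairs P hP)) fun T hT ↦ hmeet T (htriples T hT)
    exact H.card_nonclosed_three_le.trans_lt (hW ▸ by norm_num [Nat.choose])
  have hcount := card_missing_add_card_inter W C 5
  rw [hW] at hcount
  rw [hW, h𝒬card] at hle
  norm_num [Nat.choose] at hle hcount
  lia

lemma two_mul_card_nonclosed_le (H : NearlyStable U C)
    (hcov : ∀ P ∈ powersetCard 2 U, ∃ R ∈ C, P ⊆ R) (hv : v ∈ U)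
    (hpairs : ∀ P ∈ nonclosed U C 2, Forces U C P v) (hn2 : 1 < #(nonclosed U C 2)) :
    2 * #(nonclosed U C 2) + 3 * #(nonclosed U C 1) ≤
      2 * #(missing (U.erase v) C 6) + 3 := by
  obtain ⟨-, h6, -⟩ := H.card_missing_erase_ge hpairs hn2
  have hW : #(U.erase v) = 7 := by rw [card_erase_of_mem hv, H.card_ground]
  have hn1 := H.card_nonclosed_one_le
  have hdeg : ∀ x, pairDegree U C x ≤ 6 := fun x ↦ by
    simpa [hW] using pairDegree_le (fun P hP ↦ (hpairs P hP).subset_erase) x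
  by_cases hR : ∃ R ∈ C, R ⊆ U.erase v ∧ #R = 6
  · obtain ⟨R, hRC, hRW, hR6⟩ := hR
    obtain ⟨a, ha⟩ : ∃ a, U.erase v \ R = {a} := by
      rw [← card_eq_one, card_sdiff_of_subset hRW, hW, hR6]
    have hthrough : ∀ P ∈ nonclosed U C 2, a ∈ P := fun P hP ↦ by
      simpa [ha] using (hpairs P hP).not_disjoint_sdiff hRC hRW
    have hall : pairDegree U C a = #(nonclosed U C 2) :=
      congrArg card (filter_true_of_mem hthrough)
    have := hdeg a
    lia
  · have hall : #(missing (U.erase v) C 6) = 7 := by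
      have hsub : missing (U.erase v) C 6 = powersetCard 6 (U.erase v) :=
        sdiff_eq_self_of_disjoint <| disjoint_left.2 fun R hR' hRC ↦
          hR ⟨R, hRC, mem_powersetCard.1 hR'⟩
      rw [hsub, card_powersetCard, hW]
      norm_num [Nat.choose]
    obtain hn1' | ⟨S, hS⟩ := (nonclosed U C 1).eq_empty_or_nonempty
    · have := H.card_nonclosed_two_le
      rw [hn1', card_empty]
      lia
    · obtain ⟨x, hx⟩ := H.exists_six_le_pairDegree hcov hS
      have := H.card_nonclosed_two_le_of_five_le (x := x) (by lia)
      have := hdeg x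
      lia

lemma missingBound (H : NearlyStable U C) (hcov : ∀ P ∈ powersetCard 2 U, ∃ R ∈ C, P ⊆ R) :
    MissingBound U C := by
  have hn1 : #(nonclosed U C 2) ≤ 4 → #(nonclosed U C 1) = 0 := by
    intro hn2
    by_contra hne
    obtain ⟨S, hS⟩ := card_ne_zero.1 hne
    obtain ⟨x, hx⟩ := H.exists_six_le_pairDegree hcov hS
    have := pairDegree_le_card_nonclosed (U := U) (C := C) x
    lia
  obtain hsmall | htwo := le_or_gt #(nonclosed U C 2) 1
  · exact H.missingBound_of_card_nonclosed_two_le_one (hn1 (by lia)) hsmall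
  obtain ⟨P, hP⟩ := card_pos.1 (one_pos.trans htwo)
  obtain ⟨v, hv⟩ := H.exists_forces hP
  by_cases hpairs : ∀ Q ∈ nonclosed U C 2, ∀ w, Forces U C Q w → w = v
  swap
  · push Not at hpairs
    obtain ⟨Q, hQ, w, hw, hwv⟩ := hpairs
    exact H.missingBound_of_forces_ne hP hQ hv hw hwv.symm
  replace hpairs := fun Q hQ ↦ H.forces_of_forall_eq hpairs (S := Q) hQ
  obtain hfour | hfive := le_or_gt #(nonclosed U C 2) 4
  · exact H.missingBound_of_card_nonclosed_two_le_four hpairs (hn1 hfour) htwo hfour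
  by_cases htriples : ∀ T ∈ nonclosed U C 3, ∀ w, Forces U C T w → w = v
  swap
  · push Not at htriples
    obtain ⟨T, hT, w, hw, hwv⟩ := htriples
    exact H.missingBound_of_triple_forces_ne hpairs htwo hT hw hwv.symm
  replace htriples := fun T hT ↦ H.forces_of_forall_eq htriples (S := T) hT
  have hn3 := H.card_nonclosed_three_le_card_missing_erase hv.mem_ground hpairs htriples hfive
  have hn12 := H.two_mul_card_nonclosed_le hcov hv.mem_ground hpairs htwo
  obtain ⟨-, -, h7⟩ := H.card_missing_erase_ge hpairs htwo
  have hmono := fun k ↦ card_le_card (missing_mono (C := C) (k := k) (erase_subset v U))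
  have := hmono 5
  have := hmono 6
  have := hmono 7
  rw [MissingBound]
  lia

lemma levelBound_of_missingBound (H : NearlyStable U C) (h : MissingBound U C)
    (h1 : uncovered U C 1 = ∅) (h2 : uncovered U C 2 = ∅)
    (h3 : #(uncovered U C 3) ≤ #(missing U C 8)) : LevelBound C := by
  have hc := fun k ↦ card_slice_add_card_missing H.subset_powerset k
  have hc1 := hc 1
  have hc2 := hc 2
  have hc3 := hc 3
  have hc5 := hc 5
  have hc6 := hc 6
  have hc7 := hc 7
  have hc8 := hc 8
  have h0 := H.card_slice_zero
  have hm1 := card_missing_eq U C 1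
  have hm2 := card_missing_eq U C 2
  have hm3 := card_missing_eq U C 3
  norm_num [H.card_ground, Nat.choose] at hc1 hc2 hc3 hc5 hc6 hc7 hc8
  rw [h1, card_empty] at hm1
  rw [h2, card_empty] at hm2
  rw [MissingBound] at h
  rw [LevelBound]
  lia

lemma levelBound (H : NearlyStable U C) : LevelBound C := by
  by_cases hU : U ∈ C
  · have hcov : ∀ k, ∀ S ∈ powersetCard k U, ∃ R ∈ C, S ⊆ R :=
      fun k S hS ↦ ⟨U, hU, (mem_powersetCard.1 hS).1⟩
    have hempty : ∀ k, uncovered U C k = ∅ := fun k ↦ uncovered_eq_empty_iff.2 (hcov k)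
    exact H.levelBound_of_missingBound (H.missingBound (hcov 2)) (hempty 1) (hempty 2)
      (by simp [hempty 3])
  obtain h7 | h7 := le_or_gt #(C # 7) 2
  · exact H.levelBound_of_card_slice_seven_le hU h7
  have hempty : ∀ k ≤ 2, uncovered U C k = ∅ := by
    refine fun k hk ↦ eq_empty_of_forall_notMem fun S hS ↦ ?_
    have := H.card_slice_seven_le fun x _ ↦ mem_of_mem_uncovered hS
    have := (mem_uncovered.1 hS).2.1
    lia
  have hone : #(uncovered U C 3) ≤ 1 := by
    refine card_le_one.2 fun S hS T hT ↦ by_contra fun hne ↦ ?_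
    have hinter := H.card_slice_seven_le fun x _ hx ↦
      mem_inter.2 ⟨mem_of_mem_uncovered hS hx, mem_of_mem_uncovered hT hx⟩
    have hS3 := (mem_uncovered.1 hS).2.1
    have hT3 := (mem_uncovered.1 hT).2.1
    have hST : S ∩ T = S := eq_of_subset_of_card_le inter_subset_left (by lia)
    exact hne (eq_of_subset_of_card_le (inter_eq_left.1 hST) (by lia))
  have hmissing : 1 ≤ #(missing U C 8) :=
    card_pos.2 ⟨U, mem_missing.2 ⟨subset_rfl, H.card_ground, hU⟩⟩
  exact H.levelBound_of_missingBound (H.missingBound (uncovered_eq_empty_iff.1 (hempty 2 le_rfl)))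
    (hempty 1 one_le_two) (hempty 2 le_rfl) (hone.trans hmissing)

lemma sum_card_le (H : NearlyStable U C) : ∑ S ∈ C, #S ≤ 4 * #C := by
  have hmaps : ∀ S ∈ C, #S ∈ range 9 := fun S hS ↦ by
    have := card_le_card (mem_powerset.1 (H.subset_powerset hS))
    rw [H.card_ground] at this
    exact mem_range.2 (by lia)
  have hcard : #C = ∑ k ∈ range 9, #(C # k) := card_eq_sum_card_fiberwise hmaps
  have hsum : ∑ S ∈ C, #S = ∑ k ∈ range 9, #(C # k) * k := by
    rw [← sum_fiberwise_of_maps_to hmaps]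
    exact sum_congr rfl fun k _ ↦ sum_const_nat fun S hS ↦ (mem_filter.1 hS).2
  have := H.levelBound
  rw [LevelBound] at this
  rw [hcard, hsum]
  simp only [sum_range_succ, sum_range_zero]
  lia

end NearlyStable

/-! ### Union-closed families -/

variable {A F : Finset (Finset α)}

/-- The members of `F` whose part outside `U` is `T`. Taking the union with a subset of `U` does not
leave this fibre, so the average of `#(U ∩ S)` can be bounded on each fibre separately. -/
def traceFiber (U : Finset α) (F : Finset (Finset α)) (T : Finset α) : Finset (Finset α) :=
  {S ∈ F | S \ U = T}

lemma mem_traceFiber : S ∈ traceFiber U F T ↔ S ∈ F ∧ S \ U = T := mem_filter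

lemma union_mem_traceFiber {S' : Finset α} (hF : SupClosed (F : Set (Finset α)))
    (hS : S ∈ traceFiber U F T) (hS' : S' ∈ F) (hT : S' \ U ⊆ T) :
    S' ∪ S ∈ traceFiber U F T := by
  obtain ⟨hSF, hST⟩ := mem_traceFiber.1 hS
  exact mem_traceFiber.2
    ⟨hF hS' hSF, by rw [union_sdiff_distrib, hST, union_eq_right.2 hT]⟩

lemma injOn_sdiff_traceFiber : Set.InjOn (U \ ·) (traceFiber U F T : Set (Finset α)) := by
  intro S hS S' hS' h
  have hout : S \ U = S' \ U :=
    (mem_traceFiber.1 hS).2.trans (mem_traceFiber.1 hS').2.symm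
  have hin : U ∩ S = U ∩ S' := by
    rw [← Finset.sdiff_sdiff_self_left, ← Finset.sdiff_sdiff_self_left]
    exact congrArg (U \ ·) h
  rw [← sdiff_union_inter S U, ← sdiff_union_inter S' U, hout, inter_comm S, inter_comm S', hin]

lemma infClosed_image_sdiff_traceFiber (hF : SupClosed (F : Set (Finset α))) :
    InfClosed ((traceFiber U F T).image (U \ ·) : Set (Finset α)) := by
  intro R hR R' hR'
  obtain ⟨S, hS, rfl⟩ := mem_image.1 hR
  obtain ⟨S', hS', rfl⟩ := mem_image.1 hR'
  obtain ⟨hSF, hST⟩ := mem_traceFiber.1 hS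
  exact mem_image.2
    ⟨S ∪ S', union_mem_traceFiber hF hS' hSF hST.le, sdiff_union_distrib U S S'⟩

-- For `B ∈ A`, intersecting with `U \ B` amounts to taking the union with `B` before
-- complementing, so all triples `U \ B` are stable.
lemma card_unstableTriples_traceFiber_le (hU : #U = 8) (hA : A ⊆ powersetCard 5 U)
    (hcard : 36 ≤ #A) (hF : SupClosed (F : Set (Finset α))) (hAF : A ⊆ F) :
    #(unstableTriples U ((traceFiber U F T).image (U \ ·))) ≤ 20 := by
  have hsub : A.image (U \ ·) ⊆ powersetCard 3 U := by
    refine image_subset_iff.2 fun B hB ↦ mem_powersetCard.2 ⟨sdiff_subset, ?_⟩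
    obtain ⟨hBU, hB5⟩ := mem_powersetCard.1 (hA hB)
    rw [card_sdiff_of_subset hBU, hU, hB5]
  have hinj : #(A.image (U \ ·)) = #A := by
    refine card_image_of_injOn fun B hB B' hB' h ↦ ?_
    rw [← Finset.sdiff_sdiff_eq_self (mem_powersetCard.1 (hA hB)).1,
      ← Finset.sdiff_sdiff_eq_self (mem_powersetCard.1 (hA hB')).1]
    exact congrArg (U \ ·) h
  have hunstable : unstableTriples U ((traceFiber U F T).image (U \ ·)) ⊆
      powersetCard 3 U \ A.image (U \ ·) := by
    intro X hX
    obtain ⟨hX3, R, hR, hXR⟩ := mem_filter.1 hX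
    refine mem_sdiff.2 ⟨hX3, fun hXA ↦ hXR ?_⟩
    obtain ⟨B, hB, rfl⟩ := mem_image.1 hXA
    obtain ⟨S, hS, rfl⟩ := mem_image.1 hR
    have hBU : B \ U ⊆ T := by
      simp [sdiff_eq_empty_iff_subset.2 (mem_powersetCard.1 (hA hB)).1]
    exact mem_image.2
      ⟨B ∪ S, union_mem_traceFiber hF hS (hAF hB) hBU, sdiff_union_distrib U B S⟩
  have hcount := card_le_card hunstable
  rw [card_sdiff_of_subset hsub, card_powersetCard, hU, hinj] at hcount
  norm_num [Nat.choose] at hcount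
  lia

lemma four_mul_card_traceFiber_le (hU : #U = 8) (hA : A ⊆ powersetCard 5 U)
    (hcard : 36 ≤ #A) (hF : SupClosed (F : Set (Finset α))) (hAF : A ⊆ F) :
    4 * #(traceFiber U F T) ≤ ∑ S ∈ traceFiber U F T, #(U ∩ S) := by
  obtain hempty | hne := (traceFiber U F T).eq_empty_or_nonempty
  · simp [hempty]
  have H : NearlyStable U ((traceFiber U F T).image (U \ ·)) :=
    { card_ground := hU
      subset_powerset := image_subset_iff.2 fun S _ ↦ mem_powerset.2 sdiff_subset
      nonempty := hne.image _
      infClosed := infClosed_image_sdiff_traceFiber hF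
      card_unstableTriples_le := card_unstableTriples_traceFiber_le hU hA hcard hF hAF }
  have hle := H.sum_card_le
  rw [sum_image injOn_sdiff_traceFiber, card_image_of_injOn injOn_sdiff_traceFiber] at hle
  have hsplit : ∑ S ∈ traceFiber U F T, #(U \ S) + ∑ S ∈ traceFiber U F T, #(U ∩ S) =
      #(traceFiber U F T) * 8 := by
    rw [← sum_add_distrib]
    exact sum_const_nat fun S _ ↦ by rw [card_sdiff_add_card_inter, hU]
  lia

lemma four_mul_card_le_sum_card_inter (hU : #U = 8) (hA : A ⊆ powersetCard 5 U)
    (hcard : 36 ≤ #A) (hF : SupClosed (F : Set (Finset α))) (hAF : A ⊆ F) :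
    4 * #F ≤ ∑ S ∈ F, #(U ∩ S) := by
  have hmaps : ∀ S ∈ F, S \ U ∈ F.image (· \ U) := fun S hS ↦ mem_image_of_mem _ hS
  rw [card_eq_sum_card_fiberwise hmaps, ← sum_fiberwise_of_maps_to hmaps, mul_sum]
  exact sum_le_sum fun T _ ↦ four_mul_card_traceFiber_le hU hA hcard hF hAF

end FranklComplete

open Finset in
theorem FC_upper_bound_5_8_general {α : Type*} [DecidableEq α] {U : Finset α}
    {A F : Finset (Finset α)} (hU : #U = 8) (hA : A ⊆ powersetCard 5 U) (hcard : 36 ≤ #A)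
    (hF : SupClosed (F : Set (Finset α))) (hAF : A ⊆ F) :
    ∃ x ∈ U, #F ≤ 2 * #{S ∈ F | x ∈ S} := by
  by_contra! hrare
  have hbound : ∀ x ∈ U, #{S ∈ F | x ∈ S} ≤ (#F - 1) / 2 := fun x hx ↦ by
    have := hrare x hx
    lia
  have hupper := sum_card_inter_le hbound
  have hlower := FranklComplete.four_mul_card_le_sum_card_inter hU hA hcard hF hAF
  have hpos := card_le_card hAF
  rw [hU] at hupper
  lia

/-- FC(5, 8) ≤ 36: every family of 36 distinct 5-element subsets of {1, …, 8}
with universe {1, …, 8} is FC. -/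
theorem FC_upper_bound_5_8 :
    ∀ A : Finset (Finset ℕ), A.card = 36 → IsKFamily 5 8 A → IsFC A := by
  intro A hA ⟨hsets, huniverse⟩ F hF hAF
  rw [huniverse]
  exact FC_upper_bound_5_8_general (by simp)
    (fun S hS ↦ Finset.mem_powersetCard.2 (hsets S hS).symm) hA.ge
    (fun S hS T hT ↦ hF.2 S hS T hT) hAF
end
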